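/- Let U be a definable group and let {T(x) : x ∈ X} be a definable family of nonempty definable subsets of U. Then there is a definable function t : X → U such that for all x, y ∈ X: t(x) ∈ T(x), and if T(x) = T(y) then t(x) = t(y). In other words, every definable group has strong definable choice. -/

import Mathlib

open Filter Set Topology

universe u

section OMinPreamble

variable {N : Type u}

section Basic
variable [LinearOrder N]

/-- A finite union of singletons and open intervals (with possibly infinite endpoints). -/
def IsFinUnionPtsIntervals (A : Set N) : Prop :=
  ∃ (k : ℕ) (f : Fin k → Set N),
    (∀ i, (∃ a, f i = {a}) ∨ (∃ a b, f i = Set.Ioo a b) ∨ (∃ a, f i = Set.Ioi a) ∨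
        (∃ b, f i = Set.Iio b) ∨ f i = Set.univ) ∧
    A = ⋃ i, f i

/-- An o-minimal structure on the ordered set `N`: an assignment, to each arity `m`,
of a collection of "definable" subsets of `N^m`, closed under the boolean and
first-order operations, containing the order and all points (parameters), and such
that every definable subset of `N` is a finite union of points and open intervals. -/
structure Struc (N : Type u) [LinearOrder N] where
  Def : ∀ m : ℕ, Set (Fin m → N) → Prop
  def_inter : ∀ {m : ℕ} {A B : Set (Fin m → N)}, Def m A → Def m B → Def m (A ∩ B)
  def_compl : ∀ {m : ℕ} {A : Set (Fin m → N)}, Def m A → Def m Aᶜ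
  def_univ : ∀ m : ℕ, Def m Set.univ
  def_reindex : ∀ {m k : ℕ} (g : Fin m → Fin k) {A : Set (Fin m → N)},
      Def m A → Def k {x | x ∘ g ∈ A}
  def_proj : ∀ {m : ℕ} {A : Set (Fin (m + 1) → N)},
      Def (m + 1) A → Def m {x | ∃ t : N, Fin.snoc x t ∈ A}
  def_lt : Def 2 {x | x 0 < x 1}
  def_pt : ∀ a : N, Def 1 {x | x 0 = a}
  o_min : ∀ {A : Set (Fin 1 → N)}, Def 1 A →
      IsFinUnionPtsIntervals {t : N | (fun _ : Fin 1 => t) ∈ A}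

/-- Index of the pair `(i,j)` in `Fin (n*m)`. -/
def finIdx {n m : ℕ} (i : Fin n) (j : Fin m) : Fin (n * m) :=
  ⟨i.1 * m + j.1, by
    have hi := i.isLt
    have hj := j.isLt
    calc i.1 * m + j.1 < i.1 * m + m := by omega
      _ = (i.1 + 1) * m := by ring
      _ ≤ n * m := Nat.mul_le_mul hi (le_refl m)⟩

def pFst {a b : ℕ} (p : Fin (a * b)) : Fin a :=
  ⟨p.1 / b, by
    have h := p.isLt
    have hb : 0 < b := by
      rcases Nat.eq_zero_or_pos b with h0 | h0
      · subst h0; simp at h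
      · exact h0
    exact (Nat.div_lt_iff_lt_mul hb).mpr h⟩

def pSnd {a b : ℕ} (p : Fin (a * b)) : Fin b :=
  ⟨p.1 % b, by
    have h := p.isLt
    have hb : 0 < b := by
      rcases Nat.eq_zero_or_pos b with h0 | h0
      · subst h0; simp at h
      · exact h0
    exact Nat.mod_lt _ hb⟩

/-- Horner evaluation of the polynomial with coefficients `c` (constant term first)
at `x`, relative to abstract operations. -/
def polyEval {α : Type*} (add mul : α → α → α) (zero : α) {n : ℕ} (c : Fin n → α)
    (x : α) : α :=
  (List.ofFn c).foldr (fun a acc => add a (mul x acc)) zero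

/-- `n`-th power relative to an abstract operation with identity `z`. -/
def opPow {α : Type*} (op : α → α → α) (z : α) (a : α) : ℕ → α
  | 0 => z
  | n + 1 => op a (opPow op z a n)

namespace Struc
variable (S : Struc N)

/-- The function `f`, restricted to the definable set `A ⊆ N^m` and with values in
`N^n`, is definable: its graph is a definable set. -/
def DefFunOn {m n : ℕ} (A : Set (Fin m → N)) (f : (Fin m → N) → (Fin n → N)) : Prop :=
  S.Def (m + n) {z | (z ∘ Fin.castAdd n) ∈ A ∧ f (z ∘ Fin.castAdd n) = z ∘ Fin.natAdd m}

/-- A definable function of two tuple variables. -/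
def DefFun2 {m n k : ℕ} (A : Set (Fin m → N)) (B : Set (Fin n → N))
    (f : (Fin m → N) → (Fin n → N) → (Fin k → N)) : Prop :=
  S.Def (m + n + k) {z |
    (z ∘ Fin.castAdd k ∘ Fin.castAdd n) ∈ A ∧
    (z ∘ Fin.castAdd k ∘ Fin.natAdd m) ∈ B ∧
    f (z ∘ Fin.castAdd k ∘ Fin.castAdd n) (z ∘ Fin.castAdd k ∘ Fin.natAdd m) =
      z ∘ Fin.natAdd (m + n)}

/-- A definable unary function `N → N` on the set `J ⊆ N`. -/
def DefFun1 (J : Set N) (f : N → N) : Prop :=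
  S.Def 2 {z | z 0 ∈ J ∧ f (z 0) = z 1}

/-- A definable curve in `N^k` defined on the set `J ⊆ N`. -/
def DefCurve {k : ℕ} (J : Set N) (σ : N → (Fin k → N)) : Prop :=
  S.DefFunOn {x : Fin 1 → N | x 0 ∈ J} (fun x => σ (x 0))

/-- A definable function of `n` tuple variables from `A^n ⊆ (N^m)^n` to `N^k`. -/
def DefFunN {m k : ℕ} (n : ℕ) (A : Set (Fin m → N))
    (c : (Fin n → (Fin m → N)) → (Fin k → N)) : Prop :=
  S.Def (n * m + k) {z |
    (∀ i : Fin n, (fun j : Fin m => z (Fin.castAdd k (finIdx i j))) ∈ A) ∧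
    c (fun i j => z (Fin.castAdd k (finIdx i j))) = fun j => z (Fin.natAdd (n * m) j)}

end Struc

/-- The filter of neighbourhoods of the "left end" of the set `J ⊆ N`. -/
def leftEndFilter (J : Set N) : Filter N := ⨅ x ∈ J, Filter.principal (J ∩ Set.Iio x)

/-- The filter of neighbourhoods of the "right end" of the set `J ⊆ N`
(for `J` unbounded above this is "`→ +∞` inside `J`"). -/
def rightEndFilter (J : Set N) : Filter N := ⨅ x ∈ J, Filter.principal (J ∩ Set.Ioi x)

/-- `J` is an open interval, with possibly infinite endpoints. -/
def IsOpenIntervalSet (J : Set N) : Prop :=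
  (∃ a b, a < b ∧ J = Set.Ioo a b) ∨ (∃ a, J = Set.Ioi a) ∨ (∃ b, J = Set.Iio b) ∨
    J = Set.univ

end Basic

section Groups
variable [LinearOrder N] [TopologicalSpace N]

/-- The o-minimal dimension of `A ⊆ N^m`: the largest `k` such that the image of `A`
under some projection onto `k` coordinates has nonempty interior in `N^k`
(`N` carrying the order topology and `N^k` the product topology). -/
noncomputable def odim {m : ℕ} (A : Set (Fin m → N)) : ℕ :=
  sSup {k | ∃ p : Fin k → Fin m, Function.Injective p ∧
    (interior ((fun x : Fin m → N => x ∘ p) '' A)).Nonempty}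

/-- A definable group: a definable subset of `N^m` with a group operation whose graph
is definable, together with its (unique) definable manifold topology, i.e. a group
topology which agrees with the ambient topology on a large definable subset. -/
structure DefGroup (S : Struc N) (m : ℕ) where
  carrier : Set (Fin m → N)
  carrier_def : S.Def m carrier
  mul : (Fin m → N) → (Fin m → N) → (Fin m → N)
  one : Fin m → N
  inv : (Fin m → N) → (Fin m → N)
  one_mem : one ∈ carrier
  mul_mem : ∀ ⦃x y : Fin m → N⦄, x ∈ carrier → y ∈ carrier → mul x y ∈ carrier
  inv_mem : ∀ ⦃x : Fin m → N⦄, x ∈ carrier → inv x ∈ carrier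
  mul_assoc' : ∀ ⦃x y z : Fin m → N⦄, x ∈ carrier → y ∈ carrier → z ∈ carrier →
      mul (mul x y) z = mul x (mul y z)
  one_mul' : ∀ ⦃x : Fin m → N⦄, x ∈ carrier → mul one x = x
  inv_mul' : ∀ ⦃x : Fin m → N⦄, x ∈ carrier → mul (inv x) x = one
  mul_graph_def : S.DefFun2 carrier carrier mul
  inv_graph_def : S.DefFunOn carrier inv
  top : TopologicalSpace (Fin m → N)
  contMul : @ContinuousOn ((Fin m → N) × (Fin m → N)) (Fin m → N)
      (@instTopologicalSpaceProd _ _ top top) top (fun p => mul p.1 p.2)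
      (carrier ×ˢ carrier)
  contInv : @ContinuousOn (Fin m → N) (Fin m → N) top top inv carrier
  pillay : ∃ V : Set (Fin m → N), V ⊆ carrier ∧ S.Def m V ∧
      (carrier \ V = ∅ ∨ odim (carrier \ V) < odim carrier) ∧
      (∃ O : Set (Fin m → N), IsOpen[top] O ∧ O ∩ carrier = V) ∧
      ∀ x ∈ V, @nhdsWithin (Fin m → N) top x carrier = nhdsWithin x V

variable {S : Struc N}

/-- The elements of a definable group, as a type. -/
def DefGroup.Elt {m : ℕ} (G : DefGroup S m) : Type u := {x : Fin m → N // x ∈ G.carrier}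

namespace DefGroup

instance {m : ℕ} {G : DefGroup S m} : Mul G.Elt :=
  ⟨fun a b => ⟨G.mul a.1 b.1, G.mul_mem a.2 b.2⟩⟩

instance {m : ℕ} {G : DefGroup S m} : One G.Elt := ⟨⟨G.one, G.one_mem⟩⟩

instance {m : ℕ} {G : DefGroup S m} : Inv G.Elt := ⟨fun a => ⟨G.inv a.1, G.inv_mem a.2⟩⟩

instance instGroupElt {m : ℕ} {G : DefGroup S m} : Group G.Elt :=
  Group.ofLeftAxioms
    (fun a b c => Subtype.ext (G.mul_assoc' a.2 b.2 c.2))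
    (fun a => Subtype.ext (G.one_mul' a.2))
    (fun a => Subtype.ext (G.inv_mul' a.2))

variable {m : ℕ} (G : DefGroup S m)

/-- `H` is a definable subgroup of `G`. -/
def IsDefSubgroup (H : Set (Fin m → N)) : Prop :=
  H ⊆ G.carrier ∧ S.Def m H ∧ G.one ∈ H ∧
    (∀ x ∈ H, ∀ y ∈ H, G.mul x y ∈ H) ∧ (∀ x ∈ H, G.inv x ∈ H)

/-- `H` is a definable normal subgroup of `G`. -/
def IsNormalDefSubgroup (H : Set (Fin m → N)) : Prop :=
  G.IsDefSubgroup H ∧ ∀ g ∈ G.carrier, ∀ h ∈ H, G.mul (G.mul g h) (G.inv g) ∈ H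

/-- The left coset `g·H`. -/
def lcoset (g : Fin m → N) (H : Set (Fin m → N)) : Set (Fin m → N) :=
  {y | ∃ h ∈ H, y = G.mul g h}

/-- `H` has finite index in `G`: finitely many left cosets cover `G`. -/
def FiniteIndex (H : Set (Fin m → N)) : Prop :=
  ∃ F : Finset (Fin m → N), ↑F ⊆ G.carrier ∧ G.carrier ⊆ ⋃ g ∈ F, G.lcoset g H

/-- `G` is definably connected: it has no proper definable subgroup of finite index. -/
def DefinablyConnected : Prop :=
  ∀ H : Set (Fin m → N), G.IsDefSubgroup H → G.FiniteIndex H → H = G.carrier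

def IsAbelian : Prop := ∀ x ∈ G.carrier, ∀ y ∈ G.carrier, G.mul x y = G.mul y x

/-- The center of `G`, as a definable subset. -/
def center : Set (Fin m → N) :=
  {x | x ∈ G.carrier ∧ ∀ y ∈ G.carrier, G.mul x y = G.mul y x}

def TorsionFree : Prop := ∀ x : G.Elt, x ≠ 1 → ∀ n : ℕ, 0 < n → x ^ n ≠ 1

/-- `G` is definably compact: every definable continuous embedding of an open
interval into `G` has limits at both ends of the interval (with respect to the
group's definable manifold topology). -/
def DefinablyCompact : Prop :=
  ∀ J : Set N, IsOpenIntervalSet J → ∀ σ : N → (Fin m → N),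
    S.DefCurve J σ → (∀ t ∈ J, σ t ∈ G.carrier) → Set.InjOn σ J →
    @ContinuousOn N (Fin m → N) _ G.top σ J →
    (∃ c ∈ G.carrier, Filter.Tendsto σ (leftEndFilter J) (@nhds _ G.top c)) ∧
    (∃ d ∈ G.carrier, Filter.Tendsto σ (rightEndFilter J) (@nhds _ G.top d))

/-- `G` is definably semisimple: it has no infinite proper abelian definable normal
subgroup. -/
def DefinablySemisimple : Prop :=
  ¬ ∃ H : Set (Fin m → N), G.IsNormalDefSubgroup H ∧ H.Infinite ∧ H ≠ G.carrier ∧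
      ∀ x ∈ H, ∀ y ∈ H, G.mul x y = G.mul y x

/-- The product of a list of elements of `G`. -/
def listProd : List (Fin m → N) → (Fin m → N)
  | [] => G.one
  | x :: xs => G.mul x (listProd xs)

end DefGroup

/-- A definable homomorphism between definable groups. -/
def IsDefHom {m n : ℕ} (G : DefGroup S m) (H : DefGroup S n)
    (f : (Fin m → N) → (Fin n → N)) : Prop :=
  (∀ x ∈ G.carrier, f x ∈ H.carrier) ∧ S.DefFunOn G.carrier f ∧
  ∀ x ∈ G.carrier, ∀ y ∈ G.carrier, f (G.mul x y) = H.mul (f x) (f y)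

/-- `π` realizes `Q` as the quotient of the subgroup `H` of `U` by the normal
subgroup `V ⊆ H`: a definable surjective homomorphism `H → Q` with fibers the
cosets of `V` (kernel exactly `V`). -/
def IsQuotMap {m k : ℕ} (U : DefGroup S m) (H V : Set (Fin m → N)) (Q : DefGroup S k)
    (π : (Fin m → N) → (Fin k → N)) : Prop :=
  (∀ x ∈ H, π x ∈ Q.carrier) ∧ S.DefFunOn H π ∧
  (∀ x ∈ H, ∀ y ∈ H, π (U.mul x y) = Q.mul (π x) (π y)) ∧
  π '' H = Q.carrier ∧ ∀ x ∈ H, (π x = Q.one ↔ x ∈ V)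

/-- A definable extension `1 → A → U → G → 1`. -/
def IsDefExtension {mA mU mG : ℕ} (A : DefGroup S mA) (U : DefGroup S mU)
    (G : DefGroup S mG) (i : (Fin mA → N) → (Fin mU → N))
    (j : (Fin mU → N) → (Fin mG → N)) : Prop :=
  IsDefHom A U i ∧ IsDefHom U G j ∧ Set.InjOn i A.carrier ∧
  j '' U.carrier = G.carrier ∧
  ∀ u ∈ U.carrier, (j u = G.one ↔ ∃ a ∈ A.carrier, u = i a)

/-- A definable `G`-module: a definable abelian group `A` together with a definable
action of `G` on `A` by (definable) automorphisms. -/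
structure DefModule {mG mA : ℕ} (G : DefGroup S mG) (A : DefGroup S mA) where
  abelian : A.IsAbelian
  act : (Fin mG → N) → (Fin mA → N) → (Fin mA → N)
  act_mem : ∀ ⦃x a⦄, x ∈ G.carrier → a ∈ A.carrier → act x a ∈ A.carrier
  act_one : ∀ ⦃a⦄, a ∈ A.carrier → act G.one a = a
  act_mul : ∀ ⦃x y⦄, x ∈ G.carrier → y ∈ G.carrier → ∀ ⦃a⦄, a ∈ A.carrier →
      act (G.mul x y) a = act x (act y a)
  act_hom : ∀ ⦃x⦄, x ∈ G.carrier → ∀ ⦃a b⦄, a ∈ A.carrier → b ∈ A.carrier →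
      act x (A.mul a b) = A.mul (act x a) (act x b)
  act_def : S.DefFun2 G.carrier A.carrier act

/-- The module `(A, γ)` is trivial. -/
def DefModule.IsTrivial {mG mA : ℕ} {G : DefGroup S mG} {A : DefGroup S mA}
    (γ : DefModule G A) : Prop :=
  ∀ x ∈ G.carrier, ∀ a ∈ A.carrier, γ.act x a = a

/-- The definable extension `1 → A → U → G → 1` is compatible with the `G`-module
`(A, γ)`: conjugation in `U` induces the action `γ` on `A`. -/
def ExtCompatible {mG mA mU : ℕ} {G : DefGroup S mG} {A : DefGroup S mA}
    (γ : DefModule G A) (U : DefGroup S mU) (i : (Fin mA → N) → (Fin mU → N))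
    (j : (Fin mU → N) → (Fin mG → N)) : Prop :=
  ∀ u ∈ U.carrier, ∀ a ∈ A.carrier, i (γ.act (j u) a) = U.mul (U.mul u (i a)) (U.inv u)

/-- Alternating "sum" `x₁ - (x₂ - (x₃ - ⋯))` in a (multiplicatively written abelian)
definable group. -/
def altSum {k : ℕ} (A : DefGroup S k) : List (Fin k → N) → (Fin k → N)
  | [] => A.one
  | x :: xs => A.mul x (A.inv (altSum A xs))

/-- The `i`-th term (`1 ≤ i ≤ n+1`) in the coboundary formula:
`c(g₁,…,g_i g_{i+1},…,g_{n+1})` for `1 ≤ i ≤ n`, and `c(g₁,…,g_n)` for `i = n+1`. -/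
def cobTerm {mG kA : ℕ} (G : DefGroup S mG) {n : ℕ}
    (c : (Fin n → (Fin mG → N)) → (Fin kA → N))
    (g : Fin (n + 1) → (Fin mG → N)) (i : ℕ) : Fin kA → N :=
  if i ≤ n then
    c (fun j : Fin n =>
      if j.1 + 1 < i then g (Fin.castSucc j)
      else if j.1 + 1 = i then G.mul (g (Fin.castSucc j)) (g j.succ)
      else g j.succ)
  else c (fun j : Fin n => g (Fin.castSucc j))

/-- The coboundary `δb` of the definable `n`-cochain `b`:
`δb(g₁,…,g_{n+1}) = γ(g₁)(b(g₂,…,g_{n+1})) + Σ_{i=1}^{n} (−1)^i b(…,g_i g_{i+1},…)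
+ (−1)^{n+1} b(g₁,…,g_n)` (written multiplicatively in the abelian group `A`). -/
def cob {mG kA : ℕ} {G : DefGroup S mG} {A : DefGroup S kA} (γ : DefModule G A)
    {n : ℕ} (b : (Fin n → (Fin mG → N)) → (Fin kA → N))
    (g : Fin (n + 1) → (Fin mG → N)) : Fin kA → N :=
  A.mul (γ.act (g 0) (b (Fin.tail g)))
    (A.inv (altSum A (List.ofFn fun i : Fin (n + 1) => cobTerm G b g (i.1 + 1))))

/-- There is no definable bijection between `X ⊆ N^m` and `Y ⊆ N^k`. -/
def NoDefBijection (S : Struc N) {m k : ℕ} (X : Set (Fin m → N))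
    (Y : Set (Fin k → N)) : Prop :=
  ¬ ∃ f : (Fin m → N) → (Fin k → N), S.DefFunOn X f ∧ (∀ x ∈ X, f x ∈ Y) ∧
      Set.InjOn f X ∧ f '' X = Y

/-- The subgroup `W` of `U` is definably isomorphic to a (finite) direct product of
copies of the one-dimensional group `(J, op)`. -/
def IsProdOfCopies {m : ℕ} (U : DefGroup S m) (W : Set (Fin m → N)) (J : Set N)
    (op : N → N → N) : Prop :=
  ∃ (d : ℕ) (φ : (Fin m → N) → (Fin d → N)),
    S.DefFunOn W φ ∧ Set.InjOn φ W ∧ φ '' W = {z | ∀ i, z i ∈ J} ∧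
    ∀ x ∈ W, ∀ y ∈ W, φ (U.mul x y) = fun i => op (φ x i) (φ y i)

/-- `V` is the internal direct product of the list `parts` of definable subgroups
of `U`: the parts commute pairwise and every element of `V` is uniquely a product
of elements of the parts. -/
def IsInternalDPList {m : ℕ} (U : DefGroup S m) (V : Set (Fin m → N))
    (parts : List (Set (Fin m → N))) : Prop :=
  (∀ P ∈ parts, U.IsDefSubgroup P) ∧
  List.Pairwise (fun P Q => ∀ x ∈ P, ∀ y ∈ Q, U.mul x y = U.mul y x) parts ∧
  (∀ v, v ∈ V ↔ ∃ f : Fin parts.length → (Fin m → N),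
      (∀ i, f i ∈ parts.get i) ∧ v = U.listProd (List.ofFn f)) ∧
  ∀ f g : Fin parts.length → (Fin m → N),
    (∀ i, f i ∈ parts.get i) → (∀ i, g i ∈ parts.get i) →
    U.listProd (List.ofFn f) = U.listProd (List.ofFn g) → f = g

/-- `K` is a definable subgroup of `U`, equipped with its group structure and with
the submanifold topology inherited from `U`. -/
def IsDefSubgroupGrp {m : ℕ} (U K : DefGroup S m) : Prop :=
  K.carrier ⊆ U.carrier ∧ K.one = U.one ∧
  (∀ x ∈ K.carrier, ∀ y ∈ K.carrier, K.mul x y = U.mul x y) ∧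
  (∀ x ∈ K.carrier, K.inv x = U.inv x) ∧
  ∀ x ∈ K.carrier, @nhdsWithin (Fin m → N) K.top x K.carrier
      = @nhdsWithin (Fin m → N) U.top x K.carrier

/-- The abelian definable group `U` has no definably compact parts: there is a chain
of definable subgroups each of whose successive quotients is a one-dimensional
definably connected torsion-free definable group. -/
def NoCompactParts {m : ℕ} (U : DefGroup S m) : Prop :=
  ∃ (n : ℕ) (ch : Fin (n + 1) → Set (Fin m → N)),
    ch 0 = {U.one} ∧ ch (Fin.last n) = U.carrier ∧
    (∀ j, U.IsDefSubgroup (ch j)) ∧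
    (∀ j : Fin n, ch j.castSucc ⊆ ch j.succ) ∧
    ∀ j : Fin n, ∃ (k : ℕ) (Q : DefGroup S k) (π : (Fin m → N) → (Fin k → N)),
      IsQuotMap U (ch j.succ) (ch j.castSucc) Q π ∧
      odim Q.carrier = 1 ∧ Q.DefinablyConnected ∧ Q.TorsionFree

/-- `H` is the definably connected component of the identity of `G`: the smallest
definable subgroup of finite index. -/
def IsIdentityComponent {m : ℕ} (G : DefGroup S m) (H : Set (Fin m → N)) : Prop :=
  G.IsDefSubgroup H ∧ G.FiniteIndex H ∧
    ∀ H' : Set (Fin m → N), G.IsDefSubgroup H' → G.FiniteIndex H' → H ⊆ H'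

/-- A definable (not necessarily unital or associative) ring: a definable abelian
group together with a definable bi-additive multiplication. -/
structure DefRing (S : Struc N) (m : ℕ) where
  grp : DefGroup S m
  comm : grp.IsAbelian
  rmul : (Fin m → N) → (Fin m → N) → (Fin m → N)
  rmul_mem : ∀ ⦃x y⦄, x ∈ grp.carrier → y ∈ grp.carrier → rmul x y ∈ grp.carrier
  left_distrib' : ∀ ⦃x y z⦄, x ∈ grp.carrier → y ∈ grp.carrier → z ∈ grp.carrier →
      rmul x (grp.mul y z) = grp.mul (rmul x y) (rmul x z)
  right_distrib' : ∀ ⦃x y z⦄, x ∈ grp.carrier → y ∈ grp.carrier → z ∈ grp.carrier →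
      rmul (grp.mul x y) z = grp.mul (rmul x z) (rmul y z)
  rmul_graph_def : S.DefFun2 grp.carrier grp.carrier rmul

/-- `H` is a definable left ideal of the definable ring `R`. -/
def DefRing.IsLeftIdeal {m : ℕ} (R : DefRing S m) (H : Set (Fin m → N)) : Prop :=
  R.grp.IsDefSubgroup H ∧ ∀ u ∈ R.grp.carrier, ∀ h ∈ H, R.rmul u h ∈ H

/-- `π` realizes `Q` as the quotient ring of `R` by the (two-sided) ideal `V`. -/
def IsRingQuotMap {m k : ℕ} (R : DefRing S m) (V : Set (Fin m → N)) (Q : DefRing S k)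
    (π : (Fin m → N) → (Fin k → N)) : Prop :=
  IsQuotMap R.grp R.grp.carrier V Q.grp π ∧
  ∀ x ∈ R.grp.carrier, ∀ y ∈ R.grp.carrier, π (R.rmul x y) = Q.rmul (π x) (π y)

/-- The two-sided annihilator of the definable ring `R`. -/
def ringAnn {m : ℕ} (R : DefRing S m) : Set (Fin m → N) :=
  {v | v ∈ R.grp.carrier ∧
    ∀ w ∈ R.grp.carrier, R.rmul v w = R.grp.one ∧ R.rmul w v = R.grp.one}

/-- Iterated ring product `((a·x₁)·x₂)⋯`. -/
def rFold {m : ℕ} (R : DefRing S m) : (Fin m → N) → List (Fin m → N) → (Fin m → N)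
  | a, [] => a
  | a, x :: xs => rFold R (R.rmul a x) xs

/-- An o-minimal expansion of an ordered group, definable in the ambient structure:
a definable subset `J ⊆ N` with a definable ordered abelian group structure
(the induced structure on `J` being the relevant o-minimal expansion). -/
structure OMinGrpExp (S : Struc N) where
  J : Set N
  Jdef : S.Def 1 {x | x 0 ∈ J}
  add : N → N → N
  zero : N
  neg : N → N
  zero_mem : zero ∈ J
  add_mem : ∀ ⦃a b⦄, a ∈ J → b ∈ J → add a b ∈ J
  neg_mem : ∀ ⦃a⦄, a ∈ J → neg a ∈ J
  add_assoc' : ∀ ⦃a b c⦄, a ∈ J → b ∈ J → c ∈ J → add (add a b) c = add a (add b c)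
  add_comm' : ∀ ⦃a b⦄, a ∈ J → b ∈ J → add a b = add b a
  zero_add' : ∀ ⦃a⦄, a ∈ J → add zero a = a
  neg_add' : ∀ ⦃a⦄, a ∈ J → add (neg a) a = zero
  add_lt' : ∀ ⦃a b c⦄, a ∈ J → b ∈ J → c ∈ J → b < c → add a b < add a c
  add_graph_def : S.Def 3 {z | z 0 ∈ J ∧ z 1 ∈ J ∧ add (z 0) (z 1) = z 2}

namespace OMinGrpExp
variable {S : Struc N} (E : OMinGrpExp S)

/-- A subset of `J^k` bounded in `J`. -/
def BoundedSet {k : ℕ} (B : Set (Fin k → N)) : Prop :=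
  ∃ lo ∈ E.J, ∃ hi ∈ E.J, ∀ x ∈ B, ∀ i, lo ≤ x i ∧ x i ≤ hi

/-- The induced structure on `J` is semi-bounded: every definable subset of `J^k`
belongs to every family of sets (closed under the first-order operations relative
to `J`) containing the ordered group structure, all bounded definable sets, and
all definable endomorphisms of `(J, 0, +)`. -/
def SemiBounded : Prop :=
  ∀ (D : ∀ k : ℕ, Set (Fin k → N) → Prop),
    (∀ {k : ℕ} {A B : Set (Fin k → N)}, D k A → D k B → D k (A ∩ B)) →
    (∀ {k : ℕ} {A : Set (Fin k → N)}, D k A → D k ({x | ∀ i, x i ∈ E.J} \ A)) →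
    (∀ k : ℕ, D k {x | ∀ i, x i ∈ E.J}) →
    (∀ {k l : ℕ} (g : Fin k → Fin l) {A : Set (Fin k → N)}, D k A →
        D l {x | (∀ i, x i ∈ E.J) ∧ x ∘ g ∈ A}) →
    (∀ {k : ℕ} {A : Set (Fin (k + 1) → N)}, D (k + 1) A →
        D k {x | (∀ i, x i ∈ E.J) ∧ ∃ t ∈ E.J, Fin.snoc x t ∈ A}) →
    (D 2 {x | (∀ i, x i ∈ E.J) ∧ x 0 < x 1}) →
    (∀ a ∈ E.J, D 1 {x | x 0 = a}) →
    (D 3 {z | (∀ i, z i ∈ E.J) ∧ E.add (z 0) (z 1) = z 2}) →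
    (∀ {k : ℕ} {B : Set (Fin k → N)}, S.Def k B → (∀ x ∈ B, ∀ i, x i ∈ E.J) →
        E.BoundedSet B → D k B) →
    (∀ f : N → N, S.DefFun1 E.J f → (∀ a ∈ E.J, f a ∈ E.J) →
        (∀ ⦃a b⦄, a ∈ E.J → b ∈ E.J → f (E.add a b) = E.add (f a) (f b)) →
        D 2 {z | z 0 ∈ E.J ∧ z 1 ∈ E.J ∧ f (z 0) = z 1}) →
    ∀ {k : ℕ} {A : Set (Fin k → N)}, S.Def k A → (∀ x ∈ A, ∀ i, x i ∈ E.J) → D k A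

end OMinGrpExp

/-- An o-minimal expansion of a real closed field, definable in the ambient
structure: a definable subset `J ⊆ N` with a definable real closed ordered field
structure. -/
structure OMinFieldExp (S : Struc N) where
  J : Set N
  Jdef : S.Def 1 {x | x 0 ∈ J}
  add : N → N → N
  mul : N → N → N
  zero : N
  one : N
  neg : N → N
  inv : N → N
  zero_mem : zero ∈ J
  one_mem : one ∈ J
  zero_ne_one : zero ≠ one
  add_mem : ∀ ⦃a b⦄, a ∈ J → b ∈ J → add a b ∈ J
  mul_mem : ∀ ⦃a b⦄, a ∈ J → b ∈ J → mul a b ∈ J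
  neg_mem : ∀ ⦃a⦄, a ∈ J → neg a ∈ J
  inv_mem : ∀ ⦃a⦄, a ∈ J → inv a ∈ J
  add_assoc' : ∀ ⦃a b c⦄, a ∈ J → b ∈ J → c ∈ J → add (add a b) c = add a (add b c)
  add_comm' : ∀ ⦃a b⦄, a ∈ J → b ∈ J → add a b = add b a
  zero_add' : ∀ ⦃a⦄, a ∈ J → add zero a = a
  neg_add' : ∀ ⦃a⦄, a ∈ J → add (neg a) a = zero
  mul_assoc' : ∀ ⦃a b c⦄, a ∈ J → b ∈ J → c ∈ J → mul (mul a b) c = mul a (mul b c)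
  mul_comm' : ∀ ⦃a b⦄, a ∈ J → b ∈ J → mul a b = mul b a
  one_mul' : ∀ ⦃a⦄, a ∈ J → mul one a = a
  mul_inv' : ∀ ⦃a⦄, a ∈ J → a ≠ zero → mul (inv a) a = one
  distrib' : ∀ ⦃a b c⦄, a ∈ J → b ∈ J → c ∈ J →
      mul a (add b c) = add (mul a b) (mul a c)
  add_lt' : ∀ ⦃a b c⦄, a ∈ J → b ∈ J → c ∈ J → b < c → add a b < add a c
  mul_pos' : ∀ ⦃a b⦄, a ∈ J → b ∈ J → zero < a → zero < b → zero < mul a b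
  sq_root : ∀ ⦃a⦄, a ∈ J → zero ≤ a → ∃ b ∈ J, mul b b = a
  odd_root : ∀ n : ℕ, Odd n → ∀ c : Fin (n + 1) → N, (∀ i, c i ∈ J) →
      c (Fin.last n) ≠ zero → ∃ x ∈ J, polyEval add mul zero c x = zero
  add_graph_def : S.Def 3 {z | z 0 ∈ J ∧ z 1 ∈ J ∧ add (z 0) (z 1) = z 2}
  mul_graph_def : S.Def 3 {z | z 0 ∈ J ∧ z 1 ∈ J ∧ mul (z 0) (z 1) = z 2}

/-- The linearly bounded one-dimensional torsion-free definable group of an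
o-minimal expansion of a real closed field: a definable ordered torsion-free group
structure on `J` with respect to which the induced structure is linearly bounded. -/
structure LinBddGrp {S : Struc N} (E : OMinFieldExp S) where
  op : N → N → N
  z : N
  opneg : N → N
  z_mem : z ∈ E.J
  op_mem : ∀ ⦃a b⦄, a ∈ E.J → b ∈ E.J → op a b ∈ E.J
  opneg_mem : ∀ ⦃a⦄, a ∈ E.J → opneg a ∈ E.J
  op_assoc : ∀ ⦃a b c⦄, a ∈ E.J → b ∈ E.J → c ∈ E.J → op (op a b) c = op a (op b c)
  op_comm : ∀ ⦃a b⦄, a ∈ E.J → b ∈ E.J → op a b = op b a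
  z_op : ∀ ⦃a⦄, a ∈ E.J → op z a = a
  opneg_op : ∀ ⦃a⦄, a ∈ E.J → op (opneg a) a = z
  op_lt : ∀ ⦃a b c⦄, a ∈ E.J → b ∈ E.J → c ∈ E.J → b < c → op a b < op a c
  op_graph_def : S.Def 3 {w | w 0 ∈ E.J ∧ w 1 ∈ E.J ∧ op (w 0) (w 1) = w 2}
  torsion_free : ∀ a ∈ E.J, a ≠ z → ∀ n : ℕ, 0 < n → opPow op z a n ≠ z
  lin_bdd : ∀ f : N → N, S.DefFun1 E.J f → (∀ a ∈ E.J, f a ∈ E.J) →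
      ∃ r : N → N, S.DefFun1 E.J r ∧ (∀ a ∈ E.J, r a ∈ E.J) ∧
        (∀ ⦃a b⦄, a ∈ E.J → b ∈ E.J → r (op a b) = op (r a) (r b)) ∧
        ∃ cst ∈ E.J, Filter.Tendsto (fun x => op (f x) (opneg (r x)))
            (rightEndFilter E.J) (nhds cst)

/-- Multiplication of `n × n` matrices with entries in the definable field `E`. -/
def matMul {S : Struc N} (E : OMinFieldExp S) (n : ℕ) (x y : Fin (n * n) → N) :
    Fin (n * n) → N :=
  fun p =>
    (List.ofFn (fun l : Fin n =>
        E.mul (x (finIdx (pFst p) l)) (y (finIdx l (pSnd p))))).foldr E.add E.zero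

/-- The identity `n × n` matrix with entries in the definable field `E`. -/
def matId {S : Struc N} (E : OMinFieldExp S) (n : ℕ) : Fin (n * n) → N :=
  fun p => if pFst p = pSnd p then E.one else E.zero

/-- The three kinds of division algebras over a real closed field. -/
inductive DivKind : Type
  | real : DivKind
  | cplx : DivKind
  | quat : DivKind

@[reducible] def dkDim : DivKind → ℕ
  | .real => 1
  | .cplx => 2
  | .quat => 4

/-- Multiplication in the division algebra of kind `d` (the field itself, the field
with `√-1` adjoined, or the quaternions), with coordinates in the definable field
`E`. -/
def dkMul {S : Struc N} (E : OMinFieldExp S) :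
    (d : DivKind) → (Fin (dkDim d) → N) → (Fin (dkDim d) → N) → (Fin (dkDim d) → N)
  | .real => fun x y _ => E.mul (x 0) (y 0)
  | .cplx => fun x y i =>
      if i.1 = 0 then E.add (E.mul (x 0) (y 0)) (E.neg (E.mul (x 1) (y 1)))
      else E.add (E.mul (x 0) (y 1)) (E.mul (x 1) (y 0))
  | .quat => fun x y i =>
      if i.1 = 0 then
        E.add (E.mul (x 0) (y 0)) (E.neg (E.add (E.mul (x 1) (y 1))
          (E.add (E.mul (x 2) (y 2)) (E.mul (x 3) (y 3)))))
      else if i.1 = 1 then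
        E.add (E.mul (x 0) (y 1)) (E.add (E.mul (x 1) (y 0))
          (E.add (E.mul (x 2) (y 3)) (E.neg (E.mul (x 3) (y 2)))))
      else if i.1 = 2 then
        E.add (E.mul (x 0) (y 2)) (E.add (E.neg (E.mul (x 1) (y 3)))
          (E.add (E.mul (x 2) (y 0)) (E.mul (x 3) (y 1))))
      else
        E.add (E.mul (x 0) (y 3)) (E.add (E.mul (x 1) (y 2))
          (E.add (E.neg (E.mul (x 2) (y 1))) (E.mul (x 3) (y 0))))

/-- Multiplication in the matrix algebra `M_k(D)` where `D` is the division algebra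
of kind `d` over the definable field `E`; elements are encoded as tuples in
`N^(k·k·dim D)`. -/
def matAlgMul {S : Struc N} (E : OMinFieldExp S) (d : DivKind) (k : ℕ)
    (x y : Fin (k * k * dkDim d) → N) : Fin (k * k * dkDim d) → N :=
  fun p =>
    ((List.ofFn (fun l : Fin k =>
        dkMul E d (fun cc => x (finIdx (finIdx (pFst (pFst p)) l) cc))
          (fun cc => y (finIdx (finIdx l (pSnd (pFst p))) cc)))).foldr
      (fun v w i => E.add (v i) (w i)) (fun _ => E.zero)) (pSnd p)

/-- `(F, +, ·, 0, 1, −, ⁻¹, <)` is a real closed ordered field structure on the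
subset `F ⊆ N^k`. -/
def IsRCFOn {k : ℕ} (F : Set (Fin k → N))
    (fadd fmul : (Fin k → N) → (Fin k → N) → (Fin k → N)) (fzero fone : Fin k → N)
    (fneg finv : (Fin k → N) → (Fin k → N))
    (flt : (Fin k → N) → (Fin k → N) → Prop) : Prop :=
  fzero ∈ F ∧ fone ∈ F ∧ fzero ≠ fone ∧
  (∀ x ∈ F, ∀ y ∈ F, fadd x y ∈ F ∧ fmul x y ∈ F) ∧
  (∀ x ∈ F, fneg x ∈ F ∧ finv x ∈ F) ∧
  (∀ x ∈ F, ∀ y ∈ F, ∀ z ∈ F, fadd (fadd x y) z = fadd x (fadd y z)) ∧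
  (∀ x ∈ F, ∀ y ∈ F, fadd x y = fadd y x) ∧
  (∀ x ∈ F, fadd fzero x = x) ∧
  (∀ x ∈ F, fadd (fneg x) x = fzero) ∧
  (∀ x ∈ F, ∀ y ∈ F, ∀ z ∈ F, fmul (fmul x y) z = fmul x (fmul y z)) ∧
  (∀ x ∈ F, ∀ y ∈ F, fmul x y = fmul y x) ∧
  (∀ x ∈ F, fmul fone x = x) ∧
  (∀ x ∈ F, x ≠ fzero → fmul (finv x) x = fone) ∧
  (∀ x ∈ F, ∀ y ∈ F, ∀ z ∈ F, fmul x (fadd y z) = fadd (fmul x y) (fmul x z)) ∧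
  (∀ x ∈ F, ∀ y ∈ F, flt x y ∨ x = y ∨ flt y x) ∧
  (∀ x ∈ F, ¬ flt x x) ∧
  (∀ x ∈ F, ∀ y ∈ F, ∀ z ∈ F, flt x y → flt y z → flt x z) ∧
  (∀ x ∈ F, ∀ y ∈ F, ∀ z ∈ F, flt y z → flt (fadd x y) (fadd x z)) ∧
  (∀ x ∈ F, ∀ y ∈ F, flt fzero x → flt fzero y → flt fzero (fmul x y)) ∧
  (∀ x ∈ F, (flt fzero x ∨ x = fzero) → ∃ y ∈ F, fmul y y = x) ∧
  (∀ n : ℕ, Odd n → ∀ c : Fin (n + 1) → (Fin k → N), (∀ i, c i ∈ F) →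
      c (Fin.last n) ≠ fzero → ∃ x ∈ F, polyEval fadd fmul fzero c x = fzero)

end Groups

end OMinPreamble

set_option linter.unusedSectionVars false

namespace Struc

section Boolean

variable {N : Type u} [LinearOrder N] (S : Struc N) {n : ℕ}

theorem Def.and {p q : (Fin n → N) → Prop} (hp : S.Def n {x | p x}) (hq : S.Def n {x | q x}) :
    S.Def n {x | p x ∧ q x} :=
  S.def_inter hp hq

theorem Def.not {p : (Fin n → N) → Prop} (hp : S.Def n {x | p x}) : S.Def n {x | ¬ p x} :=
  S.def_compl hp

theorem Def.or {p q : (Fin n → N) → Prop} (hp : S.Def n {x | p x}) (hq : S.Def n {x | q x}) :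
    S.Def n {x | p x ∨ q x} := by
  have h := Def.not S (Def.and S (Def.not S hp) (Def.not S hq))
  simpa only [not_and_or, not_not] using h

theorem Def.const (p : Prop) : S.Def n {_x | p} := by
  by_cases hp : p
  · simpa [hp] using S.def_univ n
  · have h := S.def_compl (S.def_univ n)
    simpa [hp] using h

theorem Def.all_fin : ∀ {k : ℕ} {p : Fin k → (Fin n → N) → Prop},
    (∀ i, S.Def n {x | p i x}) → S.Def n {x | ∀ i, p i x}
  | 0, _, _ => by simpa using S.def_univ n
  | k + 1, p, hp => by
    have h := Def.and S (hp 0) (Def.all_fin (p := fun i => p i.succ) fun i => hp i.succ)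
    simpa only [Fin.forall_fin_succ] using h

theorem Def.lt (i j : Fin n) : S.Def n {x | x i < x j} := by
  simpa using S.def_reindex ![i, j] S.def_lt

theorem Def.eq (i j : Fin n) : S.Def n {x | x i = x j} := by
  have h := Def.and S (Def.not S (Def.lt S i j)) (Def.not S (Def.lt S j i))
  have e : {x : Fin n → N | x i = x j} = {x | ¬ x i < x j ∧ ¬ x j < x i} := by
    ext x
    simp only [mem_ofPred_eq, not_lt]
    exact ⟨fun h => ⟨h.ge, h.le⟩, fun h => le_antisymm h.2 h.1⟩
  rwa [e]

theorem Def.exists_append : ∀ {q : ℕ} {A : Set (Fin (n + q) → N)}, S.Def (n + q) A →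
    S.Def n {x | ∃ y : Fin q → N, Fin.append x y ∈ A}
  | 0, A, hA => by
    have e : {x : Fin n → N | ∃ y : Fin 0 → N, Fin.append x y ∈ A} = A := by
      ext x
      constructor
      · rintro ⟨y, hy⟩
        rwa [Subsingleton.elim y Fin.elim0, Fin.append_elim0] at hy
      · exact fun hx => ⟨Fin.elim0, by rwa [Fin.append_elim0]⟩
    rwa [e]
  | q + 1, A, hA => by
    have h := Def.exists_append (S.def_proj (m := n + q) hA)
    have e : {x : Fin n → N | ∃ y : Fin (q + 1) → N, Fin.append x y ∈ A} =
        {x | ∃ y : Fin q → N, Fin.append x y ∈ {x | ∃ t : N, Fin.snoc x t ∈ A}} := by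
      ext x
      constructor
      · rintro ⟨y, hy⟩
        refine ⟨Fin.init y, y (Fin.last q), ?_⟩
        rw [← Fin.append_snoc, Fin.snoc_init_self]
        exact hy
      · rintro ⟨y, t, hy⟩
        refine ⟨Fin.snoc y t, ?_⟩
        rw [Fin.append_snoc]
        exact hy
    rwa [e]

/-- A function on `N ^ n` with values in `N` is definable if its graph is. -/
def DefFun (f : (Fin n → N) → N) : Prop :=
  S.Def (n + 1) {x | f (fun i => x i.castSucc) = x (Fin.last n)}

theorem DefFun.proj (i : Fin n) : S.DefFun (fun x : Fin n → N => x i) :=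
  Def.eq S i.castSucc (Fin.last n)

theorem DefFun.const (a : N) : S.DefFun (fun _ : Fin n → N => a) := by
  have h := S.def_reindex (fun _ : Fin 1 => Fin.last n) (S.def_pt a)
  simpa [DefFun, eq_comm] using h

theorem Def.preimage {m k : ℕ} {A : Set (Fin m → N)} (hA : S.Def m A)
    {g : (Fin k → N) → (Fin m → N)} (hg : ∀ i, S.DefFun fun y => g y i) :
    S.Def k {y | g y ∈ A} := by
  have h1 : ∀ i, S.Def (k + m) {z | g (fun l => z (Fin.castAdd m l)) i = z (Fin.natAdd k i)} := by
    intro i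
    have h := S.def_reindex
      (Fin.lastCases (motive := fun _ => Fin (k + m)) (Fin.natAdd k i) (Fin.castAdd m)) (hg i)
    simpa [Function.comp_def] using h
  have h2 : S.Def (k + m) {z | (fun i => z (Fin.natAdd k i)) ∈ A} :=
    S.def_reindex (Fin.natAdd k) hA
  have h := Def.exists_append S (Def.and S h2 (Def.all_fin S h1))
  have e : {y | g y ∈ A} = {x : Fin k → N | ∃ y : Fin m → N, Fin.append x y ∈
      {z : Fin (k + m) → N | (fun i => z (Fin.natAdd k i)) ∈ A ∧
        ∀ i, g (fun l => z (Fin.castAdd m l)) i = z (Fin.natAdd k i)}} := by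
    ext x
    simp only [mem_ofPred_eq, Fin.append_right, Fin.append_left]
    constructor
    · exact fun hx => ⟨g x, hx, fun _ => rfl⟩
    · rintro ⟨y, hy, hxy⟩
      rwa [show g x = y from funext hxy]
  rwa [e]

theorem DefFun.comp {m k : ℕ} {f : (Fin m → N) → N} (hf : S.DefFun f)
    {g : (Fin k → N) → (Fin m → N)} (hg : ∀ i, S.DefFun fun y => g y i) :
    S.DefFun fun y => f (g y) := by
  have h := Def.preimage S hf (k := k + 1)
    (g := fun z => Fin.snoc (g fun i => z i.castSucc) (z (Fin.last k))) (by
      intro i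
      refine Fin.lastCases ?_ (fun i => ?_) i
      · simpa using DefFun.proj S (Fin.last k)
      · have h := S.def_reindex
          (Fin.lastCases (motive := fun _ => Fin (k + 1 + 1)) (Fin.last (k + 1))
            fun l => l.castSucc.castSucc) (hg i)
        simpa [DefFun, Function.comp_def] using h)
  simpa [DefFun] using h

end Boolean

/-- A set together with a distinguished class of maps into it from the powers `N ^ n`, thought of
as the definable ones. -/
class DefSpace {N : Type u} [LinearOrder N] (S : Struc N) (Γ : Type*) where
  /-- The distinguished maps from `N ^ n`. -/
  plot : ∀ n : ℕ, ((Fin n → N) → Γ) → Prop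
  plot_comp : ∀ {n k : ℕ} {f : (Fin n → N) → Γ} {g : (Fin k → N) → (Fin n → N)},
    plot n f → (∀ i, S.DefFun fun y => g y i) → plot k fun y => f (g y)

section Spaces

variable {N : Type u} [LinearOrder N] (S : Struc N)

open DefSpace

instance : DefSpace S N where
  plot _ f := S.DefFun f
  plot_comp hf hg := DefFun.comp S hf hg

instance : DefSpace S Prop where
  plot n f := S.Def n {x | f x}
  plot_comp hf hg := Def.preimage S hf hg

instance : DefSpace S Unit where
  plot _ _ := True
  plot_comp _ _ := trivial

instance {Γ Δ : Type*} [DefSpace S Γ] [DefSpace S Δ] : DefSpace S (Γ × Δ) where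
  plot n f := plot S n (fun x => (f x).1) ∧ plot S n (fun x => (f x).2)
  plot_comp hf hg := ⟨plot_comp hf.1 hg, plot_comp hf.2 hg⟩

instance instTuple {Γ : Type*} [DefSpace S Γ] {k : ℕ} : DefSpace S (Fin k → Γ) where
  plot n f := ∀ i, plot S n (fun x => f x i)
  plot_comp hf hg i := plot_comp (hf i) hg

instance instFun {Γ Δ : Type*} [DefSpace S Γ] [DefSpace S Δ] : DefSpace S (Γ → Δ) where
  plot n f := ∀ (k : ℕ) (g : (Fin k → N) → (Fin n → N)) (a : (Fin k → N) → Γ),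
    (∀ i, S.DefFun fun y => g y i) → plot S k a → plot S k fun y => f (g y) (a y)
  plot_comp hf hg _ _ a hg' ha := hf _ _ a (fun i => DefFun.comp S (hg i) hg') ha

/-- Definable points of a definable space. -/
class DefPt {Γ : Type*} [DefSpace S Γ] (a : Γ) : Prop where
  const_plot : ∀ n, plot S n fun _ => a

/-- Definable maps between definable spaces. -/
def DefMap {Γ Δ : Type*} [DefSpace S Γ] [DefSpace S Δ] (f : Γ → Δ) : Prop :=
  ∀ n p, plot S n p → plot S n fun x => f (p x)

variable {S} {Γ Δ Θ : Type*} [DefSpace S Γ] [DefSpace S Δ] [DefSpace S Θ]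

theorem DefMap.id : DefMap S fun x : Γ => x := fun _ _ h => h

theorem DefMap.const {c : Δ} (h : DefPt S c) : DefMap S fun _ : Γ => c :=
  fun n _ _ => h.const_plot n

theorem DefPt.of_map {c : Δ} (h : DefMap S fun _ : Unit => c) : DefPt S c :=
  ⟨fun n => h n (fun _ => ()) trivial⟩

theorem DefMap.app {f : Γ → Δ → Θ} {g : Γ → Δ} (hf : DefMap S f) (hg : DefMap S g) :
    DefMap S fun x => f x (g x) :=
  fun n p hp => hf n p hp n (fun y => y) _ (fun i => DefFun.proj S i) (hg n p hp)

theorem DefMap.curry {f : Γ → Δ → Θ} (hf : DefMap S fun z : Γ × Δ => f z.1 z.2) :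
    DefMap S f :=
  fun _ p hp k g a hg ha => hf k (fun y => (p (g y), a y)) ⟨plot_comp hp hg, ha⟩

theorem DefMap.comp {f : Δ → Θ} {g : Γ → Δ} (hf : DefMap S f) (hg : DefMap S g) :
    DefMap S fun x => f (g x) :=
  fun n p hp => hf n _ (hg n p hp)

theorem DefPt.map {f : Γ → Δ} (h : DefPt S f) : DefMap S f :=
  DefMap.app (DefMap.const h) DefMap.id

theorem DefMap.pt {f : Γ → Δ} (h : DefMap S f) : DefPt S f :=
  ⟨fun _ k _ a _ ha => h k a ha⟩

theorem DefPt.app {f : Γ → Δ} (h : DefPt S f) {a : Γ} (ha : DefPt S a) : DefPt S (f a) :=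
  ⟨fun n => h.map n _ (ha.const_plot n)⟩

theorem DefMap.fst {f : Γ → Δ × Θ} (h : DefMap S f) : DefMap S fun x => (f x).1 :=
  fun _ _ hp => (h _ _ hp).1

theorem DefMap.snd {f : Γ → Δ × Θ} (h : DefMap S f) : DefMap S fun x => (f x).2 :=
  fun _ _ hp => (h _ _ hp).2

theorem DefMap.prodMk {f : Γ → Δ} {g : Γ → Θ} (hf : DefMap S f) (hg : DefMap S g) :
    DefMap S fun x => (f x, g x) :=
  fun n p hp => ⟨hf n p hp, hg n p hp⟩

instance : DefPt S (Prod.mk : Γ → Δ → Γ × Δ) :=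
  DefMap.pt <| DefMap.curry <| DefMap.prodMk DefMap.id.fst DefMap.id.snd

theorem DefMap.tuple {k : ℕ} {f : Γ → Fin k → Δ} (hf : ∀ i, DefMap S fun x => f x i) :
    DefMap S f :=
  fun n p hp i => hf i n p hp

theorem DefMap.coord {k : ℕ} {f : Γ → Fin k → Δ} (hf : DefMap S f) (i : Fin k) :
    DefMap S fun x => f x i :=
  fun n p hp => hf n p hp i

theorem DefMap.imp {f g : Γ → Prop} (hf : DefMap S f) (hg : DefMap S g) :
    DefMap S fun x => f x → g x := by
  intro n p hp
  have h := Def.or S (Def.not S (hf n p hp)) (hg n p hp)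
  simp only [← imp_iff_not_or] at h
  exact h

instance (a : N) : DefPt S a := ⟨fun _ => DefFun.const S a⟩

instance (p : Prop) : DefPt S p := ⟨fun _ => Def.const S p⟩

instance (a : Unit) : DefPt S a := ⟨fun _ => trivial⟩

instance {k : ℕ} (a : Fin k → Δ) [h : ∀ i, DefPt S (a i)] : DefPt S a :=
  ⟨fun n i => (h i).const_plot n⟩

instance : DefPt S And :=
  DefMap.pt <| DefMap.curry fun _ _ hp => Def.and S hp.1 hp.2

instance : DefPt S Or :=
  DefMap.pt <| DefMap.curry fun _ _ hp => Def.or S hp.1 hp.2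

instance : DefPt S Not :=
  DefMap.pt fun _ _ hp => Def.not S hp

instance : DefPt S Iff := by
  refine DefMap.pt <| DefMap.curry fun n p hp => ?_
  have h := Def.and S (Def.or S (Def.not S hp.1) hp.2) (Def.or S (Def.not S hp.2) hp.1)
  simp only [← imp_iff_not_or, ← iff_iff_implies_and_implies] at h
  exact h

instance : DefPt S (fun a b : N => a < b) := by
  refine DefMap.pt <| DefMap.curry fun n p hp => ?_
  exact Def.preimage S S.def_lt (g := fun x => ![(p x).1, (p x).2]) (by
    intro i
    fin_cases i
    · exact hp.1
    · exact hp.2)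

instance : DefPt S (LT.lt : N → N → Prop) :=
  inferInstanceAs (DefPt S (fun a b : N => a < b))

instance : DefPt S (LE.le : N → N → Prop) := by
  have h : DefMap S fun z : N × N => ¬ z.2 < z.1 :=
    DefMap.app (DefMap.const inferInstance)
      (DefMap.app (DefMap.app (DefMap.const inferInstance) DefMap.id.snd) DefMap.id.fst)
  simp only [not_lt] at h
  exact DefMap.pt <| DefMap.curry h

instance : DefPt S (Eq : N → N → Prop) := by
  have h : DefMap S fun z : N × N => z.1 ≤ z.2 ∧ z.2 ≤ z.1 :=
    DefMap.app (DefMap.app (DefMap.const inferInstance)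
      (DefMap.app (DefMap.app (DefMap.const inferInstance) DefMap.id.fst) DefMap.id.snd))
      (DefMap.app (DefMap.app (DefMap.const inferInstance) DefMap.id.snd) DefMap.id.fst)
  simp only [← le_antisymm_iff] at h
  exact DefMap.pt <| DefMap.curry h

theorem DefMap.all_fin {k : ℕ} {f : Γ → Fin k → Prop} (hf : ∀ i, DefMap S fun x => f x i) :
    DefMap S fun x => ∀ i, f x i :=
  fun n p hp => Def.all_fin S fun i => hf i n p hp

theorem DefMap.ex_fin {k : ℕ} {f : Γ → Fin k → Prop} (hf : ∀ i, DefMap S fun x => f x i) :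
    DefMap S fun x => ∃ i, f x i := by
  intro n p hp
  have h := Def.not S (Def.all_fin S fun i => Def.not S (hf i n p hp))
  simp only [not_forall, not_not] at h
  exact h

instance {k : ℕ} : DefPt S (Eq : (Fin k → N) → (Fin k → N) → Prop) := by
  have h : DefMap S fun z : (Fin k → N) × (Fin k → N) => ∀ i, z.1 i = z.2 i :=
    DefMap.all_fin fun i => DefMap.app
      (DefMap.app (DefMap.const (inferInstanceAs (DefPt S (Eq : N → N → Prop))))
        (DefMap.id.fst.coord i)) (DefMap.id.snd.coord i)
  simp only [← funext_iff] at h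
  exact DefMap.pt <| DefMap.curry h

/-- Definable spaces which are definable images of some `N ^ q`. -/
class Rep (S : Struc N) (Γ : Type*) [DefSpace S Γ] : Prop where
  exists_surj : ∃ (q : ℕ) (f : (Fin q → N) → Γ), plot S q f ∧ Function.Surjective f

instance : Rep S N :=
  ⟨1, fun x => x 0, DefFun.proj S 0, fun a => ⟨fun _ => a, rfl⟩⟩

instance : Rep S Unit := ⟨0, fun _ => (), trivial, fun _ => ⟨Fin.elim0, rfl⟩⟩

instance {k : ℕ} : Rep S (Fin k → N) :=
  ⟨k, fun x => x, fun i => DefFun.proj S i, fun a => ⟨a, rfl⟩⟩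

instance [Rep S Γ] [Rep S Δ] : Rep S (Γ × Δ) := by
  obtain ⟨q, f, hf, sf⟩ := Rep.exists_surj (S := S) (Γ := Γ)
  obtain ⟨r, g, hg, sg⟩ := Rep.exists_surj (S := S) (Γ := Δ)
  refine ⟨q + r, fun x => (f fun i => x (Fin.castAdd r i), g fun i => x (Fin.natAdd q i)),
    ⟨plot_comp hf fun i => DefFun.proj S _, plot_comp hg fun i => DefFun.proj S _⟩, ?_⟩
  rintro ⟨a, b⟩
  obtain ⟨x, rfl⟩ := sf a
  obtain ⟨y, rfl⟩ := sg b
  exact ⟨Fin.append x y, by simp⟩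

theorem Rep.defPt [Rep S Γ] (a : Γ) : DefPt S a := by
  obtain ⟨q, f, hf, sf⟩ := Rep.exists_surj (S := S) (Γ := Γ)
  obtain ⟨x, rfl⟩ := sf a
  exact ⟨fun n => plot_comp (g := fun _ => x) hf fun i => DefFun.const S _⟩

instance [Rep S Γ] : DefPt S (@Exists Γ) := by
  refine DefMap.pt fun n p hp => ?_
  obtain ⟨q, f, hf, sf⟩ := Rep.exists_surj (S := S) (Γ := Γ)
  have h := Def.exists_append S
    (hp (n + q) (fun x i => x (Fin.castAdd q i)) (fun x => f fun i => x (Fin.natAdd n i))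
      (fun i => DefFun.proj S _) (plot_comp hf fun i => DefFun.proj S _))
  have e : {x | Exists (p x)} = {x : Fin n → N | ∃ y : Fin q → N, Fin.append x y ∈
      {x : Fin (n + q) → N | p (fun i => x (Fin.castAdd q i))
        (f fun i => x (Fin.natAdd n i))}} := by
    ext x
    simp only [mem_ofPred_eq, Fin.append_left, Fin.append_right]
    exact sf.exists
  change S.Def n {x | Exists (p x)}
  rw [e]
  exact h

theorem DefMap.ex [Rep S Δ] {f : Γ → Δ → Prop} (hf : DefMap S fun z : Γ × Δ => f z.1 z.2) :
    DefMap S fun x => ∃ y, f x y :=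
  (DefMap.const inferInstance).app (DefMap.curry hf)

theorem DefMap.not {f : Γ → Prop} (hf : DefMap S f) : DefMap S fun x => ¬ f x :=
  (DefMap.const inferInstance).app hf

theorem DefMap.all [Rep S Δ] {f : Γ → Δ → Prop} (hf : DefMap S fun z : Γ × Δ => f z.1 z.2) :
    DefMap S fun x => ∀ y, f x y := by
  have h := DefMap.not (DefMap.ex (f := fun x y => ¬ f x y) hf.not)
  simpa only [not_exists, not_not] using h

open Classical in
/-- The element satisfying a predicate, if it is unique. -/
noncomputable def the [Nonempty N] (A : N → Prop) : N :=
  if h : ∃ a, ∀ b, A b ↔ b = a then h.choose else Classical.arbitrary N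

theorem the_eq [Nonempty N] {A : N → Prop} {a : N} (h : ∀ b, A b ↔ b = a) : the A = a := by
  have h' : ∃ a, ∀ b, A b ↔ b = a := ⟨a, h⟩
  rw [the, dif_pos h']
  exact (h _).1 ((h'.choose_spec _).2 rfl)

end Spaces

section Auto

variable {N : Type u} [LinearOrder N] {S : Struc N} {Γ Δ : Type*} [DefSpace S Γ] [DefSpace S Δ]

/-- Proves that an explicitly given map is definable. -/
theorem DefMap.auto {f : Γ → Δ} (h : DefMap S f := by
    repeat'
      first
      | with_reducible assumption
      | with_reducible exact DefMap.id
      | exact DefMap.const (by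
          first
          | with_reducible assumption
          | infer_instance
          | with_reducible exact Rep.defPt _)
      | with_reducible refine DefMap.coord ?_ _
      | with_reducible refine DefMap.fst ?_
      | with_reducible refine DefMap.snd ?_
      | with_reducible refine DefMap.imp ?_ ?_
      | with_reducible refine DefMap.all ?_
      | with_reducible refine DefMap.all_fin fun _ => ?_
      | with_reducible refine DefMap.ex_fin fun _ => ?_
      | with_reducible refine DefMap.app ?_ ?_
      | with_reducible refine DefMap.tuple fun _ => ?_
      | with_reducible refine DefMap.curry ?_
      | with_reducible refine DefMap.pt ?_) : DefMap S f :=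
  h

/-- Proves that an explicitly given point is definable. -/
theorem DefPt.auto {a : Γ} (h : DefMap S fun _ : Unit => a := by exact DefMap.auto) : DefPt S a :=
  DefPt.of_map h

/-- Proves that an explicitly given function is a definable point. -/
theorem DefPt.autoFun {f : Γ → Δ} (h : DefMap S f := by exact DefMap.auto) : DefPt S f :=
  h.pt

end Auto

section

variable {N : Type u} [LinearOrder N] {S : Struc N} [Nonempty N]

instance : DefPt S (fun a b : N => b < a) := DefPt.autoFun
instance : DefPt S (GT.gt : N → N → Prop) := inferInstanceAs (DefPt S (fun a b : N => b < a))

instance : DefPt S (the : (N → Prop) → N) := by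
  have h : DefPt S (fun (A : N → Prop) (b : N) => (∃ a, A b ∧ ∀ b, A b ↔ b = a) ∨
    (¬ ∃ a, ∀ b, A b ↔ b = a) ∧ b = Classical.arbitrary N) := DefPt.autoFun
  refine DefMap.pt fun n p hp => ?_
  have h := h.map n p hp (n + 1) (fun z i => z i.castSucc) (fun z => z (Fin.last n))
    (fun i => DefFun.proj S _) (DefFun.proj S _)
  have e : ∀ (A : N → Prop) (b : N), the A = b ↔ (∃ a, A b ∧ ∀ b, A b ↔ b = a) ∨
      (¬ ∃ a, ∀ b, A b ↔ b = a) ∧ b = Classical.arbitrary N := by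
    intro A b
    by_cases hA : ∃ a, ∀ b, A b ↔ b = a
    · obtain ⟨a, ha⟩ := hA
      rw [the_eq ha]
      constructor
      · rintro rfl
        exact Or.inl ⟨_, (ha _).2 rfl, ha⟩
      · rintro (⟨c, hb, -⟩ | ⟨hn, -⟩)
        · exact ((ha b).1 hb).symm
        · exact absurd ⟨a, ha⟩ hn
    · rw [the, dif_neg hA]
      constructor
      · exact fun h => Or.inr ⟨hA, h.symm⟩
      · rintro (⟨c, -, hc⟩ | ⟨-, h⟩)
        · exact absurd ⟨c, hc⟩ hA
        · exact h.symm
  change S.Def (n + 1) {z | the (p fun i => z i.castSucc) = z (Fin.last n)}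
  simp only [e]
  exact h

/-- Choice between two elements according to a proposition. -/
noncomputable def pick (p : Prop) (a b : N) : N := the fun c => (p ∧ c = a) ∨ (¬ p ∧ c = b)

theorem pick_pos {p : Prop} (h : p) (a b : N) : pick p a b = a := the_eq fun c => by simp [h]

theorem pick_neg {p : Prop} (h : ¬ p) (a b : N) : pick p a b = b := the_eq fun c => by simp [h]

instance : DefPt S (fun (p : Prop) (a b : N) => the fun c => (p ∧ c = a) ∨ (¬ p ∧ c = b)) :=
  DefPt.autoFun

instance : DefPt S (pick : Prop → N → N → N) :=
  inferInstanceAs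
    (DefPt S fun (p : Prop) (a b : N) => the fun c => (p ∧ c = a) ∨ (¬ p ∧ c = b))

/-- The greatest lower bound of a predicate. -/
noncomputable def glb (A : N → Prop) : N :=
  the fun a => (∀ b, A b → a ≤ b) ∧ ∀ c, (∀ b, A b → c ≤ b) → c ≤ a

/-- The least upper bound of a predicate. -/
noncomputable def lub (A : N → Prop) : N :=
  the fun a => (∀ b, A b → b ≤ a) ∧ ∀ c, (∀ b, A b → b ≤ c) → a ≤ c

theorem glb_eq {A : N → Prop} {a : N} (h : IsGLB {x | A x} a) : glb A = a :=
  the_eq fun b => ⟨fun hb => IsGLB.unique (s := {x | A x}) ⟨fun c hc => hb.1 c hc, fun c hc =>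
    hb.2 c fun d hd => hc hd⟩ h, by rintro rfl; exact ⟨fun c hc => h.1 hc, fun c hc => h.2 hc⟩⟩

theorem lub_eq {A : N → Prop} {a : N} (h : IsLUB {x | A x} a) : lub A = a :=
  the_eq fun b => ⟨fun hb => IsLUB.unique (s := {x | A x}) ⟨fun c hc => hb.1 c hc, fun c hc =>
    hb.2 c fun d hd => hc hd⟩ h, by rintro rfl; exact ⟨fun c hc => h.1 hc, fun c hc => h.2 hc⟩⟩

theorem glb_eq_of_least {A : N → Prop} {a : N} (ha : A a) (h : ∀ b, A b → a ≤ b) : glb A = a :=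
  glb_eq ⟨fun _ hb => h _ hb, fun _ hb => hb ha⟩

instance : DefPt S (fun A : N → Prop =>
    the fun a => (∀ b, A b → a ≤ b) ∧ ∀ c, (∀ b, A b → c ≤ b) → c ≤ a) := DefPt.autoFun

instance : DefPt S (glb : (N → Prop) → N) := inferInstanceAs (DefPt S fun A : N → Prop =>
    the fun a => (∀ b, A b → a ≤ b) ∧ ∀ c, (∀ b, A b → c ≤ b) → c ≤ a)

instance : DefPt S (fun A : N → Prop =>
    the fun a => (∀ b, A b → b ≤ a) ∧ ∀ c, (∀ b, A b → b ≤ c) → a ≤ c) := DefPt.autoFun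

instance : DefPt S (lub : (N → Prop) → N) := inferInstanceAs (DefPt S fun A : N → Prop =>
    the fun a => (∀ b, A b → b ≤ a) ∧ ∀ c, (∀ b, A b → b ≤ c) → a ≤ c)

/-- The predicate holds on some nonempty open interval. -/
def Fat (A : N → Prop) : Prop := ∃ a b, a < b ∧ ∀ t, a < t → t < b → A t

instance : DefPt S (fun A : N → Prop => ∃ a b, a < b ∧ ∀ t, a < t → t < b → A t) := DefPt.autoFun

instance : DefPt S (Fat : (N → Prop) → Prop) :=
  inferInstanceAs (DefPt S fun A : N → Prop => ∃ a b, a < b ∧ ∀ t, a < t → t < b → A t)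

/-- The predicate holds on all elements of `B` far enough to the right. -/
def Tail (B A : N → Prop) : Prop := ∃ e, B e ∧ ∀ t, B t → e < t → A t

instance : DefPt S (fun B A : N → Prop => ∃ e, B e ∧ ∀ t, B t → e < t → A t) := DefPt.autoFun

instance : DefPt S (Tail : (N → Prop) → (N → Prop) → Prop) :=
  inferInstanceAs (DefPt S fun B A : N → Prop => ∃ e, B e ∧ ∀ t, B t → e < t → A t)

end

section
variable {N : Type u} [LinearOrder N]

/-- The structure with the order reversed. -/
def dual (S : Struc N) : Struc Nᵒᵈ where
  Def n A := S.Def n A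
  def_inter := S.def_inter
  def_compl := S.def_compl
  def_univ := S.def_univ
  def_reindex := S.def_reindex
  def_proj := S.def_proj
  def_lt := Def.lt S 1 0
  def_pt := S.def_pt
  o_min := by
    intro A hA
    obtain ⟨k, f, hf, e⟩ := S.o_min hA
    refine ⟨k, f, fun i => ?_, e⟩
    rcases hf i with ⟨a, h⟩ | ⟨a, b, h⟩ | ⟨a, h⟩ | ⟨a, h⟩ | h
    · exact Or.inl ⟨a, h⟩
    · refine Or.inr <| Or.inl ⟨b, a, h.trans ?_⟩
      ext x
      exact and_comm
    · exact Or.inr <| Or.inr <| Or.inr <| Or.inl ⟨a, h⟩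
    · exact Or.inr <| Or.inr <| Or.inl ⟨a, h⟩
    · exact Or.inr <| Or.inr <| Or.inr <| Or.inr h

end

section OneVariable

variable {N : Type u} [LinearOrder N] {S : Struc N} {A B C : N → Prop}

/-- A definable predicate only changes its truth value at finitely many places. -/
theorem DefPt.exists_breaks (hA : DefPt S A) : ∃ F : Set N, F.Finite ∧
    ∀ x y, x ≤ y → (∀ z ∈ F, x ≤ z → ¬ z ≤ y) → (A x ↔ A y) := by
  obtain ⟨k, f, hf, e⟩ := S.o_min (A := {x : Fin 1 → N | A (x 0)})
    (hA.map 1 (fun x => x 0) (DefFun.proj S 0))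
  have h : ∀ i, ∃ F : Set N, F.Finite ∧
      ∀ x y, x ≤ y → (∀ z ∈ F, x ≤ z → ¬ z ≤ y) → (x ∈ f i ↔ y ∈ f i) := by
    intro i
    rcases hf i with ⟨a, h⟩ | ⟨a, b, h⟩ | ⟨a, h⟩ | ⟨a, h⟩ | h
    · refine ⟨{a}, finite_singleton a, fun x y hxy hz => ?_⟩
      rw [h]
      have := hz a rfl
      simp only [mem_singleton_iff]
      constructor <;> rintro rfl <;> simp_all
    · refine ⟨{a, b}, by simp, fun x y hxy hz => ?_⟩
      rw [h]
      have h1 := hz a (by simp)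
      have h2 := hz b (by simp)
      simp only [mem_Ioo]
      grind
    · refine ⟨{a}, by simp, fun x y hxy hz => ?_⟩
      rw [h]
      have h1 := hz a (by simp)
      simp only [mem_Ioi]
      grind
    · refine ⟨{a}, by simp, fun x y hxy hz => ?_⟩
      rw [h]
      have h1 := hz a (by simp)
      simp only [mem_Iio]
      grind
    · exact ⟨∅, by simp, fun x y hxy hz => by simp [h]⟩
  choose F hF hF' using h
  refine ⟨⋃ i, F i, finite_iUnion hF, fun x y hxy hz => ?_⟩
  have e' : ∀ t, A t ↔ ∃ i, t ∈ f i := fun t => by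
    have := Set.ext_iff.1 e t
    simpa using this
  rw [e', e']
  exact exists_congr fun i => hF' i x y hxy fun z hz' => hz z (mem_iUnion.2 ⟨i, hz'⟩)

theorem Tail.mono (h : Tail B A) (hAC : ∀ t, B t → A t → C t) : Tail B C := by
  obtain ⟨e, he, h⟩ := h
  exact ⟨e, he, fun t ht het => hAC t ht (h t ht het)⟩

theorem Tail.and (h : Tail B A) (h' : Tail B C) : Tail B fun t => A t ∧ C t := by
  obtain ⟨e, he, h⟩ := h
  obtain ⟨e', he', h'⟩ := h'
  refine ⟨max e e', by rcases max_choice e e' with h | h <;> rwa [h], fun t ht het => ?_⟩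
  rw [max_lt_iff] at het
  exact ⟨h t ht het.1, h' t ht het.2⟩

theorem Tail.exists_gt (h : Tail B A) (hB : ∀ e, B e → ∃ e', B e' ∧ e < e') {e : N} (he : B e) :
    ∃ t, B t ∧ e < t ∧ A t := by
  obtain ⟨e', he', h⟩ := h
  obtain ⟨t, ht, hmt⟩ := hB (max e e') (by rcases max_choice e e' with h | h <;> rwa [h])
  rw [max_lt_iff] at hmt
  exact ⟨t, ht, hmt.1, h t ht hmt.2⟩

theorem Tail.exists (h : Tail B A) (hB : ∀ e, B e → ∃ e', B e' ∧ e < e') : ∃ t, B t ∧ A t := by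
  obtain ⟨e, he, h'⟩ := id h
  obtain ⟨t, ht, -, hA⟩ := h.exists_gt hB he
  exact ⟨t, ht, hA⟩

theorem tail_gt {e : N} (he : B e) : Tail B fun t => e < t := ⟨e, he, fun _ _ h => h⟩

theorem exists_upper_of_finite {F : Set N} (hF : F.Finite) (hne : ∃ e, B e)
    (hB : ∀ e, B e → ∃ e', B e' ∧ e < e') : ∃ e, B e ∧ ∀ z ∈ F, ∀ t, B t → z ≤ t → z < e := by
  induction F, hF using Set.Finite.induction_on with
  | empty => simpa using hne
  | @insert z F _ _ ih =>
    obtain ⟨e, he, h⟩ := ih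
    by_cases hz : ∃ t, B t ∧ z ≤ t
    · obtain ⟨t, ht, hzt⟩ := hz
      obtain ⟨t', ht', htt'⟩ := hB t ht
      refine ⟨max e t', by rcases max_choice e t' with h | h <;> rwa [h], ?_⟩
      rintro w (rfl | hw) s hs hws
      · exact lt_max_of_lt_right (hzt.trans_lt htt')
      · exact lt_max_of_lt_left (h w hw s hs hws)
    · refine ⟨e, he, ?_⟩
      rintro w (rfl | hw) s hs hws
      · exact absurd ⟨s, hs, hws⟩ hz
      · exact h w hw s hs hws

theorem DefPt.tail_or (hA : DefPt S A) (hne : ∃ e, B e) (hB : ∀ e, B e → ∃ e', B e' ∧ e < e') :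
    Tail B A ∨ Tail B fun t => ¬ A t := by
  obtain ⟨F, hF, h⟩ := hA.exists_breaks
  obtain ⟨e, he, h'⟩ := exists_upper_of_finite hF hne hB
  have key : ∀ t, B t → e ≤ t → (A e ↔ A t) := fun t ht het =>
    h e t het fun z hz hez hzt => (h' z hz t ht hzt).not_ge hez
  by_cases hAe : A e
  · exact Or.inl ⟨e, he, fun t ht het => (key t ht het.le).1 hAe⟩
  · exact Or.inr ⟨e, he, fun t ht het hAt => hAe ((key t ht het.le).2 hAt)⟩

/-- The predicate holds on an interval with left endpoint `a`. -/
def RGerm (a : N) (A : N → Prop) : Prop := ∃ b, a < b ∧ ∀ t, t < b → a < t → A t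

/-- The predicate holds on an interval with right endpoint `a`. -/
def LGerm (a : N) (A : N → Prop) : Prop := ∃ b, b < a ∧ ∀ t, b < t → t < a → A t

section

instance : DefPt S (fun (a : N) (A : N → Prop) => ∃ b, a < b ∧ ∀ t, t < b → a < t → A t) :=
  DefPt.autoFun

instance : DefPt S (RGerm : N → (N → Prop) → Prop) := inferInstanceAs
  (DefPt S fun (a : N) (A : N → Prop) => ∃ b, a < b ∧ ∀ t, t < b → a < t → A t)

instance : DefPt S (fun (a : N) (A : N → Prop) => ∃ b, b < a ∧ ∀ t, b < t → t < a → A t) :=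
  DefPt.autoFun

instance : DefPt S (LGerm : N → (N → Prop) → Prop) := inferInstanceAs
  (DefPt S fun (a : N) (A : N → Prop) => ∃ b, b < a ∧ ∀ t, b < t → t < a → A t)

end

theorem LGerm.tail {a : N} (h : LGerm a A) : Tail (fun t => t < a) A := by
  obtain ⟨b, hb, h⟩ := h
  exact ⟨b, hb, fun t ht hbt => h t hbt ht⟩

theorem Tail.lGerm {a : N} (h : Tail (fun t => t < a) A) : LGerm a A := by
  obtain ⟨b, hb, h⟩ := h
  exact ⟨b, hb, fun t ht hbt => h t hbt ht⟩

theorem LGerm.mono {a : N} (h : LGerm a A) (hAC : ∀ t, t < a → A t → C t) : LGerm a C :=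
  (h.tail.mono hAC).lGerm

theorem LGerm.and {a : N} (h : LGerm a A) (h' : LGerm a C) : LGerm a fun t => A t ∧ C t :=
  (h.tail.and h'.tail).lGerm

theorem RGerm.mono {a : N} (h : RGerm a A) (hAC : ∀ t, a < t → A t → C t) : RGerm a C :=
  LGerm.mono (N := Nᵒᵈ) h hAC

theorem RGerm.and {a : N} (h : RGerm a A) (h' : RGerm a C) : RGerm a fun t => A t ∧ C t :=
  LGerm.and (N := Nᵒᵈ) h h'

theorem rGerm_lt {a b : N} (h : a < b) : RGerm a fun t => t < b := ⟨b, h, fun _ h _ => h⟩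

theorem RGerm.fat {a : N} (h : RGerm a A) : Fat A := by
  obtain ⟨b, hb, h⟩ := h
  exact ⟨a, b, hb, fun t h1 h2 => h t h2 h1⟩

theorem LGerm.fat {a : N} (h : LGerm a A) : Fat A := by
  obtain ⟨b, hb, h⟩ := h
  exact ⟨b, a, hb, h⟩

variable [DenselyOrdered N]

theorem LGerm.exists_gt {a e : N} (h : LGerm a A) (he : e < a) : ∃ t, e < t ∧ t < a ∧ A t := by
  obtain ⟨t, h1, h2, h3⟩ := h.tail.exists_gt (fun e he => by
    obtain ⟨c, h1, h2⟩ := exists_between he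
    exact ⟨c, h2, h1⟩) he
  exact ⟨t, h2, h1, h3⟩

theorem RGerm.exists_lt {a e : N} (h : RGerm a A) (he : a < e) : ∃ t, a < t ∧ t < e ∧ A t := by
  obtain ⟨t, h1, h2, h3⟩ := LGerm.exists_gt (N := Nᵒᵈ) h he
  exact ⟨t, h2, h1, h3⟩

theorem Fat.infinite (h : Fat A) : {t | A t}.Infinite := by
  obtain ⟨a, b, hab, h⟩ := h
  exact (Ioo_infinite hab).mono fun t ht => h t ht.1 ht.2

theorem not_fat_of_finite (h : {t | A t}.Finite) : ¬ Fat A := fun h' => h'.infinite h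

variable [NoMinOrder N] [NoMaxOrder N]

theorem DefPt.lGerm_or (hA : DefPt S A) (a : N) : LGerm a A ∨ LGerm a fun t => ¬ A t := by
  rcases hA.tail_or (B := fun t => t < a) (exists_lt a) (fun e he => by
    obtain ⟨c, h1, h2⟩ := exists_between he
    exact ⟨c, h2, h1⟩) with h | h
  · exact Or.inl h.lGerm
  · exact Or.inr h.lGerm

theorem DefPt.rGerm_or (hA : DefPt S A) (a : N) : RGerm a A ∨ RGerm a fun t => ¬ A t :=
  DefPt.lGerm_or (S := S.dual) (A := A) ⟨hA.1⟩ a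

theorem LGerm.exists {a : N} (h : LGerm a A) : ∃ t, t < a ∧ A t := by
  obtain ⟨e, he⟩ := exists_lt a
  obtain ⟨t, -, h1, h2⟩ := h.exists_gt he
  exact ⟨t, h1, h2⟩

theorem RGerm.exists {a : N} (h : RGerm a A) : ∃ t, a < t ∧ A t :=
  LGerm.exists (N := Nᵒᵈ) h

theorem DefPt.finite_of_not_fat (hA : DefPt S A) (h : ¬ Fat A) : {t | A t}.Finite := by
  obtain ⟨F, hF, h'⟩ := hA.exists_breaks
  refine hF.subset fun x hx => by_contra fun hxF => h ?_
  obtain ⟨e, he, hlt⟩ := exists_upper_of_finite (B := fun t : N => x < t)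
    (N := Nᵒᵈ) hF (exists_gt x) (fun e (he : x < e) => by
      obtain ⟨c, h1, h2⟩ := exists_between he
      exact ⟨c, h1, h2⟩)
  refine ⟨x, e, he, fun t hxt hte => ?_⟩
  refine (h' x t hxt.le fun z hz hxz hzt => ?_).1 hx
  rcases hxz.eq_or_lt with rfl | hxz
  · exact hxF hz
  · exact lt_asymm (hlt z hz z hxz le_rfl) (hzt.trans_lt hte)

theorem DefPt.fat_of_infinite (hA : DefPt S A) (h : {t | A t}.Infinite) : Fat A :=
  by_contra fun h' => h (hA.finite_of_not_fat h')

theorem DefPt.fat_iff (hA : DefPt S A) : Fat A ↔ {t | A t}.Infinite :=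
  ⟨Fat.infinite, hA.fat_of_infinite⟩

theorem DefPt.not_fat_iff (hA : DefPt S A) : ¬ Fat A ↔ {t | A t}.Finite :=
  ⟨hA.finite_of_not_fat, not_fat_of_finite⟩

theorem Fat.or (hB : DefPt S B) (hC : DefPt S C) (h : Fat A) (hor : ∀ t, A t → B t ∨ C t) :
    Fat B ∨ Fat C := by
  by_contra! hn
  refine h.infinite (((hB.finite_of_not_fat hn.1).union (hC.finite_of_not_fat hn.2)).subset ?_)
  exact fun t ht => hor t ht

variable [Nonempty N]

theorem DefPt.isLUB_lub (hA : DefPt S A) (hne : ∃ a, A a) (hb : ∃ b, ∀ a, A a → a ≤ b) :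
    IsLUB {x | A x} (lub A) := by
  suffices h : ∃ c, IsLUB {x | A x} c by
    obtain ⟨c, hc⟩ := h
    rwa [lub_eq hc]
  by_cases hmax : ∃ m, A m ∧ ∀ a, A a → a ≤ m
  · obtain ⟨m, hm, h⟩ := hmax
    exact ⟨m, fun a ha => h a ha, fun c hc => hc hm⟩
  push Not at hmax
  obtain ⟨F, hF, h⟩ := hA.exists_breaks
  obtain ⟨e₀, he₀, hlt⟩ := exists_upper_of_finite hF hne hmax
  obtain ⟨e, he, he₀e⟩ := hmax e₀ he₀
  have hub : ∀ z ∈ F, e ≤ z → ∀ a, A a → a ≤ z := fun z hz hez a ha =>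
    le_of_not_gt fun hza => (hlt z hz a ha hza.le).not_ge (he₀e.le.trans hez)
  have hFe : (F ∩ Ici e).Nonempty := by
    by_contra hempty
    obtain ⟨b, hb⟩ := hb
    obtain ⟨b', hbb'⟩ := exists_gt (max b e)
    refine (hb b' ?_).not_gt ((le_max_left _ _).trans_lt hbb')
    refine (h e b' ((le_max_right _ _).trans hbb'.le) fun z hz hez _ => ?_).1 he
    exact hempty ⟨z, hz, hez⟩
  obtain ⟨f, ⟨hfF, hef⟩, hmin⟩ := exists_min_image (F ∩ Ici e) id (hF.inter_of_left _) hFe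
  refine ⟨f, fun a ha => hub f hfF hef a ha, fun c hc => ?_⟩
  by_contra! hcf
  have hec : e ≤ c := hc he
  obtain ⟨d, hcd, hdf⟩ := exists_between hcf
  refine hcd.not_ge (hc ((h e d (hec.trans hcd.le) fun z hz hez hzd => ?_).1 he))
  exact (hmin z ⟨hz, hez⟩).not_gt (hzd.trans_lt hdf)

theorem DefPt.isGLB_glb (hA : DefPt S A) (hne : ∃ a, A a) (hb : ∃ b, ∀ a, A a → b ≤ a) :
    IsGLB {x | A x} (glb A) := by
  obtain ⟨c, hc⟩ : ∃ c : N, IsGLB {x | A x} c :=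
    ⟨_, DefPt.isLUB_lub (S := S.dual) (A := A) ⟨hA.1⟩ hne hb⟩
  rwa [glb_eq hc]

theorem glb_mem_of_finite (hA : {x | A x}.Finite) (hne : ∃ a, A a) :
    A (glb A) ∧ ∀ a, A a → glb A ≤ a := by
  obtain ⟨m, hm, h⟩ := exists_min_image {x | A x} id hA hne
  have e : glb A = m := glb_eq_of_least hm h
  rw [e]
  exact ⟨hm, h⟩

end OneVariable

section Monotonicity

variable {N : Type u} [LinearOrder N] [DenselyOrdered N] [NoMinOrder N] [NoMaxOrder N] [Nonempty N]
  {S : Struc N} {A B C : N → Prop}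

theorem le_and_le_of_Ioo {p q a b : N} (hab : a < b) (h : ∀ t, a < t → t < b → p < t ∧ t < q) :
    p ≤ a ∧ b ≤ q := by
  constructor
  · refine le_of_forall_gt_imp_ge_of_dense fun t hat => ?_
    obtain ⟨s, h1, h2⟩ := exists_between (lt_min hat hab)
    exact ((h s h1 (h2.trans_le (min_le_right _ _))).1.trans (h2.trans_le (min_le_left _ _))).le
  · refine le_of_forall_lt_imp_le_of_dense fun t hat => ?_
    obtain ⟨s, h1, h2⟩ := exists_between (max_lt hat hab)
    exact (((le_max_left _ _).trans_lt h1).trans (h s ((le_max_right _ _).trans_lt h1) h2).2).le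

theorem exists_Ioo_or (hB : DefPt S B) (hC : DefPt S C) {p q : N} (hpq : p < q)
    (h : ∀ t, p < t → t < q → B t ∨ C t) :
    ∃ a b, p ≤ a ∧ a < b ∧ b ≤ q ∧
      ((∀ t, a < t → t < b → B t) ∨ ∀ t, a < t → t < b → C t) := by
  have h1 : DefPt S fun t => (p < t ∧ t < q) ∧ B t := DefPt.autoFun
  have h2 : DefPt S fun t => (p < t ∧ t < q) ∧ C t := DefPt.autoFun
  rcases Fat.or (A := fun t => p < t ∧ t < q) h1 h2 ⟨p, q, hpq, fun t h h' => ⟨h, h'⟩⟩ (by grind)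
    with ⟨a, b, hab, h⟩ | ⟨a, b, hab, h⟩
  · obtain ⟨h3, h4⟩ := le_and_le_of_Ioo hab fun t h5 h6 => (h t h5 h6).1
    exact ⟨a, b, h3, hab, h4, Or.inl fun t h5 h6 => (h t h5 h6).2⟩
  · obtain ⟨h3, h4⟩ := le_and_le_of_Ioo hab fun t h5 h6 => (h t h5 h6).1
    exact ⟨a, b, h3, hab, h4, Or.inr fun t h5 h6 => (h t h5 h6).2⟩

theorem exists_uniform_aux {D : N → N → Prop} (hD : DefPt S D) {p q : N} (hpq : p < q)
    (hDpq : ∀ x y, D x y → p < x ∧ x < q ∧ x < y)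
    (hdown : ∀ x y y', D x y → x < y' → y' < y → D x y')
    (hup : ∀ x y, D x y → RGerm y (D x))
    (hex : ∀ x, p < x → x < q → ∃ y, D x y)
    (hfin : ∀ y, {x | D x y}.Finite) : False := by
  let m : N → N := fun y => glb fun x => D x y
  have hm : DefPt S m := by unfold m; exact DefPt.autoFun
  let Y : N → N → Prop := fun v y => (∃ x, D x y) ∧ m y = v
  have hY : DefPt S Y := by unfold Y; exact DefPt.autoFun
  have hmin : ∀ y, (∃ x, D x y) → D (m y) y ∧ ∀ x, D x y → m y ≤ x :=
    fun y hy => glb_mem_of_finite (hfin y) hy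
  have hYD : ∀ v y, Y v y → D v y ∧ ∀ x, D x y → v ≤ x := by
    rintro v y ⟨h1, rfl⟩
    exact hmin y h1
  have hpersist : ∀ v y, Y v y → RGerm y (Y v) := by
    intro v y hvy
    obtain ⟨h1, h2⟩ := hYD v y hvy
    refine (hup v y h1).mono fun y' hyy' hv => ?_
    obtain ⟨h3, h4⟩ := hmin y' ⟨v, hv⟩
    have h5 := h4 v hv
    refine ⟨⟨v, hv⟩, le_antisymm h5 ?_⟩
    exact h2 _ (hdown _ _ _ h3 (h5.trans_lt (hDpq _ _ h1).2.2) hyy')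
  let M : N → Prop := fun v => ∃ y, Y v y
  have hM : DefPt S M := by unfold M; exact DefPt.autoFun
  have hMinf : ¬ {v | M v}.Finite := by
    intro hMf
    obtain ⟨r, hpr, hr⟩ : ∃ r, p < r ∧ ∀ v, M v → r ≤ v := by
      by_cases hne : ∃ v, M v
      · obtain ⟨h1, h2⟩ := glb_mem_of_finite hMf hne
        obtain ⟨y, hy⟩ := h1
        exact ⟨_, (hDpq _ _ (hYD _ _ hy).1).1, h2⟩
      · exact ⟨q, hpq, fun v hv => absurd ⟨v, hv⟩ hne⟩
    obtain ⟨x, h1, h2⟩ := exists_between (lt_min hpr hpq)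
    obtain ⟨y, hy⟩ := hex x h1 (h2.trans_le (min_le_right _ _))
    have h3 := hr (m y) ⟨y, ⟨x, hy⟩, rfl⟩
    exact ((h2.trans_le (min_le_left _ _)).trans_le h3).not_ge ((hmin y ⟨x, hy⟩).2 x hy)
  let V₁ : N → Prop := fun v => RGerm v (Y v)
  have hV₁ : DefPt S V₁ := by unfold V₁; exact DefPt.autoFun
  have hV₁fat : ¬ Fat V₁ := by
    rintro ⟨a, b, hab, h⟩
    obtain ⟨v, h1, h2⟩ := exists_between hab
    obtain ⟨v', hv', hvv⟩ := ((h v h1 h2).and (rGerm_lt h2))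
    obtain ⟨w, h3, h4⟩ := exists_between (lt_min hv' h2)
    have h5 := h w (h1.trans h3) (h4.trans_le (min_le_right _ _))
    obtain ⟨y, h6, h7, h8⟩ := RGerm.exists_lt h5 (h4.trans_le (min_le_left _ _))
    have h9 := (hvv y h7 (h3.trans h6)).1
    exact h3.ne (h9.2.symm.trans h8.2)
  let D' : N → Prop := fun y => (∃ x, D x y) ∧ ∀ y', m y < y' → y' < y → ¬ Y (m y) y'
  have hD' : DefPt S D' := by unfold D'; exact DefPt.autoFun
  have hD'fat : ¬ Fat D' := by
    rintro ⟨a, b, hab, h⟩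
    obtain ⟨y, h1, h2⟩ := exists_between hab
    have hy : Y (m y) y := ⟨(h y h1 h2).1, rfl⟩
    obtain ⟨y', h3, h4, h5⟩ := (hpersist _ _ hy).exists_lt h2
    obtain ⟨h6, h7⟩ := h y' (h1.trans h3) h4
    refine h7 y ?_ h3 (h5.2 ▸ hy)
    rw [h5.2]
    exact (hDpq _ _ (hYD _ _ hy).1).2.2
  refine hMinf ((((hV₁.finite_of_not_fat hV₁fat).union
    ((hD'.finite_of_not_fat hD'fat).image m))).subset ?_)
  rintro v ⟨y, hvy⟩
  have hYv : DefPt S (Y v) := DefPt.auto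
  have hlt : ∀ y, Y v y → v < y := fun y hy => (hDpq _ _ (hYD _ _ hy).1).2.2
  have hglb : IsGLB {y | Y v y} (glb (Y v)) :=
    hYv.isGLB_glb ⟨y, hvy⟩ ⟨v, fun y hy => (hlt y hy).le⟩
  generalize glb (Y v) = y₀ at hglb
  have hnear : ∀ b, y₀ < b → ∃ y, y₀ ≤ y ∧ y < b ∧ Y v y := by
    intro b hb
    by_contra! hcon
    exact hb.not_ge (hglb.2 fun y hy => le_of_not_gt fun hyb => hcon y (hglb.1 hy) hyb hy)
  rcases (hglb.2 fun y hy => (hlt y hy).le : v ≤ y₀).eq_or_lt with rfl | hv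
  · left
    rcases hYv.rGerm_or v with h | ⟨b, hb, h⟩
    · exact h
    · obtain ⟨y, h1, h2, h3⟩ := hnear b hb
      exact absurd h3 (h y h2 (hlt y h3))
  · right
    by_cases hy₀ : Y v y₀
    · refine ⟨y₀, ⟨⟨v, (hYD _ _ hy₀).1⟩, fun y' _ h2 h3 => ?_⟩, hy₀.2⟩
      rw [hy₀.2] at h3
      exact h2.not_ge (hglb.1 h3)
    · exfalso
      have h1 : D v y₀ := by
        rcases (hglb.1 hvy).eq_or_lt with rfl | h
        · exact absurd hvy hy₀
        · exact hdown _ _ _ (hYD _ _ hvy).1 hv h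
      have h2 : Y (m y₀) y₀ := ⟨⟨v, h1⟩, rfl⟩
      obtain ⟨b, hb, h3⟩ := hpersist _ _ h2
      obtain ⟨y, h4, h5, h6⟩ := hnear b hb
      rcases h4.eq_or_lt with rfl | h4
      · exact hy₀ h6
      · exact hy₀ ⟨⟨v, h1⟩, (h3 y h5 h4).2.symm.trans h6.2⟩

/-- A definable property of pairs `x < y` which holds for `y` close to `x`, for each `x` in an
interval, holds for all pairs in some subinterval. -/
theorem exists_uniform {A : N → N → Prop} (hA : DefPt S A) {p q : N} (hpq : p < q)
    (hdown : ∀ x y y', A x y → x < y' → y' < y → A x y')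
    (hex : ∀ x, p < x → x < q → ∃ y, x < y ∧ A x y) :
    ∃ a b, p ≤ a ∧ a < b ∧ b ≤ q ∧ ∀ x y, a < x → x < y → y < b → A x y := by
  let D : N → N → Prop := fun x y => p < x ∧ x < q ∧ x < y ∧ ∃ y', y < y' ∧ A x y'
  have hD : DefPt S D := by unfold D; exact DefPt.autoFun
  by_contra hcon
  refine exists_uniform_aux hD hpq (fun x y h => ⟨h.1, h.2.1, h.2.2.1⟩) ?_ ?_ ?_ fun y => ?_
  · rintro x y y' ⟨h1, h2, h3, y'', h4, h5⟩ h6 h7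
    exact ⟨h1, h2, h6, y'', h7.trans h4, h5⟩
  · rintro x y ⟨h1, h2, h3, y'', h4, h5⟩
    exact ⟨y'', h4, fun t h6 h7 => ⟨h1, h2, h3.trans h7, y'', h6, h5⟩⟩
  · intro x h1 h2
    obtain ⟨y, h3, h4⟩ := hex x h1 h2
    obtain ⟨z, h5, h6⟩ := exists_between h3
    exact ⟨z, h1, h2, h5, y, h6, h4⟩
  · have hDy : DefPt S fun x => D x y := DefPt.auto
    refine hDy.finite_of_not_fat ?_
    rintro ⟨a, b, hab, h⟩
    obtain ⟨h1, h2⟩ := le_and_le_of_Ioo hab fun t h3 h4 => ⟨(h t h3 h4).1, (h t h3 h4).2.1⟩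
    refine hcon ⟨a, b, h1, hab, h2, fun x z h3 h4 h5 => ?_⟩
    obtain ⟨-, -, -, y', h6, h7⟩ := h x h3 (h4.trans h5)
    exact hdown _ _ _ h7 h4 ((h z (h3.trans h4) h5).2.2.1.trans h6)

/-- A definable function is constant or strictly monotone on a subinterval of any interval. -/
theorem exists_monotone {f : N → N} (hf : DefPt S f) {p q : N} (hpq : p < q) :
    ∃ a b, p ≤ a ∧ a < b ∧ b ≤ q ∧ ((∀ x y, a < x → x < y → y < b → f x = f y) ∨
      (∀ x y, a < x → x < y → y < b → f x < f y) ∨ ∀ x y, a < x → x < y → y < b → f y < f x) := by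
  have key : ∀ R : N → N → Prop, DefPt S R → ∀ p q : N, p < q →
      (∀ x, p < x → x < q → RGerm x fun t => R (f x) (f t)) →
      ∃ a b, p ≤ a ∧ a < b ∧ b ≤ q ∧ ∀ x y, a < x → x < y → y < b → R (f x) (f y) := by
    intro R hR p q hpq h
    have hA : DefPt S fun x y => ∀ t, x < t → t < y → R (f x) (f t) := DefPt.autoFun
    obtain ⟨a, b, h1, h2, h3, h4⟩ := exists_uniform hA hpq
      (fun x y y' h1 h2 h3 t h4 h5 => h1 t h4 (h5.trans h3)) fun x h1 h2 => by
        obtain ⟨y, h3, h4⟩ := h x h1 h2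
        exact ⟨y, h3, fun t h5 h6 => h4 t h6 h5⟩
    refine ⟨a, b, h1, h2, h3, fun x y h5 h6 h7 => ?_⟩
    obtain ⟨z, h8, h9⟩ := exists_between h7
    exact h4 x z h5 (h6.trans h8) h9 y h6 h8
  have h1 : DefPt S fun x => RGerm x fun t => f x = f t := DefPt.autoFun
  have h2 : DefPt S fun x => RGerm x fun t => f x < f t := DefPt.autoFun
  have h3 : DefPt S fun x => RGerm x fun t => f t < f x := DefPt.autoFun
  have h4 : DefPt S fun x => (RGerm x fun t => f x < f t) ∨ RGerm x fun t => f t < f x :=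
    DefPt.autoFun
  have htri : ∀ x, (RGerm x fun t => f x = f t) ∨ (RGerm x fun t => f x < f t) ∨
      RGerm x fun t => f t < f x := by
    intro x
    have g1 : DefPt S fun t => f x = f t := DefPt.autoFun
    have g2 : DefPt S fun t => f x < f t := DefPt.autoFun
    rcases g1.rGerm_or x with h | h
    · exact Or.inl h
    rcases g2.rGerm_or x with h' | h'
    · exact Or.inr (Or.inl h')
    · refine Or.inr (Or.inr ((h.and h').mono fun t _ ht => ?_))
      exact lt_of_le_of_ne (not_lt.1 ht.2) (Ne.symm ht.1)
  obtain ⟨a, b, e1, e2, e3, h | h⟩ := exists_Ioo_or h1 h4 hpq fun t _ _ => htri t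
  · obtain ⟨a', b', i1, i2, i3, h⟩ := key (fun u v => u = v) DefPt.autoFun a b e2 h
    exact ⟨a', b', e1.trans i1, i2, i3.trans e3, Or.inl h⟩
  obtain ⟨a', b', i1, i2, i3, h | h⟩ := exists_Ioo_or h2 h3 e2 h
  · obtain ⟨a'', b'', j1, j2, j3, h⟩ := key (fun u v => u < v) DefPt.autoFun a' b' i2 h
    exact ⟨a'', b'', (e1.trans i1).trans j1, j2, j3.trans (i3.trans e3), Or.inr (Or.inl h)⟩
  · obtain ⟨a'', b'', j1, j2, j3, h⟩ := key (fun u v => v < u) DefPt.autoFun a' b' i2 h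
    exact ⟨a'', b'', (e1.trans i1).trans j1, j2, j3.trans (i3.trans e3), Or.inr (Or.inr h)⟩

/-- Continuity for the order topology, stated in terms of the order only. -/
def ContAt (f : N → N) (t : N) : Prop :=
  ∀ v w, v < f t → f t < w → ∃ a b, a < t ∧ t < b ∧ ∀ s, a < s → s < b → v < f s ∧ f s < w

instance : DefPt S (fun (f : N → N) (t : N) =>
    ∀ v w, v < f t → f t < w → ∃ a b, a < t ∧ t < b ∧ ∀ s, a < s → s < b → v < f s ∧ f s < w) :=
  DefPt.autoFun

instance : DefPt S (ContAt : (N → N) → N → Prop) := inferInstanceAs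
  (DefPt S fun (f : N → N) (t : N) =>
    ∀ v w, v < f t → f t < w → ∃ a b, a < t ∧ t < b ∧ ∀ s, a < s → s < b → v < f s ∧ f s < w)

theorem fat_image {f : N → N} (hf : DefPt S f) {a b : N} (hab : a < b)
    (hinj : ∀ x y, a < x → x < y → y < b → f x ≠ f y) :
    Fat fun v => ∃ x, (a < x ∧ x < b) ∧ f x = v := by
  have h : DefPt S fun v => ∃ x, (a < x ∧ x < b) ∧ f x = v := DefPt.autoFun
  refine h.fat_of_infinite ((Ioo_infinite hab).image (f := f) ?_)
  intro x hx y hy hxy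
  rcases lt_trichotomy x y with h | h | h
  · exact absurd hxy (hinj x y hx.1 h hy.2)
  · exact h
  · exact absurd hxy.symm (hinj y x hy.1 h hx.2)

theorem finite_not_contAt {f : N → N} (hf : DefPt S f) : {t | ¬ ContAt f t}.Finite := by
  have h : DefPt S fun t => ¬ ContAt f t := DefPt.autoFun
  refine h.finite_of_not_fat ?_
  rintro ⟨p, q, hpq, h⟩
  obtain ⟨a, b, h1, h2, h3, hc | hc | hc⟩ := exists_monotone hf hpq
  · obtain ⟨t, h4, h5⟩ := exists_between h2
    refine h t (h1.trans_lt h4) (h5.trans_le h3) fun v w hv hw => ⟨a, b, h4, h5, fun s h6 h7 => ?_⟩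
    have e : f s = f t := by
      rcases lt_trichotomy s t with h | h | h
      · exact hc s t h6 h h5
      · rw [h]
      · exact (hc t s h4 h h7).symm
    rw [e]
    exact ⟨hv, hw⟩
  · obtain ⟨c, d, hcd, him⟩ := fat_image hf h2 fun x y h4 h5 h6 => (hc x y h4 h5 h6).ne
    obtain ⟨u, h4, h5⟩ := exists_between hcd
    obtain ⟨t, ⟨h6, h7⟩, rfl⟩ := him u h4 h5
    refine h t (h1.trans_lt h6) (h7.trans_le h3) fun v w hv hw => ?_
    obtain ⟨v', i1, i2⟩ := exists_between (max_lt hv h4)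
    obtain ⟨w', j1, j2⟩ := exists_between (lt_min hw h5)
    obtain ⟨r, ⟨k1, k2⟩, rfl⟩ := him v' ((le_max_right _ _).trans_lt i1) (i2.trans h5)
    obtain ⟨s, ⟨l1, l2⟩, rfl⟩ := him w' (h4.trans j1) (j2.trans_le (min_le_right _ _))
    have hmono : ∀ x y, a < x → x < b → a < y → y < b → f x < f y → x < y := by
      intro x y g1 g2 g3 g4 g5
      by_contra! g6
      rcases g6.eq_or_lt with rfl | g6
      · exact lt_irrefl _ g5
      · exact lt_asymm g5 (hc y x g3 g6 g2)
    refine ⟨r, s, hmono _ _ k1 k2 h6 h7 i2, hmono _ _ h6 h7 l1 l2 j1, fun z m1 m2 => ?_⟩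
    exact ⟨((le_max_left _ _).trans_lt i1).trans (hc _ _ k1 m1 (m2.trans l2)),
      (hc _ _ (k1.trans m1) m2 l2).trans (j2.trans_le (min_le_left _ _))⟩
  · obtain ⟨c, d, hcd, him⟩ := fat_image hf h2 fun x y h4 h5 h6 => (hc x y h4 h5 h6).ne'
    obtain ⟨u, h4, h5⟩ := exists_between hcd
    obtain ⟨t, ⟨h6, h7⟩, rfl⟩ := him u h4 h5
    refine h t (h1.trans_lt h6) (h7.trans_le h3) fun v w hv hw => ?_
    obtain ⟨v', i1, i2⟩ := exists_between (max_lt hv h4)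
    obtain ⟨w', j1, j2⟩ := exists_between (lt_min hw h5)
    obtain ⟨r, ⟨k1, k2⟩, rfl⟩ := him v' ((le_max_right _ _).trans_lt i1) (i2.trans h5)
    obtain ⟨s, ⟨l1, l2⟩, rfl⟩ := him w' (h4.trans j1) (j2.trans_le (min_le_right _ _))
    have hmono : ∀ x y, a < x → x < b → a < y → y < b → f x < f y → y < x := by
      intro x y g1 g2 g3 g4 g5
      by_contra! g6
      rcases g6.eq_or_lt with rfl | g6
      · exact lt_irrefl _ g5
      · exact lt_asymm g5 (hc x y g1 g6 g4)
    refine ⟨s, r, hmono _ _ h6 h7 l1 l2 j1, hmono _ _ k1 k2 h6 h7 i2, fun z m1 m2 => ?_⟩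
    exact ⟨((le_max_left _ _).trans_lt i1).trans (hc _ _ (l1.trans m1) m2 k2),
      (hc _ _ l1 m1 (m2.trans k2)).trans (j2.trans_le (min_le_left _ _))⟩

end Monotonicity

section FiniteFibers

variable {N : Type u} [LinearOrder N] [DenselyOrdered N] [NoMinOrder N] [NoMaxOrder N] [Nonempty N]
  {S : Struc N}

/-- Induction along a closed interval, for definable predicates. -/
theorem DefPt.interval_induction {A : N → Prop} (hA : DefPt S A) {x y : N}
    (hstep : ∀ z, x ≤ z → z < y → (∀ t, x ≤ t → t ≤ z → A t) → RGerm z A)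
    (hlim : ∀ z, x ≤ z → z ≤ y → (∀ t, x ≤ t → t < z → A t) → A z) :
    ∀ t, x ≤ t → t ≤ y → A t := by
  by_contra! hc
  have hB : DefPt S fun t => x ≤ t ∧ t ≤ y ∧ ¬ A t := DefPt.autoFun
  have hw := hB.isGLB_glb hc ⟨x, fun a h => h.1⟩
  generalize glb (fun t => x ≤ t ∧ t ≤ y ∧ ¬ A t) = w at hw
  obtain ⟨t, hxt, hty, hAt⟩ := hc
  have hwt : w ≤ t := hw.1 ⟨hxt, hty, hAt⟩
  have hxw : x ≤ w := hw.2 fun b hb => hb.1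
  have hlt : ∀ s, x ≤ s → s < w → A s := fun s h1 h2 => by
    by_contra hs
    exact h2.not_ge (hw.1 ⟨h1, h2.le.trans (hwt.trans hty), hs⟩)
  have hAw := hlim w hxw (hwt.trans hty) hlt
  have hwt' : w < t := lt_of_le_of_ne hwt (by rintro rfl; exact hAt hAw)
  obtain ⟨b, hwb, hb⟩ := hstep w hxw (hwt'.trans_le hty) fun s h1 h2 => by
    rcases h2.eq_or_lt with rfl | h2
    · exact hAw
    · exact hlt s h1 h2
  refine hwb.not_ge (hw.2 fun c hc => ?_)
  by_contra! hcb
  rcases (hw.1 hc : w ≤ c).eq_or_lt with rfl | h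
  · exact hc.2.2 hAw
  · exact hc.2.2 (hb c hcb h)

theorem not_forall_fat_right {A : N → N → Prop} (hA : DefPt S A)
    (hfin : ∀ x, {e | A x e}.Finite) {n₀ a b : N} (hab : a < b)
    (h : ∀ e, a < e → e < b → Fat fun x => n₀ < x ∧ A x e) : False := by
  have hW : ∀ e, DefPt S fun x => n₀ ≤ x ∧ RGerm x fun t => A t e := fun e => DefPt.autoFun
  set p : N → N := fun e => glb fun x => n₀ ≤ x ∧ RGerm x fun t => A t e with hp
  have hpd : DefPt S p := by rw [hp]; exact DefPt.autoFun
  have hpe : ∀ e, a < e → e < b → RGerm (p e) fun t => A t e := by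
    intro e h1 h2
    have hne : ∃ x, n₀ ≤ x ∧ RGerm x fun t => A t e := by
      obtain ⟨c, d, hcd, h3⟩ := h e h1 h2
      obtain ⟨x, hx1, hx2⟩ := exists_between hcd
      exact ⟨x, (h3 x hx1 hx2).1.le, d, hx2, fun t h4 h5 => (h3 t (hx1.trans h5) h4).2⟩
    have hg := (hW e).isGLB_glb hne ⟨n₀, fun x hx => hx.1⟩
    have hAe : DefPt S fun t => A t e := DefPt.autoFun
    rcases hAe.rGerm_or (p e) with h3 | ⟨c, hc, h3⟩
    · exact h3
    · obtain ⟨x, hx, hxc⟩ := (isGLB_lt_iff hg).1 hc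
      obtain ⟨t, h4, h5, h6⟩ := hx.2.exists_lt hxc
      exact absurd h6 (h3 t h5 ((hg.1 hx).trans_lt h4))
  obtain ⟨x₁, x₂, hax, hx, hxb, hm⟩ := exists_monotone hpd hab
  have hinj : ¬ ∀ x y, x₁ < x → x < y → y < x₂ → p x ≠ p y := by
    intro hinj
    obtain ⟨c, d, hcd, him⟩ := fat_image hpd hx hinj
    have hA' : DefPt S fun u y => ∀ e, x₁ < e → e < x₂ → p e = u → ∀ t, u < t → t < y → A t e :=
      DefPt.autoFun
    obtain ⟨a', b', hca, hab', hbd, hu⟩ := exists_uniform hA' hcd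
      (fun u y y' h1 _ h2 e h3 h4 h5 t h6 h7 => h1 e h3 h4 h5 t h6 (h7.trans h2))
      (fun u h1 h2 => by
        obtain ⟨e, ⟨h3, h4⟩, rfl⟩ := him u h1 h2
        obtain ⟨y, hy, h5⟩ := hpe e (hax.trans_lt h3) (h4.trans_le hxb)
        refine ⟨y, hy, fun e' h3' h4' he t h6 h7 => ?_⟩
        rcases lt_trichotomy e e' with hlt | rfl | hlt
        · exact absurd he.symm (hinj _ _ h3 hlt h4')
        · exact h5 t h7 h6
        · exact absurd he (hinj _ _ h3' hlt h4))
    obtain ⟨y, hy1, hy2⟩ := exists_between hab'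
    obtain ⟨w, hw1, hw2⟩ := exists_between hy1
    refine (Ioo_infinite hw1) (((hfin w).image p).subset ?_)
    intro v hv
    obtain ⟨e, ⟨h3, h4⟩, rfl⟩ := him v (hca.trans_lt hv.1)
      (hv.2.trans (hw2.trans (hy2.trans_le hbd)))
    exact ⟨e, hu _ y hv.1 (hv.2.trans hw2) hy2 e h3 h4 rfl w hv.2 hw2, rfl⟩
  rcases hm with hconst | hm | hm
  · obtain ⟨e₀, h1, h2⟩ := exists_between hx
    obtain ⟨n₁, hn⟩ := exists_gt (p e₀)
    have hP : ∀ e, x₁ < e → e < x₂ → RGerm (p e₀) fun t => A t e := by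
      intro e h3 h4
      have := hpe e (hax.trans_lt h3) (h4.trans_le hxb)
      rcases lt_trichotomy e e₀ with hlt | rfl | hlt
      · rwa [hconst _ _ h3 hlt h2] at this
      · exact this
      · rwa [← hconst _ _ h1 hlt h4] at this
    generalize p e₀ = P at hn hP
    have hG : ∀ e, DefPt S fun x => x ≤ n₁ ∧ ∀ t, P < t → t < x → A t e := fun e => DefPt.autoFun
    set g : N → N := fun e => lub fun x => x ≤ n₁ ∧ ∀ t, P < t → t < x → A t e with hg
    have hgd : DefPt S g := by rw [hg]; exact DefPt.autoFun
    have hlub : ∀ e, IsLUB {x | x ≤ n₁ ∧ ∀ t, P < t → t < x → A t e} (g e) := fun e =>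
      (hG e).isLUB_lub ⟨P, hn.le, fun t h h' => absurd h' h.not_gt⟩ ⟨n₁, fun x hx => hx.1⟩
    have hgP : ∀ e, x₁ < e → e < x₂ → P < g e := by
      intro e h3 h4
      obtain ⟨y, hy, h5⟩ := hP e h3 h4
      exact (lt_min hn hy).trans_le ((hlub e).1
        ⟨min_le_left _ _, fun t h6 h7 => h5 t (h7.trans_le (min_le_right _ _)) h6⟩)
    have hgA : ∀ e t, P < t → t < g e → A t e := by
      intro e t h3 h4
      obtain ⟨x, hx, hxt⟩ := (lt_isLUB_iff (hlub e)).1 h4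
      exact hx.2 t h3 hxt
    obtain ⟨e₃, e₄, h3, h34, h4, hm⟩ := exists_monotone hgd hx
    obtain ⟨e₅, h5, h5'⟩ := exists_between h34
    obtain ⟨e₆, h6, h6'⟩ := exists_between h5'
    have hge : ∀ e, e₅ < e → e < e₆ → min (g e₅) (g e₆) ≤ g e := by
      intro e h7 h8
      rcases hm with hm | hm | hm
      · exact (min_le_left _ _).trans (hm _ _ h5 h7 (h8.trans h6')).le
      · exact (min_le_left _ _).trans (hm _ _ h5 h7 (h8.trans h6')).le
      · exact (min_le_right _ _).trans (hm _ _ (h5.trans h7) h8 h6').le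
    obtain ⟨w, hw1, hw2⟩ := exists_between (lt_min (hgP e₅ (h3.trans_lt h5) (h5'.trans_le h4))
      (hgP e₆ (h3.trans_lt (h5.trans h6)) (h6'.trans_le h4)))
    refine (Ioo_infinite h6) ((hfin w).subset fun e he => ?_)
    exact hgA e w hw1 (hw2.trans_le (hge e he.1 he.2))
  · exact hinj fun x y h1 h2 h3 => (hm x y h1 h2 h3).ne
  · exact hinj fun x y h1 h2 h3 => (hm x y h1 h2 h3).ne'

/-- A definable relation with finite fibers over one coordinate has finite fibers over almost all
values of the other coordinate. -/
theorem not_fat_fat {A : N → N → Prop} (hA : DefPt S A) (hfin : ∀ x, {e | A x e}.Finite) :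
    ¬ Fat fun e => Fat fun x => A x e := by
  rintro ⟨a, b, hab, h⟩
  obtain ⟨n₀⟩ := ‹Nonempty N›
  have h1 : DefPt S fun e => Fat fun x => n₀ < x ∧ A x e := DefPt.autoFun
  have h2 : DefPt S fun e => Fat fun x => x < n₀ ∧ A x e := DefPt.autoFun
  obtain ⟨a', b', ha, hab', hb, h3 | h3⟩ := exists_Ioo_or h1 h2 hab (fun t h4 h5 => by
    by_contra! hc
    have h6 : DefPt S fun x => n₀ < x ∧ A x t := DefPt.autoFun
    have h7 : DefPt S fun x => x < n₀ ∧ A x t := DefPt.autoFun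
    refine (h t h4 h5).infinite ((((h6.not_fat_iff.1 hc.1).union
      (h7.not_fat_iff.1 hc.2)).insert n₀).subset fun x hx => ?_)
    rcases lt_trichotomy n₀ x with h8 | h8 | h8
    · exact Or.inr (Or.inl ⟨h8, hx⟩)
    · exact Or.inl h8.symm
    · exact Or.inr (Or.inr ⟨h8, hx⟩))
  · exact not_forall_fat_right hA hfin hab' h3
  · refine not_forall_fat_right (S := S.dual) (N := Nᵒᵈ) (A := A) ⟨hA.1⟩ hfin (n₀ := n₀) hab'
      fun e h4 h5 => ?_
    obtain ⟨c, d, hcd, h6⟩ := h3 e h5 h4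
    exact ⟨d, c, hcd, fun t h7 h8 => h6 t h8 h7⟩

theorem finite_setOf_infinite {A : N → N → Prop} (hA : DefPt S A)
    (hfin : ∀ x, {e | A x e}.Finite) : {e | {x | A x e}.Infinite}.Finite := by
  have h1 : DefPt S fun e => Fat fun x => A x e := DefPt.autoFun
  refine (h1.finite_of_not_fat (not_fat_fat hA hfin)).subset fun e he => ?_
  have h2 : DefPt S fun x => A x e := DefPt.autoFun
  exact h2.fat_of_infinite he

end FiniteFibers

section StrongChoice

variable {N : Type u} [LinearOrder N]

/-- A definable predicate has strong choice if elements can be chosen definably in its nonempty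
definable subsets, uniformly in families. -/
def SC (S : Struc N) {Γ : Type*} [DefSpace S Γ] (Z : Γ → Prop) : Prop :=
  DefPt S Z ∧ ∃ t : (Γ → Prop) → Γ, DefPt S t ∧
    ∀ A, DefPt S A → (∃ g, A g ∧ Z g) → A (t A) ∧ Z (t A)

variable {S : Struc N} {Γ Δ : Type*} [DefSpace S Γ] [DefSpace S Δ]

theorem SC.mono {Z Z' : Γ → Prop} (h : SC S Z) (hZ' : DefPt S Z') (hZZ' : ∀ g, Z' g → Z g) :
    SC S Z' := by
  obtain ⟨hZ, t, ht, h⟩ := h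
  refine ⟨hZ', fun A => t fun g => A g ∧ Z' g, DefPt.autoFun, ?_⟩
  rintro A hA ⟨g, hg, hg'⟩
  exact (h (fun g => A g ∧ Z' g) DefPt.autoFun ⟨g, ⟨hg, hg'⟩, hZZ' g hg'⟩).1

theorem SC.congr {Z Z' : Γ → Prop} (h : SC S Z) (hZZ' : ∀ g, Z g ↔ Z' g) : SC S Z' := by
  rwa [show Z' = Z from funext fun g => propext (hZZ' g).symm]

theorem SC.image [Rep S Γ] [DefPt S (Eq : Δ → Δ → Prop)] {Z : Γ → Prop} (h : SC S Z) {φ : Γ → Δ}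
    (hφ : DefPt S φ) : SC S fun d => ∃ g, Z g ∧ φ g = d := by
  obtain ⟨hZ, t, ht, h⟩ := h
  refine ⟨DefPt.autoFun, fun A => φ (t fun g => A (φ g)), DefPt.autoFun, ?_⟩
  rintro A hA ⟨d, hd, g, hg, rfl⟩
  have := h (fun g => A (φ g)) DefPt.autoFun ⟨g, hd, hg⟩
  exact ⟨this.1, _, this.2, rfl⟩

theorem SC.prod [Rep S Γ] [Rep S Δ] {X : Γ → Prop} {Y : Δ → Prop} (hX : SC S X) (hY : SC S Y) :
    SC S fun z : Γ × Δ => X z.1 ∧ Y z.2 := by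
  obtain ⟨hX, s, hs, hsX⟩ := hX
  obtain ⟨hY, t, ht, htY⟩ := hY
  refine ⟨DefPt.autoFun, fun A => (s fun a => ∃ b, A (a, b) ∧ Y b,
    t fun b => A (s (fun a => ∃ b, A (a, b) ∧ Y b), b)), DefPt.autoFun, ?_⟩
  rintro A hA ⟨⟨a, b⟩, hab, ha, hb⟩
  have h1 := hsX (fun a => ∃ b, A (a, b) ∧ Y b) DefPt.autoFun ⟨a, ⟨b, hab, hb⟩, ha⟩
  beta_reduce
  generalize s (fun a => ∃ b, A (a, b) ∧ Y b) = a' at h1 ⊢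
  obtain ⟨⟨b', h2, h3⟩, h4⟩ := h1
  have ha' := Rep.defPt (S := S) a'
  have h5 := htY (fun b => A (a', b)) DefPt.autoFun ⟨b', h2, h3⟩
  exact ⟨h5.1, h4, h5.2⟩

theorem SC.unit : SC S fun _ : Unit => True :=
  ⟨DefPt.autoFun, fun _ => (), DefPt.autoFun, fun _ _ ⟨_, h⟩ => h⟩

theorem SC.pi : ∀ {m : ℕ} {X : Fin m → N → Prop}, (∀ i, SC S (X i)) →
    SC S fun x : Fin m → N => ∀ i, X i (x i)
  | 0, X, _ => by
    refine ⟨⟨fun n => ?_⟩, fun _ => Fin.elim0, DefPt.autoFun, ?_⟩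
    · intro k g a hg ha
      exact Def.all_fin S fun i => i.elim0
    · rintro A - ⟨g, hg, hg'⟩
      rw [Subsingleton.elim Fin.elim0 g]
      exact ⟨hg, hg'⟩
  | m + 1, X, h => by
    have hc : DefPt S fun z : N × (Fin m → N) => (Fin.cons z.1 z.2 : Fin (m + 1) → N) := by
      refine DefMap.pt <| DefMap.tuple fun i => ?_
      refine Fin.cases ?_ (fun i => ?_) i
      · exact DefMap.id.fst
      · exact DefMap.id.snd.coord i
    refine (((h 0).prod (SC.pi fun i => h i.succ)).image hc).congr fun x => ?_
    constructor
    · rintro ⟨z, ⟨h0, hs⟩, rfl⟩ i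
      refine Fin.cases ?_ (fun i => ?_) i
      · exact h0
      · exact hs i
    · exact fun hx => ⟨(x 0, Fin.tail x), ⟨hx 0, fun i => hx i.succ⟩, Fin.cons_self_tail x⟩

theorem SC.of_dual {Z : N → Prop} (h : SC S.dual (Γ := Nᵒᵈ) Z) : SC S Z := by
  obtain ⟨hZ, t, ht, h⟩ := h
  exact ⟨⟨hZ.1⟩, t, ⟨ht.1⟩, fun A hA => h A ⟨hA.1⟩⟩

variable [Nonempty N]

theorem SC.pi_or {m : ℕ} {Z Z' : (Fin m → N) → Prop} (h : SC S Z) (h' : SC S Z') :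
    SC S fun g => Z g ∨ Z' g := by
  obtain ⟨hZ, t, ht, h⟩ := h
  obtain ⟨hZ', t', ht', h'⟩ := h'
  refine ⟨DefPt.autoFun, fun A i => pick (∃ g, A g ∧ Z g) (t A i) (t' A i), DefPt.autoFun, ?_⟩
  rintro A hA ⟨g, hg, hg'⟩
  by_cases hp : ∃ g, A g ∧ Z g
  · simp only [pick_pos hp]
    have := h A hA hp
    exact ⟨this.1, Or.inl this.2⟩
  · simp only [pick_neg hp]
    have := h' A hA ⟨g, hg, hg'.resolve_left fun h => hp ⟨g, hg, h⟩⟩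
    exact ⟨this.1, Or.inr this.2⟩

theorem SC.or {Z Z' : N → Prop} (h : SC S Z) (h' : SC S Z') : SC S fun g => Z g ∨ Z' g := by
  obtain ⟨hZ, t, ht, h⟩ := h
  obtain ⟨hZ', t', ht', h'⟩ := h'
  refine ⟨DefPt.autoFun, fun A => pick (∃ g, A g ∧ Z g) (t A) (t' A), DefPt.autoFun, ?_⟩
  rintro A hA ⟨g, hg, hg'⟩
  by_cases hp : ∃ g, A g ∧ Z g
  · simp only [pick_pos hp]
    have := h A hA hp
    exact ⟨this.1, Or.inl this.2⟩
  · simp only [pick_neg hp]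
    have := h' A hA ⟨g, hg, hg'.resolve_left fun h => hp ⟨g, hg, h⟩⟩
    exact ⟨this.1, Or.inr this.2⟩

theorem SC.empty [Rep S Γ] [Nonempty Γ] : SC S fun _ : Γ => False := by
  have h := Rep.defPt (S := S) (Classical.arbitrary Γ)
  exact ⟨DefPt.autoFun, fun _ => Classical.arbitrary Γ, DefPt.autoFun, fun _ _ ⟨_, h⟩ => h.2.elim⟩

theorem SC.iUnion {F : Set N} (hF : F.Finite) {Z : N → N → Prop} (h : ∀ b ∈ F, SC S (Z b)) :
    SC S fun e => ∃ b ∈ F, Z b e := by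
  induction F, hF using Set.Finite.induction_on with
  | empty => exact SC.empty.congr (by simp)
  | @insert a F _ _ ih =>
    exact ((h a (mem_insert _ _)).or (ih fun b hb => h b (mem_insert_of_mem _ hb))).congr
      (by simp)

theorem SC.pi_iUnion {m n : ℕ} {Z : Fin n → (Fin m → N) → Prop} (h : ∀ a, SC S (Z a)) :
    SC S fun e => ∃ a, Z a e := by
  induction n with
  | zero => exact SC.empty.congr (by simp)
  | succ n ih =>
    exact ((h 0).pi_or (ih fun a => h a.succ)).congr fun e => by rw [Fin.exists_fin_succ]

variable [DenselyOrdered N] [NoMinOrder N] [NoMaxOrder N]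

theorem SC.finite_rel [Rep S Γ] {W : Γ → Prop} (h : SC S W) {R : Γ → N → Prop} (hR : DefPt S R)
    (hfin : ∀ g, W g → {e | R g e}.Finite) : SC S fun e => ∃ g, W g ∧ R g e := by
  obtain ⟨hW, t, ht, h⟩ := h
  refine ⟨DefPt.autoFun, fun A => glb fun e => A e ∧ R (t fun g => ∃ e, A e ∧ R g e) e,
    DefPt.autoFun, ?_⟩
  rintro A hA ⟨e, he, g, hg, hge⟩
  have h1 := h (fun g => ∃ e, A e ∧ R g e) DefPt.autoFun ⟨g, ⟨e, he, hge⟩, hg⟩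
  beta_reduce
  generalize (t fun g => ∃ e, A e ∧ R g e) = g' at h1 ⊢
  have h2 := (glb_mem_of_finite ((hfin g' h1.2).subset fun e h => h.2) h1.1).1
  exact ⟨h2.1, g', h1.2, h2.2⟩

theorem SC.of_finite {F : N → Prop} (hF : DefPt S F) (hfin : {e | F e}.Finite) : SC S F :=
  (SC.unit.finite_rel (R := fun _ => F) DefPt.autoFun fun _ _ => hfin).congr
    (by simp)

theorem SC.of_interval_choice {B : N → Prop} (hB : DefPt S B) {a₀ : N} (ha₀ : ∀ e, B e → a₀ ≤ e)
    (hconv : ∀ x y, B y → a₀ ≤ x → x ≤ y → B x) {c : N → N → N} (hc : DefPt S c)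
    (hcB : ∀ a b, B a → B b → a < b → a < c a b ∧ c a b < b) {φ : N → N} (hφ : DefPt S φ)
    (hφB : ∀ x, B x → (∃ z, B z ∧ x < z) → B (φ x) ∧ x < φ x) : SC S B := by
  have ht : DefPt S fun (A : N → Prop) (i : N) =>
      pick (A i) i (c i (lub fun y => y ≤ φ i ∧ ∀ t, i < t → t < y → A t)) := DefPt.autoFun
  refine ⟨hB, fun A => (fun (A : N → Prop) (i : N) =>
    pick (A i) i (c i (lub fun y => y ≤ φ i ∧ ∀ t, i < t → t < y → A t))) A
      (glb fun e => A e ∧ B e), DefPt.autoFun, ?_⟩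
  rintro A hA ⟨e, he, heB⟩
  have hAB : DefPt S fun e => A e ∧ B e := DefPt.autoFun
  have hi := hAB.isGLB_glb ⟨e, he, heB⟩ ⟨a₀, fun e he => ha₀ e he.2⟩
  beta_reduce
  generalize (glb fun e => A e ∧ B e) = i at hi ⊢
  have hie : i ≤ e := hi.1 ⟨he, heB⟩
  have hiB : B i := hconv i e heB (hi.2 fun e he => ha₀ e he.2) hie
  by_cases hAi : A i
  · simp only [pick_pos hAi]
    exact ⟨hAi, hiB⟩
  simp only [pick_neg hAi]
  have hie' : i < e := hie.lt_of_ne (by rintro rfl; exact hAi he)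
  obtain ⟨hφ1, hφ2⟩ := hφB i hiB ⟨e, heB, hie'⟩
  have hA' : DefPt S fun y => y ≤ φ i ∧ ∀ t, i < t → t < y → A t := DefPt.autoFun
  have hj := hA'.isLUB_lub ⟨i, hφ2.le, fun t h h' => absurd h' h.not_gt⟩ ⟨φ i, fun y h => h.1⟩
  generalize (lub fun y => y ≤ φ i ∧ ∀ t, i < t → t < y → A t) = j at hj ⊢
  have hgerm : RGerm i A := by
    rcases hA.rGerm_or i with h | h
    · exact h
    · obtain ⟨b, hb, h⟩ := h
      obtain ⟨x, hx, hxb⟩ := (isGLB_lt_iff hi).1 hb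
      exact absurd hx.1 (h x hxb ((hi.1 hx : i ≤ x).lt_of_ne (by rintro rfl; exact hAi hx.1)))
  obtain ⟨b, hb, h⟩ := hgerm
  have hij : i < j := (lt_min hb hφ2).trans_le (hj.1 ⟨min_le_right _ _, fun t h1 h2 =>
    h t (h2.trans_le (min_le_left _ _)) h1⟩)
  have hjφ : j ≤ φ i := hj.2 fun y h => h.1
  have hjB : B j := hconv j _ hφ1 ((ha₀ i hiB).trans hij.le) hjφ
  obtain ⟨h1, h2⟩ := hcB i j hiB hjB hij
  obtain ⟨y, hy, hcy⟩ := (lt_isLUB_iff hj).1 h2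
  exact ⟨hy.2 _ h1 hcy, hconv _ j hjB ((ha₀ i hiB).trans h1.le) h2.le⟩

theorem SC.Icc {x y : N} {c : N → N → N} (hc : DefPt S c)
    (h : ∀ a b, x ≤ a → a < b → b ≤ y → a < c a b ∧ c a b < b) :
    SC S fun e => x ≤ e ∧ e ≤ y :=
  SC.of_interval_choice (a₀ := x) (φ := fun _ => y) DefPt.autoFun (fun _ h => h.1)
    (fun _ _ h h1 h2 => ⟨h1, h2.trans h.2⟩) hc (fun a b ha hb hab => h a b ha.1 hab hb.2)
    DefPt.autoFun (fun _ hz ⟨_, h1, h2⟩ => ⟨⟨(hz.1.trans h2.le).trans h1.2, le_rfl⟩,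
      h2.trans_le h1.2⟩)

end StrongChoice

section Nested

variable {N : Type u} [LinearOrder N] [DenselyOrdered N] [NoMinOrder N] [NoMaxOrder N] [Nonempty N]

/-- The map `c` chooses a point in every open interval with endpoints in `[x, y]`. -/
def Valid (c : N → N → N) (x y : N) : Prop :=
  ∀ a b, x ≤ a → a < b → b ≤ y → a < c a b ∧ c a b < b

section

variable {S : Struc N}

instance : DefPt S (fun (c : N → N → N) (x y : N) =>
    ∀ a b, x ≤ a → a < b → b ≤ y → a < c a b ∧ c a b < b) := DefPt.autoFun

instance : DefPt S (Valid : (N → N → N) → N → N → Prop) :=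
  inferInstanceAs (DefPt S fun (c : N → N → N) (x y : N) =>
    ∀ a b, x ≤ a → a < b → b ≤ y → a < c a b ∧ c a b < b)

end

theorem Valid.mono {c : N → N → N} {x y x' y' : N} (h : Valid c x y) (hx : x ≤ x') (hy : y' ≤ y) :
    Valid c x' y' :=
  fun a b h1 h2 h3 => h a b (hx.trans h1) h2 (h3.trans hy)

/-- A definable convex set with least element `a₀` and without largest element, all of whose
proper initial segments have strong choice. -/
structure Ray (S : Struc N) (B : N → Prop) (a₀ : N) : Prop where
  defPt : DefPt S B
  base : B a₀
  base_le : ∀ e, B e → a₀ ≤ e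
  conv : ∀ x y, B y → a₀ ≤ x → x ≤ y → B x
  noMax : ∀ e, B e → ∃ e', B e' ∧ e < e'
  sc : ∀ e, B e → SC S fun t => a₀ ≤ t ∧ t ≤ e

variable {S : Struc N} {B : N → Prop} {a₀ : N}

theorem Ray.const_or_finite (hB : Ray S B a₀) {f : N → N} (hf : DefPt S f) :
    (∃ v, Tail B fun e => f e = v) ∨ ∃ e, B e ∧ ∀ v, {t | B t ∧ e < t ∧ f t = v}.Finite := by
  have hBd := hB.defPt
  have hK : DefPt S fun e => RGerm e fun t => f t = f e := DefPt.autoFun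
  rcases hK.tail_or ⟨a₀, hB.base⟩ hB.noMax with ⟨e₀, he₀, h⟩ | ⟨e₀, he₀, h⟩
  · left
    have hD : DefPt S fun e => B e ∧ e₀ < e ∧ LGerm e fun t => ¬ f t = f e := DefPt.autoFun
    have hDfin := hD.finite_of_not_fat (by
      rintro ⟨a, b, hab, h1⟩
      obtain ⟨t, h2, h3⟩ := exists_between hab
      have h4 := h1 t h2 h3
      obtain ⟨s, hs, h5⟩ := h t h4.1 h4.2.1
      obtain ⟨s', h6, h7⟩ := exists_between (lt_min hs h3)
      have h8 := h1 s' (h2.trans h6) (h7.trans_le (min_le_right _ _))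
      obtain ⟨r, h9, h10, h11⟩ := h8.2.2.exists_gt h6
      have h12 := h7.trans_le (min_le_left _ _)
      exact h11 ((h5 r (h10.trans h12) h9).trans (h5 s' h12 h6).symm))
    obtain ⟨e₁, he₁, h1⟩ := exists_upper_of_finite hDfin ⟨a₀, hB.base⟩ hB.noMax
    obtain ⟨e₂, he₂, h2⟩ := hB.noMax (max e₀ e₁) (by rcases max_cases e₀ e₁ with h | h <;> simp [*])
    refine ⟨f e₂, e₂, he₂, fun t ht het => ?_⟩
    have hA : DefPt S fun t => f t = f e₂ := DefPt.autoFun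
    have hBz : ∀ z, e₂ ≤ z → z ≤ t → B z := fun z h3 h4 =>
      hB.conv z t ht ((hB.base_le _ he₂).trans h3) h4
    refine hA.interval_induction (x := e₂) (y := t) ?_ ?_ t het.le le_rfl
    · intro z h3 h4 h5
      have : RGerm z fun t => f t = f z := h z (hBz z h3 h4.le) ((le_max_left _ _).trans_lt (h2.trans_le h3))
      rwa [h5 z h3 le_rfl] at this
    · intro z h3 h4 h5
      rcases h3.eq_or_lt with rfl | h3
      · rfl
      have hz : DefPt S fun t => f t = f z := DefPt.autoFun
      rcases hz.lGerm_or z with h6 | h6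
      · obtain ⟨s, h7, h8, h9⟩ := h6.exists_gt h3
        rw [← h9, h5 s h7.le h8]
      · have hez := h2.trans h3
        exact absurd (h1 z ⟨hBz z h3.le h4, (le_max_left _ _).trans_lt hez, h6⟩ z
          (hBz z h3.le h4) le_rfl) ((le_max_right _ _).trans_lt hez).not_gt
  · right
    refine ⟨e₀, he₀, fun v => ?_⟩
    have hA : DefPt S fun t => B t ∧ e₀ < t ∧ f t = v := DefPt.autoFun
    refine hA.finite_of_not_fat ?_
    rintro ⟨a, b, hab, h1⟩
    obtain ⟨t, h2, h3⟩ := exists_between hab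
    have h4 := h1 t h2 h3
    exact h t h4.1 h4.2.1 ⟨b, h3, fun s h5 h6 =>
      (h1 s (h2.trans h6) h5).2.2.trans h4.2.2.symm⟩

theorem Ray.const_or_sc (hB : Ray S B a₀) {f : N → N} (hf : DefPt S f) {X : N → Prop}
    (hX : SC S X) (hfX : Tail B fun e => X (f e)) : (∃ v, Tail B fun e => f e = v) ∨ SC S B := by
  have hBd := hB.defPt
  refine (hB.const_or_finite hf).imp_right ?_
  rintro ⟨e₀, he₀, h⟩
  obtain ⟨e₁, he₁, h1⟩ := hfX
  have hm : B (max e₀ e₁) := by rcases max_cases e₀ e₁ with h | h <;> simp [*]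
  have hR : DefPt S fun v t => B t ∧ e₀ < t ∧ f t = v := DefPt.autoFun
  refine ((hX.finite_rel hR fun v _ => h v).or (hB.sc _ hm)).mono hB.defPt fun t ht => ?_
  rcases le_or_gt t (max e₀ e₁) with h2 | h2
  · exact Or.inr ⟨hB.base_le t ht, h2⟩
  · exact Or.inl ⟨f t, h1 t ht ((le_max_right _ _).trans_lt h2), ht,
      (le_max_left _ _).trans_lt h2, rfl⟩

/-- A family of choice functions for the intervals inside `B`, parametrized by `Θ`, gives strong
choice on `B`. -/
def Ray.Reducible (S : Struc N) (B : N → Prop) (a₀ : N) (Θ : Type*) [DefSpace S Θ] : Prop :=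
  ∀ (Z : N → Θ → Prop) (c : N → Θ → N → N → N), DefPt S Z → DefPt S c →
    (∀ e', B e' → Tail B fun e => (∃ z, Z e z) ∧ ∀ z, Z e z → Valid (c e z) a₀ e') → SC S B

theorem Ray.reducible_unit (hB : Ray S B a₀) : Ray.Reducible S B a₀ Unit := by
  intro Z c hZ hc h
  have hBd := hB.defPt
  by_contra hSC
  have hne : ∃ e, B e := ⟨a₀, hB.base⟩
  have hv : ∀ e', B e' → Tail B fun e => Valid (c e ()) a₀ e' := fun e' he' =>
    (h e' he').mono fun e _ h => by
      obtain ⟨z, hz⟩ := h.1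
      exact h.2 z hz
  have hlim : ∀ x b, a₀ ≤ x → x < b → B b → ∃ v, (x < v ∧ v < b) ∧
      Tail B fun e => c e () x b = v := by
    intro x b h1 h2 h3
    have hf : DefPt S fun e => c e () x b := DefPt.autoFun
    obtain ⟨v, h4⟩ := (hB.const_or_sc hf (hB.sc b h3) ((hv b h3).mono fun e _ h =>
      ⟨h1.trans (h x b h1 h2 le_rfl).1.le, (h x b h1 h2 le_rfl).2.le⟩)).resolve_right hSC
    obtain ⟨e, he, h5, rfl⟩ := ((hv b h3).and h4).exists hB.noMax
    exact ⟨_, h5 x b h1 h2 le_rfl, h4⟩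
  have huniq : ∀ (f : N → N) v, (Tail B fun e => f e = v) →
      (the fun v => Tail B fun e => f e = v) = v := fun f v hv => the_eq fun b => by
    constructor
    · intro h1
      obtain ⟨e, he, h2, h3⟩ := (hv.and h1).exists hB.noMax
      exact h3.symm.trans h2
    · rintro rfl
      exact hv
  set d : N → N → N := fun x b => the fun v => Tail B fun e => c e () x b = v with hd
  have hdd : DefPt S d := by rw [hd]; exact DefPt.autoFun
  have hdB : ∀ x b, a₀ ≤ x → x < b → B b → x < d x b ∧ d x b < b := by
    intro x b h1 h2 h3
    obtain ⟨v, h4, h5⟩ := hlim x b h1 h2 h3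
    rw [hd]
    simp only [huniq _ v h5]
    exact h4
  have hfin : ∀ φ : N → N, DefPt S φ → (∀ x, B x → B (φ x) ∧ x < φ x) → False :=
    fun φ hφ h1 => hSC (SC.of_interval_choice hB.defPt hB.base_le hB.conv hdd
      (fun a b h2 h3 h4 => hdB a b (hB.base_le a h2) h4 h3) hφ fun x hx _ => h1 x hx)
  by_cases hconst : ∀ x, B x → ∃ v, Tail B fun b => d x b = v
  · refine hfin (fun x => the fun v => Tail B fun b => d x b = v) DefPt.autoFun fun x hx => ?_
    obtain ⟨v, h1⟩ := hconst x hx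
    rw [huniq _ v h1]
    obtain ⟨b, hb, h2, rfl⟩ := ((tail_gt hx).and h1).exists hB.noMax
    have h3 := hdB x b (hB.base_le x hx) h2 hb
    exact ⟨hB.conv _ b hb ((hB.base_le x hx).trans h3.1.le) h3.2.le, h3.1⟩
  · push Not at hconst
    obtain ⟨x₀, hx₀, hnc⟩ := hconst
    have hvd : DefPt S (d x₀) := DefPt.autoFun
    have hunb : ∀ u, B u → Tail B fun b => u < d x₀ b := by
      intro u hu
      have h1 : DefPt S fun b => u < d x₀ b := DefPt.autoFun
      refine (h1.tail_or hne hB.noMax).resolve_right fun h2 => ?_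
      obtain ⟨v, h3⟩ := (hB.const_or_sc hvd (hB.sc u hu) ((h2.and (tail_gt hx₀)).mono
        fun b hb h => ⟨(hB.base_le _ hx₀).trans (hdB x₀ b (hB.base_le _ hx₀) h.2 hb).1.le,
          not_lt.1 h.1⟩)).resolve_right hSC
      exact hnc v h3
    obtain ⟨y₁, hy₁, h1⟩ := exists_upper_of_finite (finite_not_contAt hvd) hne hB.noMax
    obtain ⟨y₂, hy₂, h2⟩ := hB.noMax (max x₀ y₁) (by
      rcases max_cases x₀ y₁ with h | h <;> simp [*])
    obtain ⟨y₃, hy₃, h3⟩ := hB.noMax y₂ hy₂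
    refine hfin (fun y => pick (y₂ < y) (lub fun b => B b ∧ d x₀ b ≤ y) y₃) DefPt.autoFun
      fun y hy => ?_
    by_cases hyy : y₂ < y
    · rw [pick_pos hyy]
      have hx₀y := (le_max_left _ _).trans_lt (h2.trans hyy)
      have hdy := hdB x₀ y (hB.base_le _ hx₀) hx₀y hy
      have hA : DefPt S fun b => B b ∧ d x₀ b ≤ y := DefPt.autoFun
      obtain ⟨e, he, h4⟩ := hunb y hy
      have h5 := hA.isLUB_lub ⟨y, hy, hdy.2.le⟩ ⟨e, fun b hb => by
        by_contra! h6
        exact (h4 b hb.1 h6).not_ge hb.2⟩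
      generalize lub (fun b => B b ∧ d x₀ b ≤ y) = w at h5 ⊢
      have hwe : w ≤ e := h5.2 fun b hb => by
        by_contra! h6
        exact (h4 b hb.1 h6).not_ge hb.2
      have hcont : ContAt (d x₀) y := by
        by_contra h6
        exact (h1 y h6 y hy le_rfl).not_gt ((le_max_right _ _).trans_lt (h2.trans hyy))
      obtain ⟨p, q, hp, hq, h6⟩ := hcont x₀ y hdy.1 hdy.2
      obtain ⟨y', hy', h7⟩ := hB.noMax y hy
      obtain ⟨s, hs, hs'⟩ := exists_between (lt_min hq h7)
      have hsB : B s := hB.conv s y' hy' ((hB.base_le y hy).trans hs.le)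
        (hs'.trans_le (min_le_right _ _)).le
      have hsw : s ≤ w := h5.1 ⟨hsB, (h6 s (hp.trans hs) (hs'.trans_le (min_le_left _ _))).2.le⟩
      exact ⟨hB.conv w e he ((hB.base_le y hy).trans (hs.le.trans hsw)) hwe, hs.trans_le hsw⟩
    · rw [pick_neg hyy]
      exact ⟨hy₃, (not_lt.1 hyy).trans_lt h3⟩

variable {Θ Ξ : Type*} [DefSpace S Θ] [DefSpace S Ξ]

theorem Ray.Reducible.of_surj (h : Ray.Reducible S B a₀ Θ) {f : Θ → Ξ} (hf : DefPt S f)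
    (hsurj : Function.Surjective f) : Ray.Reducible S B a₀ Ξ := by
  intro Z c hZ hc h'
  refine h (fun e z => Z e (f z)) (fun e z => c e (f z)) DefPt.autoFun DefPt.autoFun
    fun e' he' => (h' e' he').mono fun e _ h1 => ⟨?_, fun z => h1.2 (f z)⟩
  obtain ⟨z, hz⟩ := h1.1
  obtain ⟨z, rfl⟩ := hsurj z
  exact ⟨z, hz⟩

theorem Ray.Reducible.prod [Rep S Θ] (hB : Ray S B a₀) (h : Ray.Reducible S B a₀ Θ) :
    Ray.Reducible S B a₀ (Θ × N) := by
  intro Z c hZ hc hv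
  have hBd := hB.defPt
  have hne : ∃ e, B e := ⟨a₀, hB.base⟩
  have hV : DefPt S fun (e : N) (z : Θ) (x b v : N) =>
      (∃ w, Z e (z, w) ∧ c e (z, w) x b = v) ∧ ¬ Fat fun w => Z e (z, w) ∧ c e (z, w) x b = v :=
    DefPt.autoFun
  set V : N → Θ → N → N → N → Prop := fun e z x b v =>
      (∃ w, Z e (z, w) ∧ c e (z, w) x b = v) ∧ ¬ Fat fun w => Z e (z, w) ∧ c e (z, w) x b = v
    with hVdef
  by_cases hA : ∃ x b, a₀ ≤ x ∧ x < b ∧ B b ∧ Tail B fun e => ∃ z v, V e z x b v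
  · obtain ⟨x₀, b₀, hx₀, hxb, hb₀, htail⟩ := hA
    obtain ⟨-, t, ht, htb⟩ := hB.sc b₀ hb₀
    refine h (fun e z => ∃ v, V e z x₀ b₀ v) (fun e z => c e (z, glb fun w =>
      Z e (z, w) ∧ c e (z, w) x₀ b₀ = t fun v => V e z x₀ b₀ v)) DefPt.autoFun DefPt.autoFun ?_
    intro e' he'
    refine (((hv e' he').and htail).and (hv b₀ hb₀)).mono ?_
    rintro e - ⟨⟨⟨-, h1⟩, h2⟩, -, h3⟩
    refine ⟨h2, ?_⟩
    rintro z ⟨v, h4⟩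
    have hz := Rep.defPt (S := S) z
    have h5 := (htb (fun v => V e z x₀ b₀ v) DefPt.autoFun ⟨v, h4, by
      obtain ⟨w, h5, rfl⟩ := h4.1
      have := h3 _ h5 x₀ b₀ hx₀ hxb le_rfl
      exact ⟨hx₀.trans this.1.le, this.2.le⟩⟩).1
    generalize (t fun v => V e z x₀ b₀ v) = v' at h5 ⊢
    have hw : DefPt S fun w => Z e (z, w) ∧ c e (z, w) x₀ b₀ = v' := DefPt.autoFun
    exact h1 _ (glb_mem_of_finite (hw.finite_of_not_fat h5.2) h5.1).1.1
  · push Not at hA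
    have hswap : ∀ e', B e' → SC S B ∨
        Tail B fun e => ¬ ∃ x b, (a₀ ≤ x ∧ x < b ∧ b ≤ e') ∧ ∃ z v, V e z x b v := by
      intro e' he'
      have hbad : DefPt S fun (e x b : N) =>
        (a₀ ≤ x ∧ x < b ∧ b ≤ e') ∧ ∃ z v, V e z x b v := DefPt.autoFun
      have hbad' : DefPt S fun (e : N) =>
        ∃ x b, (a₀ ≤ x ∧ x < b ∧ b ≤ e') ∧ ∃ z v, V e z x b v := DefPt.autoFun
      rcases hbad'.tail_or hne hB.noMax with h1 | h1
      swap
      · exact Or.inr h1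
      left
      by_contra hSC
      obtain ⟨-, t, ht, htb⟩ := (hB.sc e' he').prod (hB.sc e' he')
      set p : N → N × N := fun e => t fun y =>
        (a₀ ≤ y.1 ∧ y.1 < y.2 ∧ y.2 ≤ e') ∧ ∃ z v, V e z y.1 y.2 v with hp
      have hpd : DefPt S p := by rw [hp]; exact DefPt.autoFun
      have h2 : Tail B fun e => ((a₀ ≤ (p e).1 ∧ (p e).1 < (p e).2 ∧ (p e).2 ≤ e') ∧
          ∃ z v, V e z (p e).1 (p e).2 v) := by
        refine h1.mono ?_
        rintro e - ⟨x, b, hxb, hz⟩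
        exact (htb (fun y => (a₀ ≤ y.1 ∧ y.1 < y.2 ∧ y.2 ≤ e') ∧ ∃ z v, V e z y.1 y.2 v)
          DefPt.autoFun ⟨(x, b), ⟨hxb, hz⟩, ⟨hxb.1, hxb.2.1.le.trans hxb.2.2⟩,
            hxb.1.trans hxb.2.1.le, hxb.2.2⟩).1
      have hp1 : DefPt S fun e => (p e).1 := DefPt.autoFun
      have hp2 : DefPt S fun e => (p e).2 := DefPt.autoFun
      obtain ⟨x, hx⟩ := (hB.const_or_sc hp1 (hB.sc e' he') (h2.mono fun e _ h =>
        ⟨h.1.1, h.1.2.1.le.trans h.1.2.2⟩)).resolve_right hSC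
      obtain ⟨b, hb⟩ := (hB.const_or_sc hp2 (hB.sc e' he') (h2.mono fun e _ h =>
        ⟨h.1.1.trans h.1.2.1.le, h.1.2.2⟩)).resolve_right hSC
      have h3 := (h2.and hx).and hb
      obtain ⟨e, -, ⟨⟨⟨h4, h5, h6⟩, -⟩, rfl⟩, rfl⟩ := h3.exists hB.noMax
      refine hA _ _ h4 h5 (hB.conv _ e' he' (h4.trans h5.le) h6) (h3.mono ?_)
      rintro e₂ - ⟨⟨⟨-, h7⟩, h8⟩, h9⟩
      rwa [h8, h9] at h7
    by_contra hSC
    refine hSC (h (fun e z => ∃ w, Z e (z, w))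
      (fun e z x b => glb fun v => ∃ w, Z e (z, w) ∧ c e (z, w) x b = v)
      DefPt.autoFun DefPt.autoFun ?_)
    intro e' he'
    refine ((hv e' he').and ((hswap e' he').resolve_left hSC)).mono ?_
    rintro e - ⟨⟨⟨⟨z, w⟩, h1⟩, h2⟩, h3⟩
    refine ⟨⟨z, w, h1⟩, ?_⟩
    rintro z ⟨w, h4⟩ x b hx hxb hb
    have hz := Rep.defPt (S := S) z
    have hW : DefPt S fun w v => Z e (z, w) ∧ c e (z, w) x b = v := DefPt.autoFun
    have hfin : {v | ∃ w, Z e (z, w) ∧ c e (z, w) x b = v}.Finite := by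
      refine (finite_setOf_infinite hW fun w => (finite_singleton (c e (z, w) x b)).subset
        fun v h => h.2.symm).subset fun v hvw => ?_
      refine Fat.infinite ?_
      by_contra hfat
      exact h3 ⟨x, b, ⟨hx, hxb, hb⟩, z, v, hvw, hfat⟩
    obtain ⟨⟨w', h5, h6⟩, -⟩ := glb_mem_of_finite hfin ⟨_, w, h4, rfl⟩
    beta_reduce
    rw [← h6]
    exact h2 _ h5 x b hx hxb hb

theorem Ray.reducible_pi (hB : Ray S B a₀) : ∀ q : ℕ, Ray.Reducible S B a₀ (Fin q → N)
  | 0 => hB.reducible_unit.of_surj (f := fun _ => Fin.elim0)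
      (DefMap.pt <| DefMap.tuple fun i => i.elim0)
      fun a => ⟨(), Subsingleton.elim _ _⟩
  | q + 1 => by
    refine ((hB.reducible_pi q).prod hB).of_surj
      (f := fun z => (Fin.cons z.2 z.1 : Fin (q + 1) → N)) ?_ fun a =>
        ⟨(Fin.tail a, a 0), Fin.cons_self_tail a⟩
    refine DefMap.pt <| DefMap.tuple fun i => ?_
    refine Fin.cases ?_ (fun i => ?_) i
    · exact DefMap.id.snd
    · exact DefMap.id.fst.coord i

theorem sc_upper {q : ℕ} {c : (Fin q → N) → N → N → N} (hc : DefPt S c) (a₀ : N) :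
    SC S fun e => a₀ ≤ e ∧ ∃ z, Valid (c z) a₀ e := by
  have hIcc : ∀ r, (∃ z, Valid (c z) a₀ r) → SC S fun e => a₀ ≤ e ∧ e ≤ r := by
    rintro r ⟨z, hz⟩
    exact SC.Icc (c := c z) DefPt.autoFun hz
  by_cases hmax : ∀ e, (a₀ ≤ e ∧ ∃ z, Valid (c z) a₀ e) →
      ∃ e', (a₀ ≤ e' ∧ ∃ z, Valid (c z) a₀ e') ∧ e < e'
  · have hB : Ray S (fun e => a₀ ≤ e ∧ ∃ z, Valid (c z) a₀ e) a₀ :=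
      { defPt := DefPt.autoFun
        base := ⟨le_rfl, Classical.arbitrary _, fun a b h1 h2 h3 =>
          absurd (h1.trans_lt h2) h3.not_gt⟩
        base_le := fun e h => h.1
        conv := fun x y ⟨_, z, hz⟩ h1 h2 => ⟨h1, z, hz.mono le_rfl h2⟩
        noMax := hmax
        sc := fun e h => hIcc e h.2 }
    refine hB.reducible_pi q (fun e z => Valid (c z) a₀ e) (fun _ => c) DefPt.autoFun
      DefPt.autoFun fun e' he' => ?_
    refine (tail_gt (B := fun e => a₀ ≤ e ∧ ∃ z, Valid (c z) a₀ e) he').mono fun e he h => ⟨he.2, fun z hz => hz.mono le_rfl h.le⟩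
  · push Not at hmax
    obtain ⟨r, hr, hr'⟩ := hmax
    exact (hIcc r hr.2).mono DefPt.autoFun fun e he => ⟨he.1, hr' e he⟩

theorem sc_near {q : ℕ} {c : (Fin q → N) → N → N → N} (hc : DefPt S c) (a₀ : N) :
    SC S fun e => ∃ z, Valid (c z) (min a₀ e) (max a₀ e) := by
  have hc' : DefPt S fun z a b => c z b a := DefPt.autoFun
  have h2 := SC.of_dual (S := S) (sc_upper (N := Nᵒᵈ) (S := S.dual) (q := q)
    (c := fun z a b => c z b a) ⟨hc'.1⟩ a₀)
  have hV : DefPt S fun e => ∃ z, Valid (c z) (min a₀ e) (max a₀ e) := by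
    have h : DefPt S fun e => ∃ z, (a₀ ≤ e → Valid (c z) a₀ e) ∧ (e ≤ a₀ → Valid (c z) e a₀) :=
      DefPt.autoFun
    convert h using 5 with e z
    rcases le_total a₀ e with h1 | h1
    · simp only [min_eq_left h1, max_eq_right h1, h1, true_imp_iff]
      refine ⟨fun h => ⟨h, fun h2 => ?_⟩, fun h => h.1⟩
      obtain rfl := le_antisymm h1 h2
      exact h
    · simp only [min_eq_right h1, max_eq_left h1, h1, true_imp_iff]
      refine ⟨fun h => ⟨fun h2 => ?_, h⟩, fun h => h.2⟩
      obtain rfl := le_antisymm h1 h2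
      exact h
  refine ((sc_upper hc a₀).or h2).mono hV ?_
  rintro e ⟨z, hz⟩
  rcases le_total a₀ e with h1 | h1
  · rw [min_eq_left h1, max_eq_right h1] at hz
    exact Or.inl ⟨h1, z, hz⟩
  · rw [min_eq_right h1, max_eq_left h1] at hz
    exact Or.inr ⟨h1, z, fun a b h2 h3 h4 => (hz b a h4 h3 h2).symm⟩

end Nested

section Short

variable {N : Type u} [LinearOrder N] [DenselyOrdered N] [NoMinOrder N] [NoMaxOrder N] [Nonempty N]
  {S : Struc N}

/-- A relation is short if there is a definable family of choice functions for open intervals one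
of which works on the hull of any two related points. -/
def Short (S : Struc N) (E : N → N → Prop) : Prop :=
  ∃ (q : ℕ) (c : (Fin q → N) → N → N → N), DefPt S c ∧
    ∀ x y, E x y → ∃ z, Valid (c z) (min x y) (max x y)

variable {E E' : N → N → Prop}

theorem Short.mono (h : Short S E) (hE : ∀ x y, E' x y → E x y) : Short S E' := by
  obtain ⟨q, c, hc, h⟩ := h
  exact ⟨q, c, hc, fun x y hxy => h x y (hE x y hxy)⟩

theorem Short.of_rep {Θ : Type*} [DefSpace S Θ] [Rep S Θ] {c : Θ → N → N → N} (hc : DefPt S c)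
    (h : ∀ x y, E x y → ∃ z, Valid (c z) (min x y) (max x y)) : Short S E := by
  obtain ⟨q, f, hf, sf⟩ := Rep.exists_surj (S := S) (Γ := Θ)
  have hf' : DefPt S f := DefMap.pt fun n p hp => DefSpace.plot_comp hf hp
  refine ⟨q, fun z => c (f z), DefPt.autoFun, fun x y hxy => ?_⟩
  obtain ⟨z, hz⟩ := h x y hxy
  obtain ⟨z, rfl⟩ := sf z
  exact ⟨z, hz⟩

theorem Valid.of_min_max_self (c : N → N → N) (x : N) : Valid c (min x x) (max x x) := by
  intro a b h1 h2 h3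
  rw [min_self] at h1
  rw [max_self] at h3
  exact absurd (h1.trans_lt h2) h3.not_gt

theorem Short.eq : Short S fun x y : N => x = y :=
  Short.of_rep (Θ := Unit) (c := fun _ a _ => a) DefPt.autoFun (by
    rintro x _ rfl
    exact ⟨(), Valid.of_min_max_self _ x⟩)

theorem Valid.self {c : N → N → N} {a b : N} (h : Valid c a b) (hab : a < b) :
    a < c a b ∧ c a b < b := h a b le_rfl hab le_rfl

theorem Short.or (h : Short S E) (h' : Short S E') : Short S fun x y => E x y ∨ E' x y := by
  obtain ⟨q, c, hc, h⟩ := h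
  obtain ⟨q', c', hc', h'⟩ := h'
  refine Short.of_rep (Θ := (Fin q → N) × (Fin q' → N))
    (c := fun z a b => pick (Valid (c z.1) a b) (c z.1 a b) (c' z.2 a b)) DefPt.autoFun ?_
  rintro x y (hxy | hxy)
  · obtain ⟨z, hz⟩ := h x y hxy
    refine ⟨(z, Classical.arbitrary _), fun a b h1 h2 h3 => ?_⟩
    beta_reduce
    rw [pick_pos (hz.mono h1 h3)]
    exact hz a b h1 h2 h3
  · obtain ⟨z, hz⟩ := h' x y hxy
    refine ⟨(Classical.arbitrary _, z), fun a b h1 h2 h3 => ?_⟩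
    beta_reduce
    by_cases hv : Valid (c (Classical.arbitrary _)) a b
    · rw [pick_pos hv]
      exact hv.self h2
    · rw [pick_neg hv]
      exact hz a b h1 h2 h3

theorem Short.comp (h : Short S E) (h' : Short S E') :
    Short S fun x w => ∃ y, E x y ∧ E' y w := by
  obtain ⟨q, c, hc, h⟩ := h
  obtain ⟨q', c', hc', h'⟩ := h'
  refine Short.of_rep (Θ := N × (Fin q → N) × (Fin q' → N))
    (c := fun z a b => pick (Valid (c z.2.1) a b) (c z.2.1 a b)
      (pick (Valid (c' z.2.2) a b) (c' z.2.2 a b) z.1)) DefPt.autoFun ?_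
  rintro x w ⟨y, h1, h2⟩
  obtain ⟨z, hz⟩ := h x y h1
  obtain ⟨z', hz'⟩ := h' y w h2
  refine ⟨(y, z, z'), fun a b ha hab hb => ?_⟩
  beta_reduce
  by_cases hv : Valid (c z) a b
  · rw [pick_pos hv]
    exact hv.self hab
  rw [pick_neg hv]
  by_cases hv' : Valid (c' z') a b
  · rw [pick_pos hv']
    exact hv'.self hab
  rw [pick_neg hv']
  constructor <;> by_contra! hy
  · rcases le_max_iff.1 hb with h3 | h3
    · exact hv (hz.mono ((min_le_right _ _).trans hy) (h3.trans (le_max_left _ _)))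
    · exact hv' (hz'.mono ((min_le_left _ _).trans hy) (h3.trans (le_max_right _ _)))
  · rcases min_le_iff.1 ha with h3 | h3
    · exact hv (hz.mono ((min_le_left _ _).trans h3) (hy.trans (le_max_right _ _)))
    · exact hv' (hz'.mono ((min_le_right _ _).trans h3) (hy.trans (le_max_left _ _)))

/-- The predicate holds close to `a`, on the side of `a` specified by the order `r`. -/
def Germ (r : N → N → Prop) (a : N) (A : N → Prop) : Prop :=
  ∃ b, r a b ∧ ∀ t, r t b → r a t → A t

instance : DefPt S (fun (r : N → N → Prop) (a : N) (A : N → Prop) =>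
    ∃ b, r a b ∧ ∀ t, r t b → r a t → A t) := DefPt.autoFun

instance : DefPt S (Germ : (N → N → Prop) → N → (N → Prop) → Prop) :=
  inferInstanceAs (DefPt S fun (r : N → N → Prop) (a : N) (A : N → Prop) =>
    ∃ b, r a b ∧ ∀ t, r t b → r a t → A t)

/-- The relation `r` is `<` or `>`, and `far y t A` is a point between `y` and `t` such that `A`
holds between `y` and this point, if there is one. -/
structure Side (S : Struc N) (r : N → N → Prop) (far : N → N → (N → Prop) → N) : Prop where
  lt_or_gt : r = (fun a b => a < b) ∨ r = fun a b => b < a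
  defPt_far : DefPt S far
  far_spec : ∀ {y t : N} {A : N → Prop}, DefPt S A → r y t → Germ r y A →
    r y (far y t A) ∧ ¬ r t (far y t A) ∧ ∀ t', r y t' → r t' (far y t A) → A t'

theorem side_lt : Side S (fun a b => a < b)
    (fun y t A => lub fun s => (y < s ∧ s ≤ t) ∧ ∀ t', t' < s → y < t' → A t') where
  lt_or_gt := Or.inl rfl
  defPt_far := DefPt.autoFun
  far_spec := by
    rintro y t A hA hyt ⟨b, hyb, hb⟩
    have hD : DefPt S fun s => (y < s ∧ s ≤ t) ∧ ∀ t', t' < s → y < t' → A t' := DefPt.autoFun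
    have hmem : (y < min b t ∧ min b t ≤ t) ∧ ∀ t', t' < min b t → y < t' → A t' :=
      ⟨⟨lt_min hyb hyt, min_le_right _ _⟩, fun t' h => hb t' (h.trans_le (min_le_left _ _))⟩
    have hl := hD.isLUB_lub ⟨_, hmem⟩ ⟨t, fun s hs => hs.1.2⟩
    generalize (lub fun s => (y < s ∧ s ≤ t) ∧ ∀ t', t' < s → y < t' → A t') = w at hl ⊢
    refine ⟨hmem.1.1.trans_le (hl.1 hmem), (hl.2 fun s hs => hs.1.2 : w ≤ t).not_gt, ?_⟩
    intro t' h1 h2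
    obtain ⟨s, hs, hs'⟩ := (lt_isLUB_iff hl).1 h2
    exact hs.2 t' hs' h1

theorem side_gt : Side S (fun a b => b < a)
    (fun y t A => glb fun s => (s < y ∧ t ≤ s) ∧ ∀ t', s < t' → t' < y → A t') where
  lt_or_gt := Or.inr rfl
  defPt_far := DefPt.autoFun
  far_spec := by
    rintro y t A hA hyt ⟨b, hyb, hb⟩
    have hD : DefPt S fun s => (s < y ∧ t ≤ s) ∧ ∀ t', s < t' → t' < y → A t' := DefPt.autoFun
    have hmem : (max b t < y ∧ t ≤ max b t) ∧ ∀ t', max b t < t' → t' < y → A t' :=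
      ⟨⟨max_lt hyb hyt, le_max_right _ _⟩, fun t' h => hb t' ((le_max_left _ _).trans_lt h)⟩
    have hl := hD.isGLB_glb ⟨_, hmem⟩ ⟨t, fun s hs => hs.1.2⟩
    generalize (glb fun s => (s < y ∧ t ≤ s) ∧ ∀ t', s < t' → t' < y → A t') = w at hl ⊢
    refine ⟨(hl.1 hmem : w ≤ _).trans_lt hmem.1.1, (hl.2 fun s hs => hs.1.2 : t ≤ w).not_gt, ?_⟩
    intro t' h1 h2
    obtain ⟨s, hs, hs'⟩ := (isGLB_lt_iff hl).1 h2
    exact hs.2 t' hs' h1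

variable {r : N → N → Prop} {far : N → N → (N → Prop) → N} {A A' : N → Prop} {y : N}

theorem Side.defPt (h : Side S r far) : DefPt S r := by
  rcases h.lt_or_gt with rfl | rfl <;> infer_instance

theorem Germ.mono (h : Germ r y A) (hA : ∀ t, r y t → A t → A' t) : Germ r y A' := by
  obtain ⟨b, hb, h⟩ := h
  exact ⟨b, hb, fun t h1 h2 => hA t h2 (h t h1 h2)⟩

theorem Side.germ_and (hs : Side S r far) (h : Germ r y A) (h' : Germ r y A') :
    Germ r y fun t => A t ∧ A' t := by
  rcases hs.lt_or_gt with rfl | rfl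
  · exact RGerm.and h h'
  · exact LGerm.and h h'

theorem Side.germ_lt {b : N} (h : r y b) : Germ r y fun t => r t b := ⟨b, h, fun _ h _ => h⟩

theorem Side.germ_or (hs : Side S r far) (hA : DefPt S A) (y : N) :
    Germ r y A ∨ Germ r y fun t => ¬ A t := by
  rcases hs.lt_or_gt with rfl | rfl
  · exact hA.rGerm_or y
  · exact hA.lGerm_or y

theorem Side.germ_exists (hs : Side S r far) (h : Germ r y A) : ∃ t, r y t ∧ A t := by
  rcases hs.lt_or_gt with rfl | rfl
  · exact RGerm.exists h
  · exact LGerm.exists h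

theorem Side.germ_fat (hs : Side S r far) (h : Germ r y A) : Fat A := by
  rcases hs.lt_or_gt with rfl | rfl
  · exact RGerm.fat h
  · exact LGerm.fat h

theorem Side.exists_beyond (hs : Side S r far) (y : N) : ∃ t, r y t := by
  rcases hs.lt_or_gt with rfl | rfl
  · exact exists_gt y
  · exact exists_lt y

theorem Side.trans (hs : Side S r far) {a b c : N} (h : r a b) (h' : r b c) : r a c := by
  rcases hs.lt_or_gt with rfl | rfl
  · exact lt_trans h h'
  · exact lt_trans h' h

theorem Side.trichotomy (hs : Side S r far) (a b : N) : r a b ∨ a = b ∨ r b a := by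
  rcases hs.lt_or_gt with rfl | rfl
  · exact lt_trichotomy a b
  · exact (lt_trichotomy a b).symm.imp_left (fun h => h.symm) |>.elim
      (fun h => by rcases h with h | h <;> simp [h]) (fun h => by simp [h])

theorem Side.between (hs : Side S r far) {a b s t : N} (ha : r s a) (hb : r s b)
    (h : (a ≤ t ∧ t ≤ b) ∨ (b ≤ t ∧ t ≤ a)) : r s t := by
  rcases hs.lt_or_gt with rfl | rfl
  · rcases h with h | h
    · exact lt_of_lt_of_le ha h.1
    · exact lt_of_lt_of_le hb h.1
  · rcases h with h | h
    · exact lt_of_le_of_lt h.2 hb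
    · exact lt_of_le_of_lt h.2 ha

/-- A definable family of germs is uniform on some subinterval. -/
theorem Side.exists_uniform_germ (hs : Side S r far) {G : N → N → Prop} (hG : DefPt S G)
    {p q : N} (hpq : p < q) (h : ∀ a, p < a → a < q → Germ r y (G a)) :
    ∃ p' q' s, p ≤ p' ∧ p' < q' ∧ q' ≤ q ∧ r y s ∧
      ∀ a, p' < a → a < q' → ∀ t, r y t → r t s → G a t := by
  have hfar := hs.defPt_far
  obtain ⟨t₁, ht₁⟩ := hs.exists_beyond y
  have hT : DefPt S fun a => far y t₁ (G a) := DefPt.autoFun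
  have hspec := fun a h1 h2 =>
    hs.far_spec (y := y) (t := t₁) (A := G a) DefPt.autoFun ht₁ (h a h1 h2)
  obtain ⟨p', q', hp, hpq', hq, hm⟩ := exists_monotone hT hpq
  obtain ⟨a, ha, ha'⟩ := exists_between hpq'
  obtain ⟨b, hb, hb'⟩ := exists_between ha'
  obtain ⟨s, hys, h1, h2⟩ := hs.germ_exists (hs.germ_and
    (Side.germ_lt (hspec a (hp.trans_lt ha) (ha'.trans_le hq)).1)
    (Side.germ_lt (hspec b (hp.trans_lt (ha.trans hb)) (hb'.trans_le hq)).1))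
  refine ⟨a, b, s, hp.trans ha.le, hb, hb'.le.trans hq, hys, fun x h3 h4 t h5 h6 => ?_⟩
  refine (hspec x (hp.trans_lt (ha.trans h3)) (h4.trans (hb'.trans_le hq))).2.2 t h5
    (hs.trans h6 (hs.between h1 h2 ?_))
  rcases hm with hm | hm | hm
  · exact Or.inl ⟨(hm _ _ ha h3 (h4.trans hb')).le, (hm _ _ (ha.trans h3) h4 hb').le⟩
  · exact Or.inl ⟨(hm _ _ ha h3 (h4.trans hb')).le, (hm _ _ (ha.trans h3) h4 hb').le⟩
  · exact Or.inr ⟨(hm _ _ (ha.trans h3) h4 hb').le, (hm _ _ ha h3 (h4.trans hb')).le⟩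

/-- The choice function for intervals obtained from a function `ρ` such that `ρ a t` decreases to
`a` as `t` tends to `y`. -/
def gauge (far : N → N → (N → Prop) → N) (ρ : N → N → N) (y e t₁ a b : N) : N :=
  ρ a (far y t₁ fun t' =>
    ρ (ρ e t') t' ≤ ρ e (far y t₁ fun t => a < ρ a t ∧ ρ a t < b))

instance : DefPt S (fun (far : N → N → (N → Prop) → N) (ρ : N → N → N) (y e t₁ a b : N) =>
  ρ a (far y t₁ fun t' =>
    ρ (ρ e t') t' ≤ ρ e (far y t₁ fun t => a < ρ a t ∧ ρ a t < b))) := DefPt.autoFun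

instance : DefPt S (gauge :
    (N → N → (N → Prop) → N) → (N → N → N) → N → N → N → N → N → N) :=
  inferInstanceAs (DefPt S
    fun (far : N → N → (N → Prop) → N) (ρ : N → N → N) (y e t₁ a b : N) =>
      ρ a (far y t₁ fun t' =>
        ρ (ρ e t') t' ≤ ρ e (far y t₁ fun t => a < ρ a t ∧ ρ a t < b)))

theorem Side.exists_gauge (hs : Side S r far) {ρ : N → N → N} (hρ : DefPt S ρ) {R : N → Prop}
    (hfat : Fat R) (hR : ∀ a, R a → ∀ b, a < b → Germ r y fun t => a < ρ a t ∧ ρ a t < b) :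
    ∃ e t₁, ∀ a b, R a → a < b → a < gauge far ρ y e t₁ a b ∧ gauge far ρ y e t₁ a b < b := by
  have hfar := hs.defPt_far
  have hr := hs.defPt
  obtain ⟨p, q, hpq, hpqR⟩ := hfat
  obtain ⟨p₁, q₁, s₁, hp, hpq₁, hq, hs₁, h1⟩ := hs.exists_uniform_germ (y := y)
    (G := fun a t => a < ρ a t) DefPt.autoFun hpq fun a ha ha' =>
      (hR a (hpqR a ha ha') q ha').mono fun t _ h => h.1
  have hR₁ : ∀ a, p₁ < a → a < q₁ → R a := fun a h h' => hpqR a (hp.trans_lt h) (h'.trans_le hq)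
  obtain ⟨e, hpe, heq, he⟩ : ∃ e, p₁ < e ∧ e < q₁ ∧
      ∀ v, e < v → Germ r y fun t => ρ (ρ e t) t < v := by
    by_contra! hc
    have hA : DefPt S fun x v => Germ r y fun t => ¬ ρ (ρ x t) t < v := DefPt.autoFun
    obtain ⟨p₂, q₂, hp₂, hpq₂, hq₂, h2⟩ := exists_uniform hA hpq₁
      (fun x v v' h3 _ h4 => h3.mono fun t _ h5 h6 => h5 (h6.trans h4))
      (fun x h3 h4 => by
        obtain ⟨v, hv, h5⟩ := hc x h3 h4
        have h6 : DefPt S fun t => ρ (ρ x t) t < v := DefPt.autoFun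
        exact ⟨v, hv, (hs.germ_or h6 y).resolve_left h5⟩)
    obtain ⟨v, hv, hv'⟩ := exists_between hpq₂
    obtain ⟨p₃, q₃, s₃, hp₃, hpq₃, hq₃, hs₃, h3⟩ := hs.exists_uniform_germ (y := y)
      (G := fun a t => ρ a t < v) DefPt.autoFun hv fun a ha ha' =>
        (hR a (hR₁ a (hp₂.trans_lt ha) (ha'.trans (hv'.trans_le hq₂))) v ha').mono
          fun t _ h => h.2
    obtain ⟨x, hx, hx'⟩ := exists_between hpq₃
    obtain ⟨t, hyt, ⟨h4, h5⟩, h6⟩ := hs.germ_exists (hs.germ_and (hs.germ_and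
      (hR x (hR₁ x (hp₂.trans_lt (hp₃.trans_lt hx))
        ((hx'.trans_le hq₃).trans (hv'.trans_le hq₂))) q₃ hx') (Side.germ_lt hs₃))
      (h2 x v (hp₃.trans_lt hx) (hx'.trans_le hq₃) hv'))
    exact h6 (h3 _ (hx.trans h4.1) h4.2 t hyt h5)
  have hRe := hR₁ e hpe heq
  have hP : DefPt S fun t => ρ (ρ e t) t := DefPt.autoFun
  have hcont : Germ r y (ContAt fun t => ρ (ρ e t) t) := by
    refine (hs.germ_or (A := ContAt fun t => ρ (ρ e t) t) DefPt.autoFun y).resolve_right ?_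
    exact fun h => not_fat_of_finite (finite_not_contAt hP) (hs.germ_fat h)
  obtain ⟨b, hyb, hb⟩ := hs.germ_and (hs.germ_and (hR e hRe q₁ heq) (Side.germ_lt hs₁)) hcont
  obtain ⟨t₁, hyt₁, ht₁⟩ := hs.germ_exists (Side.germ_lt hyb)
  have hk : ∀ t, r y t → ¬ r t₁ t →
      r y (far y t₁ fun t' => ρ (ρ e t') t' ≤ ρ e t) ∧
      r (far y t₁ fun t' => ρ (ρ e t') t' ≤ ρ e t) t := by
    intro t hyt htt
    have htb : r t b := by
      rcases hs.trichotomy t t₁ with h | rfl | h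
      · exact hs.trans h ht₁
      · exact ht₁
      · exact absurd h htt
    obtain ⟨⟨⟨h2, h3⟩, h4⟩, h5⟩ := hb t htb hyt
    have h6 := h1 (ρ e t) (hpe.trans h2) h3 t hyt h4
    obtain ⟨h7, h8, h9⟩ := hs.far_spec (y := y) (t := t₁)
      (A := fun t' => ρ (ρ e t') t' ≤ ρ e t) DefPt.autoFun hyt₁
      ((he _ h2).mono fun _ _ h => h.le)
    generalize (far y t₁ fun t' => ρ (ρ e t') t' ≤ ρ e t) = w at h7 h8 h9 ⊢
    refine ⟨h7, ?_⟩
    by_contra hwt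
    obtain ⟨z, hz⟩ := exists_gt (ρ (ρ e t) t)
    obtain ⟨c, d, hc, hd, h10⟩ := h5 _ z h6 hz
    obtain ⟨t', h11, h12, h13, h14⟩ : ∃ t', r y t' ∧ r t' t ∧ c < t' ∧ t' < d := by
      rcases hs.lt_or_gt with rfl | rfl
      · obtain ⟨t', h11, h12⟩ := exists_between (max_lt hyt hc)
        exact ⟨t', (le_max_left _ _).trans_lt h11, h12, (le_max_right _ _).trans_lt h11,
          h12.trans hd⟩
      · obtain ⟨t', h11, h12⟩ := exists_between (lt_min hyt hd)
        exact ⟨t', h12.trans_le (min_le_left _ _), h11, hc.trans h11,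
          h12.trans_le (min_le_right _ _)⟩
    have h15 : r t' w := by
      rcases hs.trichotomy t w with h | rfl | h
      · exact hs.trans h12 h
      · exact h12
      · exact absurd h hwt
    exact (h10 t' h13 h14).1.not_ge (h9 t' h11 h15)
  refine ⟨e, t₁, fun a b hRa hab => ?_⟩
  obtain ⟨h2, h3, h4⟩ := hs.far_spec (y := y) (t := t₁) (A := fun t => a < ρ a t ∧ ρ a t < b)
    DefPt.autoFun hyt₁ (hR a hRa b hab)
  rw [gauge]
  obtain ⟨h5, h6⟩ := hk _ h2 h3
  exact h4 _ h5 h6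

end Short

section FiniteRelations

variable {N : Type u} [LinearOrder N] [DenselyOrdered N] [NoMinOrder N] [NoMaxOrder N] [Nonempty N]
  {S : Struc N} {r : N → N → Prop} {far : N → N → (N → Prop) → N}

/-- The predicates `C y` contain points arbitrarily close to `e` on its right as `y` approaches
`y₀` from the side given by `r`. -/
def Acc (r : N → N → Prop) (C : N → N → Prop) (y₀ e : N) : Prop :=
  ∀ b, e < b → Germ r y₀ fun y => ∃ e', C y e' ∧ e < e' ∧ e' < b

instance : DefPt S (fun (r : N → N → Prop) (C : N → N → Prop) (y₀ e : N) =>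
    ∀ b, e < b → Germ r y₀ fun y => ∃ e', C y e' ∧ e < e' ∧ e' < b) := DefPt.autoFun

instance : DefPt S (Acc : (N → N → Prop) → (N → N → Prop) → N → N → Prop) :=
  inferInstanceAs (DefPt S fun (r : N → N → Prop) (C : N → N → Prop) (y₀ e : N) =>
    ∀ b, e < b → Germ r y₀ fun y => ∃ e', C y e' ∧ e < e' ∧ e' < b)

/-- The right end points of the intervals contained in `R`, including degenerate intervals. -/
def RightEnd (R : N → Prop) (v : N) : Prop := (R v ∨ LGerm v R) ∧ ¬ (R v ∧ RGerm v R)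

instance : DefPt S (fun (R : N → Prop) (v : N) => (R v ∨ LGerm v R) ∧ ¬ (R v ∧ RGerm v R)) :=
  DefPt.autoFun

instance : DefPt S (RightEnd : (N → Prop) → N → Prop) :=
  inferInstanceAs (DefPt S fun (R : N → Prop) (v : N) =>
    (R v ∨ LGerm v R) ∧ ¬ (R v ∧ RGerm v R))

theorem finite_rightEnd {R : N → Prop} (hR : DefPt S R) : {v | RightEnd R v}.Finite := by
  have hD : DefPt S (RightEnd R) := DefPt.autoFun
  refine hD.not_fat_iff.1 ?_
  rintro ⟨a, b, hab, h⟩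
  have hL : ∀ v, a < v → v < b → ¬ LGerm v R := by
    intro v hav hvb ⟨c, hcv, hc⟩
    obtain ⟨t, ht, htv⟩ := exists_between (max_lt hcv hav)
    rw [max_lt_iff] at ht
    exact (h t ht.2 (htv.trans hvb)).2
      ⟨hc t ht.1 htv, v, htv, fun t' h1 h2 => hc t' (ht.1.trans h2) h1⟩
  have hRv : ∀ v, a < v → v < b → R v := fun v h1 h2 =>
    (h v h1 h2).1.resolve_right (hL v h1 h2)
  obtain ⟨v, hav, hvb⟩ := exists_between hab
  exact (h v hav hvb).2 ⟨hRv v hav hvb, b, hvb, fun t h1 h2 => hRv t (hav.trans h2) h1⟩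

/-- A point of `R` lies in an interval contained in `R` which is unbounded or has a right end
point. -/
theorem exists_rightEnd {R : N → Prop} (hR : DefPt S R) {e : N} (he : R e) :
    (∀ t, e ≤ t → R t) ∨ ∃ v, e ≤ v ∧ RightEnd R v ∧ ∀ t, e ≤ t → t < v → R t := by
  by_cases hg : RGerm e R
  swap
  · exact Or.inr ⟨e, le_rfl, ⟨Or.inl he, fun h => hg h.2⟩, fun t h h' => absurd h h'.not_ge⟩
  obtain ⟨b, heb, hb⟩ := hg
  have hD : DefPt S fun v => ∀ t, e ≤ t → t < v → R t := DefPt.autoFun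
  have hDb : ∀ t, e ≤ t → t < b → R t := by
    intro t h1 h2
    rcases h1.eq_or_lt with rfl | h1
    · exact he
    · exact hb t h2 h1
  by_cases hbd : ∃ w, ∀ v, (∀ t, e ≤ t → t < v → R t) → v ≤ w
  · have hl := hD.isLUB_lub ⟨b, hDb⟩ hbd
    generalize (lub fun v => ∀ t, e ≤ t → t < v → R t) = w at hl
    have hbw : b ≤ w := hl.1 hDb
    have hw : ∀ t, e ≤ t → t < w → R t := by
      intro t h1 h2
      obtain ⟨v, hv, htv⟩ := (lt_isLUB_iff hl).1 h2
      exact hv t h1 htv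
    have hew := heb.trans_le hbw
    refine Or.inr ⟨w, hew.le, ⟨Or.inr ⟨e, hew, fun t h1 h2 => hw t h1.le h2⟩, ?_⟩, hw⟩
    rintro ⟨hRw, c, hwc, hc⟩
    refine hwc.not_ge (hl.1 (?_ : ∀ t, e ≤ t → t < c → R t))
    intro t h1 h2
    rcases lt_trichotomy t w with h | rfl | h
    · exact hw t h1 h
    · exact hRw
    · exact hc t h2 h
  · left
    intro t het
    push Not at hbd
    obtain ⟨v, hv, htv⟩ := hbd t
    exact hv t het htv

variable {Γ : Type*} [DefSpace S Γ] [Rep S Γ]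

/-- The part of a relation `H s x y e` which is accessible along a side of `y` is close to finite
sets depending on `s` and `y` only. -/
theorem Side.exists_short_of_acc (hs : Side S r far) {H : Γ → N → N → N → Prop} (hH : DefPt S H)
    (hfin : ∀ s x y, {e | H s x y e}.Finite) :
    ∃ (E : N → N → Prop) (B : Γ → N → N → Prop), Short S E ∧ DefPt S B ∧
      (∀ s y, {h | B s y h}.Finite) ∧
      ∀ s x y e, H s x y e → Acc r (H s x) y e → ∃ h, B s y h ∧ E e h := by
  have hr := hs.defPt
  have hfar := hs.defPt_far
  let B₀ : Γ → N → N → Prop := fun s y e => Fat fun x => H s x y e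
  let R : Γ → N → N → Prop := fun s y e => ¬ B₀ s y e ∧ ∃ x, H s x y e ∧ Acc r (H s x) y e
  let ξ : Γ → N → N → N := fun s y e => glb fun x => H s x y e ∧ Acc r (H s x) y e
  let ρ : Γ → N → N → N → N := fun s y e t => glb fun e' => H s (ξ s y e) t e' ∧ e < e'
  have hB₀ : DefPt S B₀ := by
    dsimp only [B₀]
    exact DefPt.autoFun
  have hR : DefPt S R := by
    dsimp only [R]
    exact DefPt.autoFun
  have hξ : DefPt S ξ := by
    dsimp only [ξ]
    exact DefPt.autoFun
  have hρ : DefPt S ρ := by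
    dsimp only [ρ]
    exact DefPt.autoFun
  let c : Γ × N × N × N → N → N → N := fun z a b =>
    gauge far (ρ z.1 z.2.1) z.2.1 z.2.2.1 z.2.2.2 a b
  have hc : DefPt S c := by
    dsimp only [c]
    exact DefPt.autoFun
  have hξR : ∀ s y e, R s y e → H s (ξ s y e) y e ∧ Acc r (H s (ξ s y e)) y e := by
    intro s y e ⟨h1, h2⟩
    have hz := Rep.defPt (S := S) s
    have hD : DefPt S fun x => H s x y e := DefPt.autoFun
    exact (glb_mem_of_finite ((hD.not_fat_iff.1 h1).subset fun x hx => hx.1) h2).1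
  have hρR : ∀ s y a, R s y a → ∀ b, a < b →
      Germ r y fun t => a < ρ s y a t ∧ ρ s y a t < b := by
    intro s y a hRa b hab
    refine ((hξR s y a hRa).2 b hab).mono fun t _ ⟨e', h1, h2, h3⟩ => ?_
    have h4 := glb_mem_of_finite (A := fun e' => H s (ξ s y a) t e' ∧ a < e')
      ((hfin s (ξ s y a) t).subset fun x hx => hx.1) ⟨e', h1, h2⟩
    exact ⟨h4.1.2, (h4.2 e' ⟨h1, h2⟩).trans_lt h3⟩
  have hgauge : ∀ s y e v, e < v → (∀ t, e ≤ t → t < v → R s y t) → ∃ z, Valid (c z) e v := by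
    intro s y e v hev hev'
    have hz := Rep.defPt (S := S) s
    have hρ' : DefPt S (ρ s y) := DefPt.autoFun
    obtain ⟨e₀, t₁, h⟩ := hs.exists_gauge (y := y) hρ' (R := fun t => e ≤ t ∧ t < v)
      ⟨e, v, hev, fun t h h' => ⟨h.le, h'⟩⟩ fun a ha => hρR s y a (hev' a ha.1 ha.2)
    exact ⟨(s, y, e₀, t₁), fun a b h1 h2 h3 => h a b ⟨h1, h2.trans_le h3⟩ h2⟩
  have hgauge' : ∀ s y e, (∀ t, e ≤ t → R s y t) → ∃ z, ∀ v, Valid (c z) e v := by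
    intro s y e he
    have hz := Rep.defPt (S := S) s
    have hρ' : DefPt S (ρ s y) := DefPt.autoFun
    obtain ⟨v, hv⟩ := exists_gt e
    obtain ⟨e₀, t₁, h⟩ := hs.exists_gauge (y := y) hρ' (R := fun t => e ≤ t)
      ⟨e, v, hv, fun t h h' => h.le⟩ fun a ha => hρR s y a (he a ha)
    exact ⟨(s, y, e₀, t₁), fun v a b h1 h2 _ => h a b h1 h2⟩
  obtain ⟨e₁, he₁⟩ : ∃ e₁, ∀ s y e, (∀ t, e ≤ t → R s y t) →
      ∃ z, Valid (c z) (min e e₁) (max e e₁) := by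
    by_cases h : ∃ s y e, ∀ t, e ≤ t → R s y t
    · obtain ⟨s₁, y₁, e₁, h₁⟩ := h
      refine ⟨e₁, fun s y e he => ?_⟩
      rcases le_total e e₁ with h2 | h2
      · obtain ⟨z, hz⟩ := hgauge' s y e he
        exact ⟨z, by rw [min_eq_left h2]; exact hz _⟩
      · obtain ⟨z, hz⟩ := hgauge' s₁ y₁ e₁ h₁
        exact ⟨z, by rw [min_eq_right h2]; exact hz _⟩
    · exact ⟨Classical.arbitrary N, fun s y e he => absurd ⟨s, y, e, he⟩ h⟩
  refine ⟨fun e h => ∃ z, Valid (c z) (min e h) (max e h),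
    fun s y h => B₀ s y h ∨ RightEnd (R s y) h ∨ h = e₁,
    Short.of_rep hc fun x y h => h, DefPt.autoFun, fun s y => ?_, fun s x y e hHe hacc => ?_⟩
  · have hz := Rep.defPt (S := S) s
    have hRs : DefPt S (R s y) := DefPt.autoFun
    have hD : DefPt S fun x e => H s x y e := DefPt.autoFun
    have h1 : {e | B₀ s y e}.Finite := by
      refine (finite_setOf_infinite hD fun x => hfin s x y).subset fun e he => ?_
      exact Fat.infinite he
    exact h1.union ((finite_rightEnd hRs).union (finite_singleton e₁))
  · have hz := Rep.defPt (S := S) s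
    have hRs : DefPt S (R s y) := DefPt.autoFun
    have hself : ∃ z, Valid (c z) (min e e) (max e e) :=
      ⟨(s, y, e, e), Valid.of_min_max_self _ e⟩
    by_cases h0 : B₀ s y e
    · exact ⟨e, Or.inl h0, hself⟩
    rcases exists_rightEnd hRs ⟨h0, x, hHe, hacc⟩ with h | ⟨v, hev, hv, h⟩
    · exact ⟨e₁, Or.inr (Or.inr rfl), he₁ s y e h⟩
    · refine ⟨v, Or.inr (Or.inl hv), ?_⟩
      rcases hev.eq_or_lt with rfl | hev
      · exact hself
      · rw [min_eq_left hev.le, max_eq_right hev.le]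
        exact hgauge s y e v hev h

theorem finite_setOf_not_acc {C : N → N → Prop} (hC : DefPt S C) (hfin : ∀ y, {e | C y e}.Finite) :
    {y | ∃ e, C y e ∧ ¬ Fat (fun y => C y e) ∧ ¬ Acc (fun a b => a < b) C y e ∧
      ¬ Acc (fun a b => b < a) C y e}.Finite := by
  let D : N → N → Prop := fun y e => C y e ∧ ¬ Fat (fun y => C y e) ∧
    ¬ Acc (fun a b => a < b) C y e ∧ ¬ Acc (fun a b => b < a) C y e
  have hD : DefPt S D := by
    dsimp only [D]
    exact DefPt.autoFun
  have hD' : DefPt S fun y => ∃ e, D y e := DefPt.autoFun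
  refine hD'.not_fat_iff.1 ?_
  rintro ⟨p, q, hpq, h⟩
  let f : N → N := fun y => glb (D y)
  have hf : DefPt S f := DefPt.autoFun
  have hfD : ∀ y, p < y → y < q → D y (f y) := fun y h1 h2 =>
    (glb_mem_of_finite (A := D y) ((hfin y).subset fun e he => he.1) (h y h1 h2)).1
  obtain ⟨a, b, hpa, hab, hbq, hmono⟩ := exists_monotone hf hpq
  obtain ⟨y, ⟨hay, hyb⟩, hy⟩ : ∃ y, (a < y ∧ y < b) ∧ ContAt f y := by
    by_contra! hcon
    exact not_fat_of_finite (finite_not_contAt hf) ⟨a, b, hab, fun t h1 h2 => hcon t ⟨h1, h2⟩⟩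
  have hDy : ∀ t, a < t → t < b → D t (f t) := fun t h1 h2 =>
    hfD t (hpa.trans_lt h1) (h2.trans_le hbq)
  obtain ⟨-, h1, h2, h3⟩ := hDy y hay hyb
  obtain ⟨v, hv⟩ := exists_lt (f y)
  rcases hmono with hm | hm | hm
  · refine h1 ⟨a, b, hab, fun t hat htb => ?_⟩
    have : f t = f y := by
      rcases lt_trichotomy t y with h | rfl | h
      · exact hm t y hat h hyb
      · rfl
      · exact (hm y t hay h htb).symm
    exact this ▸ (hDy t hat htb).1
  · refine h2 fun w hw => ?_
    obtain ⟨c, d, hc, hd, hcd⟩ := hy v w hv hw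
    refine ⟨min d b, lt_min hd hyb, fun t ht hyt => ⟨f t, ?_⟩⟩
    replace ht := lt_min_iff.1 ht
    exact ⟨(hDy t (hay.trans hyt) ht.2).1, hm y t hay hyt ht.2, (hcd t (hc.trans hyt) ht.1).2⟩
  · refine h3 fun w hw => ?_
    obtain ⟨c, d, hc, hd, hcd⟩ := hy v w hv hw
    refine ⟨max c a, max_lt hc hay, fun t ht hyt => ⟨f t, ?_⟩⟩
    replace ht := max_lt_iff.1 ht
    exact ⟨(hDy t ht.2 (hyt.trans hyb)).1, hm t y ht.2 hyt hyb, (hcd t ht.1 (hyt.trans hd)).2⟩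

/-- A definable family of finite sets `H s x y` is close to finite sets depending on `s` and only
one of `x` and `y`. -/
theorem exists_short_two {H : Γ → N → N → N → Prop} (hH : DefPt S H)
    (hfin : ∀ s x y, {e | H s x y e}.Finite) :
    ∃ (E : N → N → Prop) (A B : Γ → N → N → Prop), Short S E ∧ DefPt S A ∧ DefPt S B ∧
      (∀ s x, {h | A s x h}.Finite) ∧ (∀ s y, {h | B s y h}.Finite) ∧
      ∀ s x y e, H s x y e → A s x e ∨ ∃ h, B s y h ∧ E e h := by
  obtain ⟨E₁, B₁, hE₁, hB₁, hf₁, h₁⟩ := side_lt.exists_short_of_acc hH hfin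
  obtain ⟨E₂, B₂, hE₂, hB₂, hf₂, h₂⟩ := side_gt.exists_short_of_acc hH hfin
  let P : Γ → N → N → Prop := fun s x y => ∃ e, H s x y e ∧ ¬ Fat (fun y => H s x y e) ∧
    ¬ Acc (fun a b => a < b) (H s x) y e ∧ ¬ Acc (fun a b => b < a) (H s x) y e
  have hP : DefPt S P := by
    dsimp only [P]
    exact DefPt.autoFun
  refine ⟨fun e h => E₁ e h ∨ E₂ e h,
    fun s x e => Fat (fun y => H s x y e) ∨ ∃ y, P s x y ∧ H s x y e,
    fun s y h => B₁ s y h ∨ B₂ s y h, hE₁.or hE₂, DefPt.autoFun, DefPt.autoFun,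
    fun s x => ?_, fun s y => (hf₁ s y).union (hf₂ s y), fun s x y e he => ?_⟩
  · have hz := Rep.defPt (S := S) s
    have hD : DefPt S fun y e => H s x y e := DefPt.autoFun
    have h1 : {e | Fat fun y => H s x y e}.Finite :=
      (finite_setOf_infinite hD fun y => hfin s x y).subset fun e he => Fat.infinite he
    have h2 : {y | P s x y}.Finite := finite_setOf_not_acc hD fun y => hfin s x y
    refine h1.union ((h2.biUnion fun y _ => hfin s x y).subset ?_)
    rintro e ⟨y, hy, hy'⟩
    exact mem_biUnion hy hy'
  · by_cases hfat : Fat fun y => H s x y e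
    · exact Or.inl (Or.inl hfat)
    by_cases hPy : P s x y
    · exact Or.inl (Or.inr ⟨y, hPy, he⟩)
    right
    by_cases ha₁ : Acc (fun a b => a < b) (H s x) y e
    · obtain ⟨h, hB, hE⟩ := h₁ s x y e he ha₁
      exact ⟨h, Or.inl hB, Or.inl hE⟩
    by_cases ha₂ : Acc (fun a b => b < a) (H s x) y e
    · obtain ⟨h, hB, hE⟩ := h₂ s x y e he ha₂
      exact ⟨h, Or.inr hB, Or.inr hE⟩
    exact absurd ⟨e, he, hfat, ha₁, ha₂⟩ hPy

theorem Short.exists_fin : ∀ {n : ℕ} {E : Fin n → N → N → Prop}, (∀ i, Short S (E i)) →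
    Short S fun x y => ∃ i, E i x y
  | 0, _, _ => Short.eq.mono fun _ _ ⟨i, _⟩ => i.elim0
  | _ + 1, _, h => ((h 0).or (Short.exists_fin fun i => h i.succ)).mono fun _ _ hxy =>
      Fin.exists_fin_succ.1 hxy

instance defPt_cons {m : ℕ} :
    DefPt S (Fin.cons (α := fun _ : Fin (m + 1) => N) : N → (Fin m → N) → Fin (m + 1) → N) := by
  have h : DefMap S fun z : N × (Fin m → N) => (Fin.cons z.1 z.2 : Fin (m + 1) → N) := by
    refine DefMap.tuple fun i => ?_
    cases i using Fin.cases with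
    | zero => exact DefMap.id.fst
    | succ i => exact DefMap.id.snd.coord i
  exact h.curry.pt

/-- A definable family of finite sets depending on several variables is close to finite sets
depending on a single variable. -/
theorem exists_short_fin : ∀ {n : ℕ} {Γ : Type u} [DefSpace S Γ] [Rep S Γ]
    {H : Γ → (Fin (n + 1) → N) → N → Prop}, DefPt S H → (∀ s x, {e | H s x e}.Finite) →
    ∃ (E : N → N → Prop) (A : Fin (n + 1) → Γ → N → N → Prop), Short S E ∧
      (∀ l, DefPt S (A l)) ∧ (∀ l s x, {h | A l s x h}.Finite) ∧
      ∀ s x e, H s x e → ∃ l h, A l s (x l) h ∧ E e h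
  | 0, Γ, _, _, H, hH, hfin => by
    refine ⟨fun x y => x = y, fun _ s x e => H s (fun _ => x) e, Short.eq,
      fun _ => DefPt.autoFun, fun _ s x => hfin s _, fun s x e he => ⟨0, e, ?_, rfl⟩⟩
    have : x = fun _ => x 0 := funext fun i => congrArg x (Subsingleton.elim (α := Fin 1) i 0)
    beta_reduce
    rwa [← this]
  | n + 1, Γ, _, _, H, hH, hfin => by
    obtain ⟨E, A, hE, hA, hAfin, h⟩ := exists_short_fin (Γ := Γ × N)
      (H := fun s x e => H s.1 (Fin.cons s.2 x) e) DefPt.autoFun fun s x => hfin s.1 _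
    have h2 : ∀ l : Fin (n + 1), ∃ (E' : N → N → Prop) (B C : Γ → N → N → Prop),
        Short S E' ∧ DefPt S B ∧ DefPt S C ∧
        (∀ s x, {h | B s x h}.Finite) ∧ (∀ s y, {h | C s y h}.Finite) ∧
        ∀ s x y e, A l (s, y) x e → B s x e ∨ ∃ h, C s y h ∧ E' e h := fun l => by
      have := hA l
      exact exists_short_two (H := fun s x y e => A l (s, y) x e) DefPt.autoFun
        fun s x y => hAfin l (s, y) x
    choose E' B C hE' hB hC hBfin hCfin h2 using h2
    refine ⟨fun x w => ∃ y, E x y ∧ (y = w ∨ ∃ l, E' l y w),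
      Fin.cons (fun s y h => ∃ l, C l s y h) B, hE.comp (Short.eq.or (Short.exists_fin hE')),
      fun l => ?_, fun l s x => ?_, fun s x e he => ?_⟩
    · cases l using Fin.cases with
      | zero =>
        simp only [Fin.cons_zero]
        exact DefPt.autoFun
      | succ l => simpa only [Fin.cons_succ] using hB l
    · cases l using Fin.cases with
      | zero =>
        simp only [Fin.cons_zero, ofPred_exists]
        exact finite_iUnion fun l => hCfin l s x
      | succ l => simpa only [Fin.cons_succ] using hBfin l s x
    · obtain ⟨l, h, hA', hE''⟩ := h (s, x 0) (Fin.tail x) e (by rwa [Fin.cons_self_tail])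
      rcases h2 l s _ _ h hA' with h3 | ⟨h', h3, h4⟩
      · exact ⟨l.succ, h, by rw [Fin.cons_succ]; exact h3, h, hE'', Or.inl rfl⟩
      · exact ⟨0, h', by simpa only [Fin.cons_zero] using ⟨l, h3⟩, h, hE'', Or.inr ⟨l, h4⟩⟩

end FiniteRelations

section Definability

variable {N : Type u} [LinearOrder N] {S : Struc N} {n : ℕ}

theorem Def.defPt {A : Set (Fin n → N)} (hA : S.Def n A) : DefPt S fun x => x ∈ A :=
  ⟨fun _ _ _ _ _ ha => Def.preimage S hA ha⟩

theorem DefPt.def {A : (Fin n → N) → Prop} (hA : DefPt S A) : S.Def n {x | A x} :=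
  hA.const_plot n n (fun x => x) (fun x => x) (fun i => DefFun.proj S i) fun i => DefFun.proj S i

instance defPt_append {k : ℕ} :
    DefPt S (Fin.append : (Fin n → N) → (Fin k → N) → Fin (n + k) → N) := by
  have h : DefMap S fun z : (Fin n → N) × (Fin k → N) => Fin.append z.1 z.2 := by
    refine DefMap.tuple fun i => ?_
    cases i using Fin.addCases with
    | left i =>
      simp only [Fin.append_left]
      exact DefMap.id.fst.coord i
    | right i =>
      simp only [Fin.append_right]
      exact DefMap.id.snd.coord i
  exact h.curry.pt

end Definability

section Cover

variable {N : Type u} [LinearOrder N] [DenselyOrdered N] [NoMinOrder N] [NoMaxOrder N] [Nonempty N]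
  {S : Struc N}

instance defPt_min : DefPt S (min : N → N → N) := by
  have h : DefPt S fun a b : N => the fun e => (a ≤ b ∧ e = a) ∨ (b ≤ a ∧ e = b) := DefPt.autoFun
  convert h using 3 with a b
  refine (the_eq fun e => ?_).symm
  rcases le_total a b with h | h
  · rw [min_eq_left h]
    grind
  · rw [min_eq_right h]
    grind

instance defPt_max : DefPt S (max : N → N → N) :=
  ⟨(defPt_min (N := Nᵒᵈ) (S := S.dual)).1⟩

theorem SC.iUnion_fin : ∀ {n : ℕ} {Z : Fin n → N → Prop}, (∀ i, SC S (Z i)) →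
    SC S fun e => ∃ i, Z i e
  | 0, _, _ => SC.empty.congr fun _ => by simp
  | _ + 1, Z, h => ((h 0).or (SC.iUnion_fin fun i => h i.succ)).congr fun e =>
      (Fin.exists_fin_succ (P := fun i => Z i e)).symm

theorem SC.iUnion_finite {ι : Type*} [Finite ι] {Z : ι → N → Prop} (h : ∀ i, SC S (Z i)) :
    SC S fun e => ∃ i, Z i e := by
  obtain ⟨n, ⟨f⟩⟩ := Finite.exists_equiv_fin ι
  exact (SC.iUnion_fin fun i => h (f.symm i)).congr fun e =>
    (f.symm.surjective.exists (p := fun i => Z i e)).symm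

/-- A definable family of finite sets depending on two tuples is close, uniformly, to finite sets
depending on a single coordinate. -/
theorem exists_valid_pair {m : ℕ} (hm : 0 < m) {H : (Fin m → N) → (Fin m → N) → N → Prop}
    (hH : DefPt S H) (hfin : ∀ w v, {e | H w v e}.Finite) :
    ∃ (q : ℕ) (c : (Fin q → N) → N → N → N) (A B : Fin m → N → N → Prop), DefPt S c ∧
      (∀ l, DefPt S (A l)) ∧ (∀ l x, {h | A l x h}.Finite) ∧
      (∀ l, DefPt S (B l)) ∧ (∀ l x, {h | B l x h}.Finite) ∧
      ∀ w v e, H w v e → ∃ l h z, (A l (w l) h ∨ B l (v l) h) ∧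
        Valid (c z) (min e h) (max e h) := by
  obtain ⟨n, hn⟩ : ∃ n, n + 1 = m + m := ⟨m + m - 1, by omega⟩
  obtain ⟨E, A, ⟨q, c, hc, hE⟩, hA, hAfin, h⟩ := exists_short_fin (S := S) (n := n)
    (Γ := Fin 0 → N) (H := fun _ x e => H (fun i => x (Fin.cast hn.symm (Fin.castAdd m i)))
      (fun i => x (Fin.cast hn.symm (Fin.natAdd m i))) e) DefPt.autoFun fun s x => hfin _ _
  refine ⟨q, c, fun l => A (Fin.cast hn.symm (Fin.castAdd m l)) Fin.elim0,
    fun l => A (Fin.cast hn.symm (Fin.natAdd m l)) Fin.elim0, hc, fun l => ?_,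
    fun l => hAfin _ _, fun l => ?_, fun l => hAfin _ _, fun w v e he => ?_⟩
  · exact (hA _).app (Rep.defPt _)
  · exact (hA _).app (Rep.defPt _)
  · obtain ⟨l, h', h1, h2⟩ := h Fin.elim0 (fun i => Fin.append w v (Fin.cast hn i)) e
      (by simpa [-Fin.natAdd_eq_addNat] using he)
    obtain ⟨z, hz⟩ := hE _ _ h2
    obtain ⟨l, rfl⟩ : ∃ l', Fin.cast hn.symm l' = l := ⟨Fin.cast hn l, by simp⟩
    cases l using Fin.addCases with
    | left l => exact ⟨l, h', z, Or.inl (by simpa using h1), hz⟩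
    | right l => exact ⟨l, h', z, Or.inr (by simpa [-Fin.natAdd_eq_addNat] using h1), hz⟩

/-- The points close to a set with strong choice form a set with strong choice. -/
theorem SC.near {Y : N → Prop} (hY : SC S Y) {q : ℕ} {c : (Fin q → N) → N → N → N}
    (hc : DefPt S c) : SC S fun e => ∃ h, Y h ∧ ∃ z, Valid (c z) (min e h) (max e h) := by
  have hYd := hY.1
  obtain ⟨F, hF, hFY⟩ := hY.1.exists_breaks
  have hd : DefPt S fun e => ∃ h, Y h ∧ ∃ z, Valid (c z) (min e h) (max e h) := DefPt.autoFun
  refine (hY.or (SC.iUnion hF fun b _ => sc_near hc b)).mono hd ?_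
  rintro e ⟨h, hh, z, hz⟩
  by_cases hYe : Y e
  · exact Or.inl hYe
  right
  by_contra! hcon
  have key : ∀ b ∈ F, min e h ≤ b → ¬ b ≤ max e h := by
    intro b hb h1 h2
    refine hcon b hb z (hz.mono (le_min h1 (min_le_left _ _)) (max_le h2 (le_max_left _ _)))
  have := hFY (min e h) (max e h) min_le_max key
  rcases le_total e h with hle | hle
  · rw [min_eq_left hle, max_eq_right hle] at this
    exact hYe (this.2 hh)
  · rw [min_eq_right hle, max_eq_left hle] at this
    exact hYe (this.1 hh)

/-- Outside of a set with strong choice, a point `e` is close to the finite set `A x` only for `x`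
in a set with strong choice, and for no `x` in `X` if `X` has strong choice. -/
theorem exists_sc_exceptional {A : N → N → Prop} (hA : DefPt S A) (hfin : ∀ x, {h | A x h}.Finite)
    {q : ℕ} {c : (Fin q → N) → N → N → N} (hc : DefPt S c) (X : N → Prop) :
    ∃ D : N → Prop, SC S D ∧ ∀ e, ¬ D e → ∃ Q : N → Prop, SC S Q ∧
      ∀ x h z, X x → A x h → Valid (c z) (min e h) (max e h) → ¬ SC S X ∧ Q x := by
  have hV : {h | {x | A x h}.Infinite}.Finite := finite_setOf_infinite hA hfin
  have hVd : DefPt S fun h => Fat fun x => A x h := DefPt.autoFun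
  have hVi : ∀ h, (Fat fun x => A x h) ↔ {x | A x h}.Infinite := fun h => by
    have : DefPt S fun x => A x h := DefPt.autoFun
    exact this.fat_iff
  have hVsc : SC S fun h => Fat fun x => A x h :=
    SC.of_finite hVd (hV.subset fun h hh => (hVi h).1 hh)
  obtain ⟨D, hD, hDX⟩ : ∃ D : N → Prop, SC S D ∧ (SC S X → ∀ e x h z, X x → A x h →
      Valid (c z) (min e h) (max e h) → D e) := by
    by_cases hX : SC S X
    · exact ⟨_, SC.near (SC.finite_rel hX hA fun x _ => hfin x) hc,
        fun _ e x h z h1 h2 h3 => ⟨h, ⟨x, h1, h2⟩, z, h3⟩⟩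
    · exact ⟨_, SC.empty, fun h => absurd h hX⟩
  refine ⟨_, (hVsc.near hc).or hD, fun e he => ?_⟩
  rw [not_or] at he
  have hWd : DefPt S fun h => (∃ z, Valid (c z) (min e h) (max e h)) ∧ ¬ Fat fun x => A x h :=
    DefPt.autoFun
  have hW : SC S fun h => (∃ z, Valid (c z) (min e h) (max e h)) ∧ ¬ Fat fun x => A x h :=
    (sc_near hc e).mono hWd fun h hh => hh.1
  have hA' : DefPt S fun h x => A x h := DefPt.autoFun
  refine ⟨_, hW.finite_rel hA' fun h hh => ?_,
    fun x h z h1 h2 h3 => ⟨fun hX => he.2 (hDX hX e x h z h1 h2 h3), h, ⟨⟨z, h3⟩, ?_⟩, h2⟩⟩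
  · exact not_infinite.1 fun h' => hh.2 ((hVi h).2 h')
  · exact fun hfat => he.1 ⟨h, hfat, z, h3⟩

/-- The coordinates `l` such that the projection of `Z` to the `l`-th coordinate does not have
strong choice. -/
def badCoords (S : Struc N) {m : ℕ} (Z : (Fin m → N) → Prop) : Set (Fin m) :=
  {l | ¬ SC S fun e => ∃ w, Z w ∧ w l = e}

theorem ncard_badCoords_le {m j : ℕ} {Z : (Fin m → N) → Prop} (hZ : DefPt S Z)
    (hj : (badCoords S Z).ncard ≤ j + 1) {Q : N → Prop} (hQ : SC S Q) (l : Fin m) :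
    (badCoords S fun w => Z w ∧ l ∈ badCoords S Z ∧ Q (w l)).ncard ≤ j := by
  have hQd := hQ.1
  by_cases hl : l ∈ badCoords S Z
  swap
  · have : (badCoords S fun w => Z w ∧ l ∈ badCoords S Z ∧ Q (w l)) = ∅ := by
      refine eq_empty_of_forall_notMem fun i hi => hi (SC.empty.congr fun e => ?_)
      simp [hl]
    simp [this]
  have hsub : (badCoords S fun w => Z w ∧ l ∈ badCoords S Z ∧ Q (w l)) ⊆
      badCoords S Z \ {l} := by
    intro i hi
    refine ⟨fun hi' => hi (hi'.mono DefPt.autoFun ?_), ?_⟩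
    · rintro e ⟨w, hw, rfl⟩
      exact ⟨w, hw.1, rfl⟩
    · rintro rfl
      refine hi (hQ.mono DefPt.autoFun ?_)
      rintro e ⟨w, hw, rfl⟩
      exact hw.2.2
  have h1 := ncard_le_ncard hsub (toFinite _)
  have h2 := ncard_sdiff_singleton_lt_of_mem hl (toFinite _)
  omega

variable [TopologicalSpace N] {m : ℕ} (U : DefGroup S m)

theorem exists_defPt_mul : ∃ M : (Fin m → N) → (Fin m → N) → Fin m → N, DefPt S M ∧
    ∀ a b : U.Elt, M a.1 b.1 = (a * b).1 := by
  have hg := (U.mul_graph_def).defPt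
  let μ : (Fin m → N) → (Fin m → N) → (Fin m → N) → Prop := fun x y z =>
    x ∈ U.carrier ∧ y ∈ U.carrier ∧ U.mul x y = z
  have hμ : DefPt S μ := by
    have h : DefPt S fun x y z : Fin m → N => Fin.append (Fin.append x y) z ∈
      {z : Fin (m + m + m) → N | (z ∘ Fin.castAdd m ∘ Fin.castAdd m) ∈ U.carrier ∧
        (z ∘ Fin.castAdd m ∘ Fin.natAdd m) ∈ U.carrier ∧
        U.mul (z ∘ Fin.castAdd m ∘ Fin.castAdd m) (z ∘ Fin.castAdd m ∘ Fin.natAdd m) =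
          z ∘ Fin.natAdd (m + m)} := by
      generalize {z : Fin (m + m + m) → N | (z ∘ Fin.castAdd m ∘ Fin.castAdd m) ∈ U.carrier ∧
        (z ∘ Fin.castAdd m ∘ Fin.natAdd m) ∈ U.carrier ∧
        U.mul (z ∘ Fin.castAdd m ∘ Fin.castAdd m) (z ∘ Fin.castAdd m ∘ Fin.natAdd m) =
          z ∘ Fin.natAdd (m + m)} = T at hg
      exact DefMap.pt <| DefMap.curry <| DefMap.curry <| DefMap.comp hg.map DefMap.auto
    convert h using 4 with x y z
    simp [μ, Function.comp_def, -Fin.natAdd_eq_addNat]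
  refine ⟨fun x y i => the fun e => ∃ z, μ x y z ∧ z i = e, DefPt.autoFun, fun a b => ?_⟩
  funext i
  refine the_eq fun e => ⟨?_, ?_⟩
  · rintro ⟨z, ⟨-, -, rfl⟩, rfl⟩
    rfl
  · rintro rfl
    exact ⟨_, ⟨a.2, b.2, rfl⟩, rfl⟩

/-- A cover of the group by finitely many translates of definable sets with at most `j` bad
coordinates. -/
def HasCover (j : ℕ) : Prop :=
  ∃ (ι : Type) (_ : Finite ι) (g : ι → U.Elt) (Z : ι → (Fin m → N) → Prop),
    (∀ a, DefPt S (Z a)) ∧ (∀ a w, Z a w → w ∈ U.carrier) ∧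
    (∀ a, (badCoords S (Z a)).ncard ≤ j) ∧ ∀ u : U.Elt, ∃ (a : ι) (w : U.Elt), Z a w.1 ∧ u = g a * w

variable {U}

theorem HasCover.pred {j : ℕ} (h : HasCover U (j + 1)) : HasCover U j := by
  obtain ⟨ι, _, g, Z, hZ, hZU, hj, hcov⟩ := h
  by_cases hc : ∀ a, (badCoords S (Z a)).ncard ≤ j
  · exact ⟨ι, ‹_›, g, Z, hZ, hZU, hc, hcov⟩
  push Not at hc
  obtain ⟨c₀, hc₀⟩ := hc
  obtain ⟨l₀, hl₀⟩ := nonempty_of_ncard_ne_zero (Nat.ne_zero_of_lt hc₀)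
  obtain ⟨M, hM, hMmul⟩ := exists_defPt_mul U
  have hU := (U.carrier_def).defPt
  let H : ι → ι → (Fin m → N) → (Fin m → N) → N → Prop := fun a b w v e =>
    w ∈ U.carrier ∧ v ∈ U.carrier ∧ ∃ z, (z ∈ U.carrier ∧ Z c₀ z) ∧
      M (g a).1 w = M (M (g c₀).1 z) (M (g b).1 v) ∧ z l₀ = e
  have hH : ∀ a b, DefPt S (H a b) := fun a b => by
    have := hZ c₀
    have h1 := Rep.defPt (S := S) (g a).1
    have h2 := Rep.defPt (S := S) (g b).1
    have h3 := Rep.defPt (S := S) (g c₀).1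
    dsimp only [H]
    generalize (g a).1 = x at *
    generalize (g b).1 = y at *
    generalize (g c₀).1 = z at *
    exact DefPt.autoFun
  have hHfin : ∀ a b w v, {e | H a b w v e}.Finite := by
    refine fun a b w v => Set.Subsingleton.finite ?_
    rintro _ ⟨hw, hv, z, ⟨hz, -⟩, h, rfl⟩ _ ⟨-, -, z', ⟨hz', -⟩, h', rfl⟩
    obtain ⟨w, rfl⟩ : ∃ x : U.Elt, x.1 = w := ⟨⟨w, hw⟩, rfl⟩
    obtain ⟨v, rfl⟩ : ∃ x : U.Elt, x.1 = v := ⟨⟨v, hv⟩, rfl⟩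
    obtain ⟨z, rfl⟩ : ∃ x : U.Elt, x.1 = z := ⟨⟨z, hz⟩, rfl⟩
    obtain ⟨z', rfl⟩ : ∃ x : U.Elt, x.1 = z' := ⟨⟨z', hz'⟩, rfl⟩
    rw [h] at h'
    have h'' : g c₀ * z * (g b * v) = g c₀ * z' * (g b * v) := by
      apply Subtype.ext
      rwa [hMmul (g c₀) z, hMmul (g c₀) z', hMmul (g b) v, hMmul (g c₀ * z),
        hMmul (g c₀ * z')] at h'
    have := mul_left_cancel (mul_right_cancel h'')
    rw [this]
  choose q c A B hcd hA hAfin hB hBfin hAB using fun a b =>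
    exists_valid_pair l₀.pos (hH a b) (hHfin a b)
  choose D hD hDQ using fun (a b : ι) (l : Fin m) => exists_sc_exceptional (hA a b l) (hAfin a b l)
    (hcd a b) fun e => ∃ w, Z a w ∧ w l = e
  choose D' hD' hDQ' using fun (a b : ι) (l : Fin m) =>
    exists_sc_exceptional (hB a b l) (hBfin a b l) (hcd a b) fun e => ∃ w, Z b w ∧ w l = e
  have hDD := (SC.iUnion_finite fun i : ι × ι × Fin m =>
    (hD i.1 i.2.1 i.2.2).or (hD' i.1 i.2.1 i.2.2))
  obtain ⟨z, hz, hzD⟩ : ∃ z : U.Elt, Z c₀ z.1 ∧ ∀ a b l, ¬ D a b l (z.1 l₀) ∧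
      ¬ D' a b l (z.1 l₀) := by
    by_contra! hcon
    have h1 := hZ c₀
    have hd : DefPt S fun e => ∃ w, Z c₀ w ∧ w l₀ = e := DefPt.autoFun
    refine hl₀ (hDD.mono hd ?_)
    rintro e ⟨w, hw, rfl⟩
    obtain ⟨a, b, l, h⟩ := hcon ⟨w, hZU _ _ hw⟩ hw
    exact ⟨(a, b, l), or_iff_not_imp_left.2 h⟩
  choose Q hQ hQX using fun a b l => hDQ a b l _ (hzD a b l).1
  choose Q' hQ' hQX' using fun a b l => hDQ' a b l _ (hzD a b l).2
  refine ⟨(ι × ι × Fin m) ⊕ (ι × ι × Fin m), inferInstance,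
    Sum.elim (fun i => (g c₀ * z)⁻¹ * g i.1) fun i => g i.2.1,
    Sum.elim
      (fun i w => Z i.1 w ∧ i.2.2 ∈ badCoords S (Z i.1) ∧ Q i.1 i.2.1 i.2.2 (w i.2.2))
      fun i w => Z i.2.1 w ∧ i.2.2 ∈ badCoords S (Z i.2.1) ∧ Q' i.1 i.2.1 i.2.2 (w i.2.2),
    ?_, ?_, ?_, fun u => ?_⟩
  · rintro (⟨a, b, l⟩ | ⟨a, b, l⟩)
    · have h1 := hZ a
      have h2 := (hQ a b l).1
      change DefPt S fun w => Z a w ∧ l ∈ badCoords S (Z a) ∧ Q a b l (w l)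
      exact DefPt.autoFun
    · have h1 := hZ b
      have h2 := (hQ' a b l).1
      change DefPt S fun w => Z b w ∧ l ∈ badCoords S (Z b) ∧ Q' a b l (w l)
      exact DefPt.autoFun
  · rintro (⟨a, b, l⟩ | ⟨a, b, l⟩) w hw
    · exact hZU _ _ hw.1
    · exact hZU _ _ hw.1
  · rintro (⟨a, b, l⟩ | ⟨a, b, l⟩)
    · exact ncard_badCoords_le (hZ a) (hj a) (hQ a b l) l
    · exact ncard_badCoords_le (hZ b) (hj b) (hQ' a b l) l
  · obtain ⟨b, v, hv, rfl⟩ := hcov u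
    obtain ⟨a, w, hw, hwv⟩ := hcov (g c₀ * z * (g b * v))
    obtain ⟨l, h, y, h1, h2⟩ := hAB a b w.1 v.1 (z.1 l₀)
      ⟨w.2, v.2, z.1, ⟨z.2, hz⟩, by simp only [hMmul, hwv], rfl⟩
    rcases h1 with h1 | h1
    · obtain ⟨h3, h4⟩ := hQX a b l _ h y ⟨_, hw, rfl⟩ h1 h2
      refine ⟨Sum.inl (a, b, l), w, ⟨hw, h3, h4⟩, ?_⟩
      simp only [Sum.elim_inl]
      rw [mul_assoc, ← hwv, inv_mul_cancel_left]
    · obtain ⟨h3, h4⟩ := hQX' a b l _ h y ⟨_, hv, rfl⟩ h1 h2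
      exact ⟨Sum.inr (a, b, l), v, ⟨hv, h3, h4⟩, rfl⟩

variable (U)

theorem hasCover_zero : HasCover U 0 := by
  have h : HasCover U m := by
    have hU := (U.carrier_def).defPt
    refine ⟨Unit, inferInstance, fun _ => 1, fun _ w => w ∈ U.carrier, fun _ => hU, fun _ _ => _root_.id,
      fun _ => ?_, fun u => ⟨(), u, u.2, (one_mul u).symm⟩⟩
    simpa using ncard_le_card (badCoords S fun w => w ∈ U.carrier)
  have key : ∀ j, HasCover U j → HasCover U 0 := fun j => by
    induction j with
    | zero => exact _root_.id
    | succ j ih => exact fun h => ih h.pred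
  exact key m h

/-- A definable group has strong choice. -/
theorem sc_carrier : SC S fun x => x ∈ U.carrier := by
  obtain ⟨ι, _, g, Z, hZ, -, hj, hcov⟩ := hasCover_zero U
  obtain ⟨M, hM, hMmul⟩ := exists_defPt_mul U
  obtain ⟨n, ⟨f⟩⟩ := Finite.exists_equiv_fin ι
  have hsc : ∀ a, SC S (Z a) := fun a => by
    refine (SC.pi (X := fun l e => ∃ w, Z a w ∧ w l = e) fun l => ?_).mono (hZ a)
      fun w hw l => ⟨w, hw, rfl⟩
    have : badCoords S (Z a) = ∅ := (ncard_eq_zero (toFinite _)).1 (Nat.le_zero.1 (hj a))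
    by_contra hl
    exact (this ▸ hl : l ∈ (∅ : Set (Fin m)))
  refine (SC.pi_iUnion fun i : Fin n => (hsc (f.symm i)).image
    (φ := fun w => M (g (f.symm i)).1 w) (hM.app (Rep.defPt _))).mono (U.carrier_def).defPt ?_
  intro u hu
  obtain ⟨a, w, hw, h⟩ := hcov ⟨u, hu⟩
  refine ⟨f a, w.1, ?_⟩
  rw [f.symm_apply_apply]
  exact ⟨hw, (hMmul _ _).trans (congrArg Subtype.val h).symm⟩

end Cover

variable {N : Type u} [LinearOrder N] {S : Struc N} {p m : ℕ}

theorem Def.defPt_append {T : Set (Fin (p + m) → N)} (hT : S.Def (p + m) T) :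
    DefPt S fun (x : Fin p → N) (u : Fin m → N) => Fin.append x u ∈ T := by
  have h : DefMap S fun z : (Fin p → N) × (Fin m → N) => Fin.append z.1 z.2 ∈ T :=
    DefMap.comp hT.defPt.map DefMap.auto
  exact h.curry.pt

theorem DefPt.defFunOn {X : Set (Fin p → N)} (hX : S.Def p X) {s : (Fin p → N) → Fin m → N}
    (hs : DefPt S s) : S.DefFunOn X s := by
  have hXd := hX.defPt
  have h : DefPt S fun z : Fin (p + m) → N => (fun i => z (Fin.castAdd m i)) ∈ X ∧
      s (fun i => z (Fin.castAdd m i)) = fun i => z (Fin.natAdd p i) := DefPt.autoFun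
  exact h.def

end Struc

/-- every definable group has strong definable choice: for every
definable family `{T(x) : x ∈ X}` of nonempty definable subsets of `U` there is a
definable function `t` with `t x ∈ T x` and `t x = t y` whenever `T x = T y`. -/
theorem stmt_16 {N : Type u} [LinearOrder N] [DenselyOrdered N] [NoMinOrder N]
    [NoMaxOrder N] [Nonempty N] [TopologicalSpace N] [OrderTopology N]
    (S : Struc N) {m : ℕ} (U : DefGroup S m) (p : ℕ) (X : Set (Fin p → N))
    (hX : S.Def p X) (T : Set (Fin (p + m) → N)) (hT : S.Def (p + m) T)
    (hsub : ∀ x ∈ X, {u : Fin m → N | Fin.append x u ∈ T} ⊆ U.carrier)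
    (hne : ∀ x ∈ X, {u : Fin m → N | Fin.append x u ∈ T}.Nonempty) :
    ∃ t : (Fin p → N) → (Fin m → N),
      S.DefFunOn X t ∧
      (∀ x ∈ X, Fin.append x (t x) ∈ T) ∧
      ∀ x ∈ X, ∀ y ∈ X,
        {u : Fin m → N | Fin.append x u ∈ T} = {u : Fin m → N | Fin.append y u ∈ T} →
        t x = t y := by
  obtain ⟨-, t, ht, h⟩ := Struc.sc_carrier U
  have hTd := hT.defPt_append
  refine ⟨fun x => t fun u => Fin.append x u ∈ T, ?_, fun x hx => ?_, fun x _ y _ hxy => ?_⟩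
  · exact (Struc.DefMap.comp ht.map hTd.map).pt.defFunOn hX
  · obtain ⟨u, hu⟩ := hne x hx
    exact (h _ (hTd.app (Struc.Rep.defPt x)) ⟨u, hu, hsub x hx hu⟩).1
  · exact congrArg t hxy
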